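/- For every α ∈ (0, 1/4), setting β = (1+α)/5, there exist an odd, infinitely differentiable function f : ℝ → ℝ and a constant C₀ > 0 such that -(f·f')⁽⁴⁾(y) - β·y·f'(y) + α·f(y) = 0 for every y < 0 (hence, by oddness, f(0) = f''(0) = f⁽⁴⁾(0) = 0), and f(y)·|y|^{-α/β} → C₀ as y → -∞. -/

import Mathlib

/-!
Put `γ = α/β ∈ (0, 1)` and scale `β` to `1`; for `y < 0` the profile is `f(y) = β g(-y)`, where
`g > 0` on `(0, ∞)` solves `W⁽⁵⁾ = x g' - γ g`, `W = g²/2`, with `g(0) = 0`, `g'(0) = 1` and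
`κ = W⁽⁴⁾(0)` a free shooting parameter. Writing `Wⱼ` for the derivatives of `W`, one integration
gives `W4 = x g - c`, `c = -κ + (1+γ)∫g`, and four more give a Volterra equation `h² = Rad h` for
the even function `h = g/x`; it is solved by a contraction, depends continuously on `κ`, and makes
`h` smooth as long as it stays positive (`Prof.Good`, `exists_TSol`, `contDiff_of_Rad`).

*Shooting.* The sign of `W5 = Q/g` is that of `Q = x W1 - 2γ W0`. The cone
`Q, Q', W2, W3, W4 > 0` is forward invariant. The set of `κ` whose solution enters it (`InA`) is
open and contains `0`, whereas for `κ` very negative there is no global solution, so that `κ`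
cannot belong to it (`Prof.not_global_one`, `Prof.not_global_two`). Let `-K` be the largest nonpositive
parameter outside the set (`exists_crit`).

*The critical solution is global.* The function `H = W1 W3 - W2²/2 + c W0 - x g³/3` satisfies
`H' = (1+3γ) g³/6 > 0` and `H(0) = -1/2`. The explicit bound on `K` obtained from nonexistence
makes `H` positive, uniformly in `κ` slightly above `-K`, at a fixed point (`exists_H_pos`). Once
`H ≥ η > 0`, `W0` is bounded below on compact intervals (`Prof.Good.W0_ge`), and the solutions for
`κ ↓ -K` converge to a positive global one (`exists_critical`).

*Asymptotics.* Two monotone quantities are used. While `Q W4 ≥ 0` the function `x^{-2γ-4} E` is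
nondecreasing, so a point where `Q W4 > 0` and `E > 0` forces the solution into the cone or makes
`W0` tend to `-∞`; both are excluded for the critical solution (`Prof.lock_pos`, `Prof.lock_neg`). The
function `D = x^{-2γ-4} P` is nonincreasing throughout, it is bounded below, and its dissipation
controls the variation of `c x^{-1-γ}`, which therefore converges (`Prof.Y_tendsto`). The limit is
positive (`Prof.Y_lim_pos`), and `x g / c → 1` (`Prof.L_tendsto`), whence `g x^{-γ}` has a positive
limit.
-/

open Filter

namespace NDE

open Set Topology

/-! ### Moments and the iterated integrals -/

/-- The moment `∫₀ˣ tʲ h(t) dt`. -/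
noncomputable def mom (h : ℝ → ℝ) (j : ℕ) (x : ℝ) : ℝ := ∫ t in (0:ℝ)..x, t ^ j * h t

lemma mom_hasDerivAt {h : ℝ → ℝ} (hc : Continuous h) (j : ℕ) (x : ℝ) :
    HasDerivAt (mom h j) (x ^ j * h x) x := by
  have hcont : Continuous fun t => t ^ j * h t := by fun_prop
  exact intervalIntegral.integral_hasDerivAt_right (hcont.intervalIntegrable _ _)
    (hcont.stronglyMeasurableAtFilter _ _) hcont.continuousAt

lemma mom_zero (h : ℝ → ℝ) (j : ℕ) : mom h j 0 = 0 := by simp [mom]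

/-- The kernel of the Volterra equation satisfied by `h = g / x`. -/
noncomputable def ker (γ s : ℝ) : ℝ := s ^ 2 * (1 - s) ^ 3 / 3 - (1 + γ) / 12 * (s * (1 - s) ^ 4)

/-- The right-hand side of the Volterra equation `h² = Rad h`. -/
noncomputable def Rad (γ κ : ℝ) (h : ℝ → ℝ) (x : ℝ) : ℝ :=
  1 + κ * x ^ 2 / 12 + x ^ 4 * ∫ s in (0:ℝ)..1, ker γ s * h (x * s)

/-- A candidate profile: a continuous function `h`, standing for `g / x`, together with the
parameters `γ` and `κ = (g g')'''(0)`. -/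
structure Prof (γ κ : ℝ) where
  /-- the quotient `g / x` -/
  h : ℝ → ℝ
  cont : Continuous h

namespace Prof
variable {γ κ : ℝ} (S : Prof γ κ)

/-- The profile `g(x) = x h(x)`. -/
def g (x : ℝ) : ℝ := x * S.h x
/-- The increasing function `c = (1+γ)∫g - κ`, so that `W4 = x g - c`. -/
noncomputable def c (x : ℝ) : ℝ := (1 + γ) * mom S.h 1 x - κ
/-- The fourth derivative of `W0 = g²/2`, written through `h`. -/
noncomputable def W4 (x : ℝ) : ℝ := κ + x ^ 2 * S.h x - (1 + γ) * mom S.h 1 x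
/-- The primitive of `W4` vanishing at `0`. -/
noncomputable def W3 (x : ℝ) : ℝ :=
  κ * x + mom S.h 2 x - (1 + γ) * (x * mom S.h 1 x - mom S.h 2 x)
/-- The primitive of `W3` equal to `1` at `0`. -/
noncomputable def W2 (x : ℝ) : ℝ :=
  1 + κ * x ^ 2 / 2 + (x * mom S.h 2 x - mom S.h 3 x)
    - (1 + γ) / 2 * (x ^ 2 * mom S.h 1 x - 2 * x * mom S.h 2 x + mom S.h 3 x)
/-- The primitive of `W2` vanishing at `0`. -/
noncomputable def W1 (x : ℝ) : ℝ :=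
  x + κ * x ^ 3 / 6 + (x ^ 2 * mom S.h 2 x - 2 * x * mom S.h 3 x + mom S.h 4 x) / 2
    - (1 + γ) / 6 * (x ^ 3 * mom S.h 1 x - 3 * x ^ 2 * mom S.h 2 x + 3 * x * mom S.h 3 x
      - mom S.h 4 x)
/-- The primitive of `W1` vanishing at `0`; for a solution it equals `g²/2`. -/
noncomputable def W0 (x : ℝ) : ℝ :=
  x ^ 2 / 2 + κ * x ^ 4 / 24
    + (x ^ 3 * mom S.h 2 x - 3 * x ^ 2 * mom S.h 3 x + 3 * x * mom S.h 4 x - mom S.h 5 x) / 6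
    - (1 + γ) / 24 * (x ^ 4 * mom S.h 1 x - 4 * x ^ 3 * mom S.h 2 x + 6 * x ^ 2 * mom S.h 3 x
      - 4 * x * mom S.h 4 x + mom S.h 5 x)
/-- `Q = x W1 - 2γ W0`, which has the sign of `x g' - γ g`. -/
noncomputable def Q (x : ℝ) : ℝ := x * S.W1 x - 2 * γ * S.W0 x
/-- The first derivative of `Q`. -/
noncomputable def Q1 (x : ℝ) : ℝ := x * S.W2 x + (1 - 2 * γ) * S.W1 x
/-- The second derivative of `Q`. -/
noncomputable def Q2 (x : ℝ) : ℝ := x * S.W3 x + (2 - 2 * γ) * S.W2 x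

lemma d_c (x : ℝ) : HasDerivAt S.c ((1 + γ) * S.g x) x := by
  have := ((mom_hasDerivAt S.cont 1 x).const_mul (1 + γ)).sub_const κ
  refine HasDerivAt.congr_deriv this ?_
  simp only [g]; ring

lemma d_W3 (x : ℝ) : HasDerivAt S.W3 (S.W4 x) x := by
  have h1 := mom_hasDerivAt S.cont 1 x
  have h2 := mom_hasDerivAt S.cont 2 x
  have hx := hasDerivAt_id x
  have := ((hx.const_mul κ).add h2).sub (((hx.mul h1).sub h2).const_mul (1 + γ))
  refine HasDerivAt.congr_deriv this ?_
  simp only [W4, id]; ring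

lemma d_W2 (x : ℝ) : HasDerivAt S.W2 (S.W3 x) x := by
  have h1 := mom_hasDerivAt S.cont 1 x
  have h2 := mom_hasDerivAt S.cont 2 x
  have h3 := mom_hasDerivAt S.cont 3 x
  have hx := hasDerivAt_id x
  have := (((((hx.pow 2).const_mul κ).div_const 2).const_add 1).add ((hx.mul h2).sub h3)).sub
    (((((hx.pow 2).mul h1).sub ((hx.const_mul 2).mul h2)).add h3).const_mul ((1 + γ) / 2))
  refine HasDerivAt.congr_deriv this ?_
  simp only [W3, id, Pi.pow_apply]; push_cast; ring

lemma d_W1 (x : ℝ) : HasDerivAt S.W1 (S.W2 x) x := by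
  have h1 := mom_hasDerivAt S.cont 1 x
  have h2 := mom_hasDerivAt S.cont 2 x
  have h3 := mom_hasDerivAt S.cont 3 x
  have h4 := mom_hasDerivAt S.cont 4 x
  have hx := hasDerivAt_id x
  have := ((hx.add (((hx.pow 3).const_mul κ).div_const 6)).add
    (((((hx.pow 2).mul h2).sub ((hx.const_mul 2).mul h3)).add h4).div_const 2)).sub
    ((((((hx.pow 3).mul h1).sub (((hx.pow 2).const_mul 3).mul h2)).add
      ((hx.const_mul 3).mul h3)).sub h4).const_mul ((1 + γ) / 6))
  refine HasDerivAt.congr_deriv this ?_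
  simp only [W2, id, Pi.pow_apply]; push_cast; ring

lemma d_W0 (x : ℝ) : HasDerivAt S.W0 (S.W1 x) x := by
  have h1 := mom_hasDerivAt S.cont 1 x
  have h2 := mom_hasDerivAt S.cont 2 x
  have h3 := mom_hasDerivAt S.cont 3 x
  have h4 := mom_hasDerivAt S.cont 4 x
  have h5 := mom_hasDerivAt S.cont 5 x
  have hx := hasDerivAt_id x
  have := ((((hx.pow 2).div_const 2).add (((hx.pow 4).const_mul κ).div_const 24)).add
    ((((((hx.pow 3).mul h2).sub (((hx.pow 2).const_mul 3).mul h3)).add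
      ((hx.const_mul 3).mul h4)).sub h5).div_const 6)).sub
    (((((((hx.pow 4).mul h1).sub (((hx.pow 3).const_mul 4).mul h2)).add
      (((hx.pow 2).const_mul 6).mul h3)).sub ((hx.const_mul 4).mul h4)).add h5).const_mul
        ((1 + γ) / 24))
  refine HasDerivAt.congr_deriv this ?_
  simp only [W1, id, Pi.pow_apply]; push_cast; ring

lemma d_Q (x : ℝ) : HasDerivAt S.Q (S.Q1 x) x := by
  have := ((hasDerivAt_id x).mul (S.d_W1 x)).sub ((S.d_W0 x).const_mul (2 * γ))
  refine HasDerivAt.congr_deriv this ?_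
  simp only [Q1, id]; ring

lemma d_Q1 (x : ℝ) : HasDerivAt S.Q1 (S.Q2 x) x := by
  have := ((hasDerivAt_id x).mul (S.d_W2 x)).add ((S.d_W1 x).const_mul (1 - 2 * γ))
  refine HasDerivAt.congr_deriv this ?_
  simp only [Q2, id]; ring

lemma d_Q2 (x : ℝ) : HasDerivAt S.Q2 (x * S.W4 x + (3 - 2 * γ) * S.W3 x) x := by
  have := ((hasDerivAt_id x).mul (S.d_W3 x)).add ((S.d_W2 x).const_mul (2 - 2 * γ))
  refine HasDerivAt.congr_deriv this ?_
  simp only [id]; ring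

lemma W4_eq (x : ℝ) : S.W4 x = x * S.g x - S.c x := by simp only [W4, g, c]; ring

lemma cont_g : Continuous S.g := continuous_id.mul S.cont
lemma cont_c : Continuous S.c := continuous_iff_continuousAt.2 fun x => (S.d_c x).continuousAt
lemma cont_W4 : Continuous S.W4 := by
  have : S.W4 = fun x => x * S.g x - S.c x := funext S.W4_eq
  rw [this]; exact (continuous_id.mul S.cont_g).sub S.cont_c
lemma cont_W3 : Continuous S.W3 := continuous_iff_continuousAt.2 fun x => (S.d_W3 x).continuousAt
lemma cont_W2 : Continuous S.W2 := continuous_iff_continuousAt.2 fun x => (S.d_W2 x).continuousAt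
lemma cont_W1 : Continuous S.W1 := continuous_iff_continuousAt.2 fun x => (S.d_W1 x).continuousAt
lemma cont_W0 : Continuous S.W0 := continuous_iff_continuousAt.2 fun x => (S.d_W0 x).continuousAt
lemma cont_Q : Continuous S.Q := continuous_iff_continuousAt.2 fun x => (S.d_Q x).continuousAt
lemma cont_Q1 : Continuous S.Q1 := continuous_iff_continuousAt.2 fun x => (S.d_Q1 x).continuousAt
lemma cont_Q2 : Continuous S.Q2 := continuous_iff_continuousAt.2 fun x => (S.d_Q2 x).continuousAt

lemma W0_zero : S.W0 0 = 0 := by simp [W0, mom_zero]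
lemma W1_zero : S.W1 0 = 0 := by simp [W1, mom_zero]
lemma W2_zero : S.W2 0 = 1 := by simp [W2, mom_zero]
lemma W3_zero : S.W3 0 = 0 := by simp [W3, mom_zero]
lemma W4_zero : S.W4 0 = κ := by simp [W4, mom_zero]
lemma c_zero : S.c 0 = -κ := by simp [c, mom_zero]
lemma g_zero : S.g 0 = 0 := by simp [g]
lemma Q_zero : S.Q 0 = 0 := by simp [Q, W0_zero]
lemma Q1_zero : S.Q1 0 = 0 := by simp [Q1, W1_zero]
lemma Q2_zero : S.Q2 0 = 2 - 2 * γ := by simp [Q2, W2_zero]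

/-- The substitution `t = x s` turns the kernel integral into the moments in `W0`. -/
lemma two_W0 (x : ℝ) : x ^ 2 * Rad γ κ S.h x = 2 * S.W0 x := by
  have hc := S.cont
  have key : x ^ 6 * (∫ s in (0:ℝ)..1, ker γ s * S.h (x * s)) =
      (x ^ 3 * mom S.h 2 x - 3 * x ^ 2 * mom S.h 3 x + 3 * x * mom S.h 4 x - mom S.h 5 x) / 3
    - (1 + γ) / 12 * (x ^ 4 * mom S.h 1 x - 4 * x ^ 3 * mom S.h 2 x + 6 * x ^ 2 * mom S.h 3 x
      - 4 * x * mom S.h 4 x + mom S.h 5 x) := by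
    have e1 := intervalIntegral.smul_integral_comp_mul_left (a := 0) (b := 1)
      (fun t => (t ^ 2 * (x - t) ^ 3 / 3 - (1 + γ) / 12 * (t * (x - t) ^ 4)) * S.h t) x
    have e2 : x ^ 6 * (∫ s in (0:ℝ)..1, ker γ s * S.h (x * s)) =
        x • ∫ s in (0:ℝ)..1, (fun t => (t ^ 2 * (x - t) ^ 3 / 3
          - (1 + γ) / 12 * (t * (x - t) ^ 4)) * S.h t) (x * s) := by
      rw [smul_eq_mul, ← intervalIntegral.integral_const_mul, ← intervalIntegral.integral_const_mul]
      congr 1; ext s; simp only [ker]; ring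
    rw [e2, e1]
    simp only [mul_zero, mul_one, mom]
    have I : ∀ j : ℕ, IntervalIntegrable (fun t => t ^ j * S.h t) MeasureTheory.volume 0 x :=
      fun j => Continuous.intervalIntegrable (by fun_prop) _ _
    have e3 : (fun t => (t ^ 2 * (x - t) ^ 3 / 3 - (1 + γ) / 12 * (t * (x - t) ^ 4)) * S.h t) =
      fun t => (-(1 + γ) / 12 * x ^ 4) * (t ^ 1 * S.h t)
        + (x ^ 3 / 3 + (1 + γ) / 3 * x ^ 3) * (t ^ 2 * S.h t)
        + (- x ^ 2 - (1 + γ) / 2 * x ^ 2) * (t ^ 3 * S.h t)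
        + (x + (1 + γ) / 3 * x) * (t ^ 4 * S.h t)
        + (-1 / 3 - (1 + γ) / 12) * (t ^ 5 * S.h t) := by ext t; ring
    rw [e3]
    have J := fun (a : ℝ) (j : ℕ) => (I j).const_mul a
    rw [intervalIntegral.integral_add ((((J _ 1).add (J _ 2)).add (J _ 3)).add (J _ 4)) (J _ 5),
      intervalIntegral.integral_add (((J _ 1).add (J _ 2)).add (J _ 3)) (J _ 4),
      intervalIntegral.integral_add ((J _ 1).add (J _ 2)) (J _ 3),
      intervalIntegral.integral_add (J _ 1) (J _ 2)]
    simp only [intervalIntegral.integral_const_mul]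
    ring
  simp only [Rad, W0]
  linear_combination key

/-- `S` solves the Volterra equation with `h > 0` on `[0, R]`. -/
def Good (R : ℝ) : Prop := ∀ x, 0 ≤ x → x ≤ R → 0 < S.h x ∧ S.h x ^ 2 = Rad γ κ S.h x

end Prof

/-! ### The truncated Volterra equation -/

/-- Differential inequality in integrated form: a nonnegative derivative gives growth. -/
lemma mono_of {F F' : ℝ → ℝ} {a b : ℝ} (hab : a ≤ b) (hc : ContinuousOn F (Icc a b))
    (hd : ∀ x, a < x → x < b → HasDerivAt F (F' x) x) (hn : ∀ x, a < x → x < b → 0 ≤ F' x) :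
    F a ≤ F b := by
  have := monotoneOn_of_deriv_nonneg (convex_Icc a b) hc
    (fun x hx => by
      rw [interior_Icc] at hx
      exact (hd x hx.1 hx.2).differentiableAt.differentiableWithinAt)
    (fun x hx => by
      rw [interior_Icc] at hx
      rw [(hd x hx.1 hx.2).deriv]; exact hn x hx.1 hx.2)
  exact this (left_mem_Icc.2 hab) (right_mem_Icc.2 hab) hab

lemma smono_of {F F' : ℝ → ℝ} {a b : ℝ} (hab : a < b) (hc : ContinuousOn F (Icc a b))
    (hd : ∀ x, a < x → x < b → HasDerivAt F (F' x) x) (hn : ∀ x, a < x → x < b → 0 < F' x) :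
    F a < F b := by
  have := strictMonoOn_of_deriv_pos (convex_Icc a b) hc
    (fun x hx => by
      rw [interior_Icc] at hx
      rw [(hd x hx.1 hx.2).deriv]; exact hn x hx.1 hx.2)
  exact this (left_mem_Icc.2 hab.le) (right_mem_Icc.2 hab.le) hab

lemma abs_ker_le {γ s : ℝ} (hγ0 : 0 < γ) (hγ1 : γ < 1) (hs0 : 0 ≤ s) (hs1 : s ≤ 1) :
    |ker γ s| ≤ 1 := by
  have h1 : 0 ≤ s ^ 2 * (1 - s) ^ 3 := by
    have : 0 ≤ 1 - s := by linarith
    positivity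
  have h2 : s ^ 2 * (1 - s) ^ 3 ≤ 1 :=
    mul_le_one₀ (pow_le_one₀ hs0 hs1) (pow_nonneg (by linarith) _)
      (pow_le_one₀ (by linarith) (by linarith))
  have h3 : 0 ≤ s * (1 - s) ^ 4 := by positivity
  have h4 : s * (1 - s) ^ 4 ≤ 1 :=
    mul_le_one₀ hs1 (by positivity) (pow_le_one₀ (by linarith) (by linarith))
  rw [ker, abs_le]
  constructor <;> nlinarith

lemma cont_ker (γ : ℝ) : Continuous (ker γ) := by unfold ker; fun_prop

lemma abs_sqrt_sub_le {δ a b : ℝ} (hδ : 0 < δ) (ha : δ ≤ a) (hb : δ ≤ b) :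
    |√a - √b| ≤ 1 / √δ * |a - b| := by
  have h1 : 0 < √δ := Real.sqrt_pos.2 hδ
  have h2 : √δ ≤ √a := Real.sqrt_le_sqrt ha
  have h3 : √δ ≤ √b := Real.sqrt_le_sqrt hb
  have h4 : a - b = (√a - √b) * (√a + √b) := by
    have := Real.mul_self_sqrt (hδ.le.trans ha)
    have := Real.mul_self_sqrt (hδ.le.trans hb)
    nlinarith
  rw [h4, abs_mul, abs_of_nonneg (by linarith : 0 ≤ √a + √b)]
  rw [one_div, inv_mul_eq_div, le_div_iff₀ h1]
  exact mul_le_mul_of_nonneg_left (by linarith) (abs_nonneg _)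

lemma cont_Rad {γ κ : ℝ} {h : ℝ → ℝ} (hc : Continuous h) : Continuous (Rad γ κ h) := by
  unfold Rad
  have := cont_ker γ
  have h1 : Continuous fun x => ∫ s in (0:ℝ)..1, ker γ s * h (x * s) :=
    intervalIntegral.continuous_parametric_intervalIntegral_of_continuous'
      (by simp only [Function.uncurry_def]; fun_prop) 0 1
  fun_prop

lemma kerint_diff {γ : ℝ} (hγ0 : 0 < γ) (hγ1 : γ < 1) {h₁ h₂ : ℝ → ℝ} (c₁ : Continuous h₁)
    (c₂ : Continuous h₂) (x : ℝ) :
    |(∫ s in (0:ℝ)..1, ker γ s * h₁ (x * s)) - ∫ s in (0:ℝ)..1, ker γ s * h₂ (x * s)|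
      ≤ ∫ s in (0:ℝ)..1, |h₁ (x * s) - h₂ (x * s)| := by
  have := cont_ker γ
  rw [← intervalIntegral.integral_sub (Continuous.intervalIntegrable (by fun_prop) _ _)
    (Continuous.intervalIntegrable (by fun_prop) _ _)]
  refine (intervalIntegral.abs_integral_le_integral_abs (by norm_num)).trans ?_
  refine intervalIntegral.integral_mono_on (by norm_num)
    (Continuous.intervalIntegrable (by fun_prop) _ _)
    (Continuous.intervalIntegrable (by fun_prop) _ _) ?_
  intro s hs
  rw [← mul_sub, abs_mul]
  calc |ker γ s| * |h₁ (x * s) - h₂ (x * s)| ≤ 1 * |h₁ (x * s) - h₂ (x * s)| := by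
        gcongr; exact abs_ker_le hγ0 hγ1 hs.1 hs.2
    _ = _ := one_mul _

lemma rad_diff {γ : ℝ} (hγ0 : 0 < γ) (hγ1 : γ < 1) {h₁ h₂ : ℝ → ℝ} (c₁ : Continuous h₁)
    (c₂ : Continuous h₂) (κ₁ κ₂ x : ℝ) :
    |Rad γ κ₁ h₁ x - Rad γ κ₂ h₂ x|
      ≤ |κ₁ - κ₂| * x ^ 2 + x ^ 3 * ∫ t in (0:ℝ)..x, |h₁ t - h₂ t| := by
  have h1 := kerint_diff hγ0 hγ1 c₁ c₂ x
  have h2 := intervalIntegral.smul_integral_comp_mul_left (a := 0) (b := 1)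
    (fun t => |h₁ t - h₂ t|) x
  simp only [mul_zero, mul_one, smul_eq_mul] at h2
  rw [← h2]
  have e : Rad γ κ₁ h₁ x - Rad γ κ₂ h₂ x = (κ₁ - κ₂) * (x ^ 2 / 12) + x ^ 4 *
     ((∫ s in (0:ℝ)..1, ker γ s * h₁ (x * s)) - ∫ s in (0:ℝ)..1, ker γ s * h₂ (x * s)) := by
    simp only [Rad]; ring
  rw [e]
  refine (abs_add_le _ _).trans ?_
  rw [abs_mul, abs_mul, abs_of_nonneg (by positivity : 0 ≤ x ^ 2 / 12),
    abs_of_nonneg (by positivity : 0 ≤ x ^ 4)]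
  have h3 := mul_le_mul_of_nonneg_left h1 (by positivity : 0 ≤ x ^ 4)
  have h4 : |κ₁ - κ₂| * (x ^ 2 / 12) ≤ |κ₁ - κ₂| * x ^ 2 := by
    gcongr; nlinarith [sq_nonneg x]
  calc _ ≤ _ := add_le_add h4 h3
    _ = _ := by ring

/-- `h` solves on `[0, R]` the equation truncated from below at `δ`. -/
def TSol (γ κ δ R : ℝ) (h : ℝ → ℝ) : Prop := ∀ x, 0 ≤ x → x ≤ R → h x = √(max (Rad γ κ h x) δ)

/-- Existence for the truncated equation: Banach's fixed point theorem for `e^{-λx} h(x)`. -/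
lemma exists_TSol {γ : ℝ} (hγ0 : 0 < γ) (hγ1 : γ < 1) (κ : ℝ) {δ R : ℝ} (hδ : 0 < δ)
    (hR : 0 < R) : ∃ h, Continuous h ∧ TSol γ κ δ R h := by
  set L : ℝ := 1 / √δ with hL
  have hL0 : 0 < L := by have := Real.sqrt_pos.2 hδ; positivity
  set l : ℝ := 2 * (L * R ^ 3) with hl
  have hl0 : 0 < l := by positivity
  -- extension of a weighted unknown to the line
  let ext : C(Icc 0 R, ℝ) → ℝ → ℝ := fun u x => Real.exp (l * x) * IccExtend hR.le u x
  have hext : ∀ u, Continuous (ext u) := fun u => by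
    have : Continuous (IccExtend hR.le u) := u.continuous.Icc_extend'
    fun_prop
  let T : C(Icc 0 R, ℝ) → C(Icc 0 R, ℝ) := fun u =>
    ⟨fun x => Real.exp (-(l * x)) * √(max (Rad γ κ (ext u) x) δ), by
      have := cont_Rad (γ := γ) (κ := κ) (hext u)
      fun_prop⟩
  have hT : ContractingWith (1 / 2 : NNReal) T := by
    refine ⟨by norm_num, LipschitzWith.of_dist_le_mul fun u v => ?_⟩
    rw [ContinuousMap.dist_le (by positivity)]
    intro x
    obtain ⟨x, hx0, hxR⟩ := x
    have hd : ∀ t, |ext u t - ext v t| ≤ Real.exp (l * t) * dist u v := by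
      intro t
      simp only [ext, ← mul_sub, abs_mul, abs_of_pos (Real.exp_pos _)]
      gcongr
      rw [← Real.dist_eq]
      exact ContinuousMap.dist_apply_le_dist _
    have h1 := rad_diff hγ0 hγ1 (hext u) (hext v) κ κ x
    have h2 : ∫ t in (0:ℝ)..x, |ext u t - ext v t| ≤ (Real.exp (l * x) / l) * dist u v := by
      have cu := hext u
      have cv := hext v
      refine (intervalIntegral.integral_mono_on (g := fun t => Real.exp (l * t) * dist u v) hx0
        (Continuous.intervalIntegrable (by fun_prop) _ _)
        (Continuous.intervalIntegrable (by fun_prop) _ _) (fun t _ => hd t)).trans ?_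
      rw [intervalIntegral.integral_mul_const]
      gcongr
      rw [intervalIntegral.integral_comp_mul_left (fun t => Real.exp t) hl0.ne', integral_exp]
      simp only [mul_zero, Real.exp_zero, smul_eq_mul]
      rw [div_eq_inv_mul]
      gcongr; linarith
    have h3 := abs_sqrt_sub_le hδ (le_max_right (Rad γ κ (ext u) x) δ)
      (le_max_right (Rad γ κ (ext v) x) δ)
    have h4 : |max (Rad γ κ (ext u) x) δ - max (Rad γ κ (ext v) x) δ|
      ≤ |Rad γ κ (ext u) x - Rad γ κ (ext v) x| := abs_max_sub_max_le_abs _ _ _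
    have h5 : |√(max (Rad γ κ (ext u) x) δ) - √(max (Rad γ κ (ext v) x) δ)| ≤
        L * (R ^ 3 * ((Real.exp (l * x) / l) * dist u v)) := by
      refine h3.trans ?_
      rw [← hL]
      gcongr
      refine h4.trans (h1.trans ?_)
      simp only [sub_self, abs_zero, zero_mul, zero_add]
      have : 0 ≤ ∫ t in (0:ℝ)..x, |ext u t - ext v t| :=
        intervalIntegral.integral_nonneg hx0 fun _ _ => abs_nonneg _
      gcongr
    show dist (Real.exp (-(l * x)) * √(max (Rad γ κ (ext u) x) δ))
      (Real.exp (-(l * x)) * √(max (Rad γ κ (ext v) x) δ)) ≤ _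
    rw [Real.dist_eq, ← mul_sub, abs_mul, abs_of_pos (Real.exp_pos _)]
    calc _ ≤ Real.exp (-(l * x)) * (L * (R ^ 3 * ((Real.exp (l * x) / l) * dist u v))) := by
          gcongr
      _ = (Real.exp (-(l * x)) * Real.exp (l * x)) * (L * R ^ 3 / l) * dist u v := by ring
      _ = (1 / 2) * dist u v := by
          rw [← Real.exp_add, neg_add_cancel, Real.exp_zero, hl]
          have : L * R ^ 3 ≠ 0 := by positivity
          congr 1; field_simp
      _ = _ := by norm_num
  have fp := hT.fixedPoint_isFixedPt
  set u := ContractingWith.fixedPoint T hT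
  refine ⟨ext u, hext u, fun x hx0 hxR => ?_⟩
  have e : u ⟨x, hx0, hxR⟩ = Real.exp (-(l * x)) * √(max (Rad γ κ (ext u) x) δ) := by
    conv_lhs => rw [← fp]
    rfl
  have e2 : ext u x = Real.exp (l * x) * u ⟨x, hx0, hxR⟩ := by
    simp only [ext]; rw [IccExtend_of_mem hR.le u ⟨hx0, hxR⟩]
  rw [e2, e, ← mul_assoc, ← Real.exp_add, add_neg_cancel, Real.exp_zero, one_mul]

/-- Lipschitz dependence of truncated solutions on `κ`. -/
lemma TSol_dist {γ : ℝ} (hγ0 : 0 < γ) (hγ1 : γ < 1) {δ R : ℝ} (hδ : 0 < δ) (hR : 0 < R) :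
    ∃ C, 0 < C ∧ ∀ κ₁ κ₂ h₁ h₂, Continuous h₁ → Continuous h₂ → TSol γ κ₁ δ R h₁ →
      TSol γ κ₂ δ R h₂ → ∀ x, 0 ≤ x → x ≤ R → |h₁ x - h₂ x| ≤ C * |κ₁ - κ₂| := by
  set L : ℝ := 1 / √δ with hL
  have hL0 : 0 < L := by have := Real.sqrt_pos.2 hδ; positivity
  set b := L * R ^ 3 with hb
  have hb0 : 0 < b := by positivity
  refine ⟨L * R ^ 2 * Real.exp (b * R), by positivity, ?_⟩
  intro κ₁ κ₂ h₁ h₂ c₁ c₂ t₁ t₂ x hx0 hxR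
  set a := L * R ^ 2 * |κ₁ - κ₂| with ha
  set I : ℝ → ℝ := fun x => ∫ t in (0:ℝ)..x, |h₁ t - h₂ t| with hI
  have cw : Continuous fun t => |h₁ t - h₂ t| := by fun_prop
  have dI : ∀ x, HasDerivAt I (|h₁ x - h₂ x|) x := fun x =>
    intervalIntegral.integral_hasDerivAt_right (cw.intervalIntegrable _ _)
      (cw.stronglyMeasurableAtFilter _ _) cw.continuousAt
  have main : ∀ x, 0 ≤ x → x ≤ R → |h₁ x - h₂ x| ≤ a + b * I x := by
    intro x hx0 hxR
    rw [t₁ x hx0 hxR, t₂ x hx0 hxR]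
    have h1 := rad_diff hγ0 hγ1 c₁ c₂ κ₁ κ₂ x
    have h3 := abs_sqrt_sub_le hδ (le_max_right (Rad γ κ₁ h₁ x) δ)
      (le_max_right (Rad γ κ₂ h₂ x) δ)
    have h4 : |max (Rad γ κ₁ h₁ x) δ - max (Rad γ κ₂ h₂ x) δ|
      ≤ |Rad γ κ₁ h₁ x - Rad γ κ₂ h₂ x| := abs_max_sub_max_le_abs _ _ _
    have hI0 : 0 ≤ I x := intervalIntegral.integral_nonneg hx0 fun _ _ => abs_nonneg _
    have h5 : |κ₁ - κ₂| * x ^ 2 + x ^ 3 * I x ≤ |κ₁ - κ₂| * R ^ 2 + R ^ 3 * I x := by gcongr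
    calc _ ≤ L * (|κ₁ - κ₂| * R ^ 2 + R ^ 3 * I x) := by
          refine h3.trans ?_
          rw [← hL]; gcongr; exact h4.trans (h1.trans h5)
      _ = _ := by rw [ha, hb]; ring
  have hm := mono_of (F := fun x => -(Real.exp (-(b * x)) * (I x + a / b)))
    (F' := fun x => Real.exp (-(b * x)) * (a + b * I x - |h₁ x - h₂ x|)) hx0
    (fun y _ => by
      have := (dI y).continuousAt
      exact ContinuousAt.continuousWithinAt (by fun_prop))
    (fun y _ _ => by
      have h1 : HasDerivAt (fun x => Real.exp (-(b * x))) (Real.exp (-(b * y)) * (-(b * 1))) y :=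
        (((hasDerivAt_id y).const_mul b).neg).exp
      have := (h1.mul ((dI y).add_const (a / b))).neg
      refine this.congr_deriv ?_
      field_simp; ring)
    (fun y h1 h2 => mul_nonneg (Real.exp_pos _).le (by linarith [main y h1.le (h2.le.trans hxR)]))
  have hI0 : I 0 = 0 := by simp [hI]
  simp only [hI0, mul_zero, neg_zero, Real.exp_zero, zero_add, one_mul] at hm
  have hm2 : I x + a / b ≤ Real.exp (b * x) * (a / b) := by
    have h1 : Real.exp (-(b * x)) * (I x + a / b) ≤ a / b := by linarith
    have h2 := mul_le_mul_of_nonneg_left h1 (Real.exp_pos (b * x)).le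
    rwa [← mul_assoc, ← Real.exp_add, add_neg_cancel, Real.exp_zero, one_mul] at h2
  have h6 : a + b * I x ≤ Real.exp (b * x) * a := by
    have := mul_le_mul_of_nonneg_left hm2 hb0.le
    have e1 : b * (I x + a / b) = a + b * I x := by field_simp; ring
    have e2 : b * (Real.exp (b * x) * (a / b)) = Real.exp (b * x) * a := by field_simp
    linarith
  have ha0 : 0 ≤ a := by positivity
  calc _ ≤ Real.exp (b * x) * a := (main x hx0 hxR).trans h6
    _ ≤ Real.exp (b * R) * a := by gcongr
    _ = _ := by rw [ha]; ring

lemma rad_diff_unif {γ : ℝ} (hγ0 : 0 < γ) (hγ1 : γ < 1) {h₁ h₂ : ℝ → ℝ} (c₁ : Continuous h₁)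
    (c₂ : Continuous h₂) (κ₁ κ₂ : ℝ) {R ε : ℝ}
    (hε : ∀ x, 0 ≤ x → x ≤ R → |h₁ x - h₂ x| ≤ ε) {x : ℝ} (hx : 0 ≤ x) (hxR : x ≤ R) :
    |Rad γ κ₁ h₁ x - Rad γ κ₂ h₂ x| ≤ |κ₁ - κ₂| * R ^ 2 + R ^ 4 * ε := by
  refine (rad_diff hγ0 hγ1 c₁ c₂ κ₁ κ₂ x).trans ?_
  have hε0 : 0 ≤ ε := (abs_nonneg _).trans (hε x hx hxR)
  have h1 : ∫ t in (0:ℝ)..x, |h₁ t - h₂ t| ≤ x * ε := by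
    have := intervalIntegral.integral_mono_on (μ := MeasureTheory.volume) (g := fun _ => ε) hx
      (Continuous.intervalIntegrable (by fun_prop : Continuous fun t => |h₁ t - h₂ t|) _ _)
      (Continuous.intervalIntegrable (by fun_prop) _ _)
      (fun t ht => hε t ht.1 (ht.2.trans hxR))
    simpa using this
  calc _ ≤ |κ₁ - κ₂| * x ^ 2 + x ^ 3 * (x * ε) := by gcongr
    _ = |κ₁ - κ₂| * x ^ 2 + x ^ 4 * ε := by ring
    _ ≤ _ := by gcongr

namespace Prof
variable {γ κ : ℝ}

lemma Good.mono {S : Prof γ κ} {R R' : ℝ} (hS : S.Good R) (h : R' ≤ R) : S.Good R' :=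
  fun x h0 h1 => hS x h0 (h1.trans h)

lemma Good.tsol {S : Prof γ κ} {R δ : ℝ} (hS : S.Good R)
    (hδ : ∀ x, 0 ≤ x → x ≤ R → δ ≤ S.h x ^ 2) : TSol γ κ δ R S.h := by
  intro x h0 h1
  obtain ⟨h2, h3⟩ := hS x h0 h1
  rw [max_eq_left (by rw [← h3]; exact hδ x h0 h1), ← h3, Real.sqrt_sq h2.le]

lemma Good.lower {S : Prof γ κ} {R : ℝ} (hR : 0 < R) (hS : S.Good R) :
    ∃ δ, 0 < δ ∧ ∀ x, 0 ≤ x → x ≤ R → δ ≤ S.h x ^ 2 := by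
  have hc := S.cont
  obtain ⟨z, hz, hm⟩ := isCompact_Icc.exists_isMinOn (nonempty_Icc.2 hR.le)
    (by fun_prop : ContinuousOn (fun x => S.h x ^ 2) (Icc 0 R))
  exact ⟨S.h z ^ 2, pow_pos (hS z hz.1 hz.2).1 2, fun x h0 h1 => hm ⟨h0, h1⟩⟩

/-- A truncated solution whose right-hand side stays above the truncation level is a solution. -/
lemma good_of_tsol {R δ : ℝ} (hδ : 0 < δ) {h : ℝ → ℝ} (hc : Continuous h)
    (ht : TSol γ κ δ R h) (hr : ∀ x, 0 ≤ x → x ≤ R → δ ≤ Rad γ κ h x) :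
    (⟨h, hc⟩ : Prof γ κ).Good R := by
  intro x h0 h1
  have h2 := hr x h0 h1
  have h3 := ht x h0 h1
  rw [max_eq_left h2] at h3
  show 0 < h x ∧ h x ^ 2 = Rad γ κ h x
  rw [h3]
  exact ⟨Real.sqrt_pos.2 (hδ.trans_le h2), Real.sq_sqrt (hδ.le.trans h2)⟩

lemma Good.unique (hγ0 : 0 < γ) (hγ1 : γ < 1) {S T : Prof γ κ} {R : ℝ} (hR : 0 < R)
    (hS : S.Good R) (hT : T.Good R) : ∀ x, 0 ≤ x → x ≤ R → S.h x = T.h x := by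
  obtain ⟨δ₁, p₁, l₁⟩ := hS.lower hR
  obtain ⟨δ₂, p₂, l₂⟩ := hT.lower hR
  have hδ : 0 < min δ₁ δ₂ := lt_min p₁ p₂
  obtain ⟨C, -, H⟩ := TSol_dist hγ0 hγ1 hδ hR
  intro x h0 h1
  have := H κ κ S.h T.h S.cont T.cont
    (hS.tsol fun x a b => (min_le_left _ _).trans (l₁ x a b))
    (hT.tsol fun x a b => (min_le_right _ _).trans (l₂ x a b)) x h0 h1
  simp only [sub_self, abs_zero, mul_zero] at this
  linarith [abs_nonpos_iff.1 this]

/-- Solutions on `[0, R]` persist under small changes of `κ` and depend continuously on it. -/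
lemma Good.perturb (hγ0 : 0 < γ) (hγ1 : γ < 1) {S : Prof γ κ} {R : ℝ} (hR : 0 < R)
    (hS : S.Good R) : ∃ T : ∀ κ' : ℝ, Prof γ κ', (∀ᶠ κ' in 𝓝 κ, (T κ').Good R) ∧
      ∃ C, ∀ κ' x, 0 ≤ x → x ≤ R → |(T κ').h x - S.h x| ≤ C * |κ' - κ| := by
  obtain ⟨δ, p, l⟩ := hS.lower hR
  have p2 : 0 < δ / 2 := by positivity
  obtain ⟨C, hC, H⟩ := TSol_dist hγ0 hγ1 p2 hR
  choose h hc ht using fun κ' => exists_TSol hγ0 hγ1 κ' p2 hR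
  have tS : TSol γ κ (δ / 2) R S.h := hS.tsol fun x a b => by linarith [l x a b]
  have hd : ∀ κ' x, 0 ≤ x → x ≤ R → |h κ' x - S.h x| ≤ C * |κ' - κ| := fun κ' =>
    H κ' κ _ _ (hc κ') S.cont (ht κ') tS
  refine ⟨fun κ' => ⟨h κ', hc κ'⟩, ?_, C, hd⟩
  have hcon : Tendsto (fun κ' => |κ' - κ| * R ^ 2 + R ^ 4 * (C * |κ' - κ|)) (𝓝 κ) (𝓝 0) := by
    have : Continuous (fun κ' => |κ' - κ| * R ^ 2 + R ^ 4 * (C * |κ' - κ|)) := by fun_prop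
    simpa using this.tendsto κ
  filter_upwards [hcon.eventually_lt_const p2] with κ' hκ'
  refine good_of_tsol p2 (hc κ') (ht κ') fun x a b => ?_
  have h1 := rad_diff_unif hγ0 hγ1 (hc κ') S.cont κ' κ (hd κ') a b
  have h2 := (hS x a b).2
  have h3 := l x a b
  have h4 := (abs_le.1 h1).1
  linarith

/-- Solutions for `κ' → κ` with a common positive lower bound yield a solution for `κ`. -/
lemma exists_good_of_limit (hγ0 : 0 < γ) (hγ1 : γ < 1) {R δ : ℝ} (hR : 0 < R) (hδ : 0 < δ)
    (H : ∃ᶠ κ' in 𝓝 κ, ∃ S : Prof γ κ', S.Good R ∧ ∀ x, 0 ≤ x → x ≤ R → δ ≤ S.h x ^ 2) :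
    ∃ S : Prof γ κ, S.Good R := by
  have p2 : 0 < δ / 2 := by positivity
  obtain ⟨C, hC, D⟩ := TSol_dist hγ0 hγ1 p2 hR
  obtain ⟨h, hc, ht⟩ := exists_TSol hγ0 hγ1 κ p2 hR
  have hcon : Tendsto (fun κ' => |κ' - κ| * R ^ 2 + R ^ 4 * (C * |κ' - κ|)) (𝓝 κ) (𝓝 0) := by
    have : Continuous (fun κ' => |κ' - κ| * R ^ 2 + R ^ 4 * (C * |κ' - κ|)) := by fun_prop
    simpa using this.tendsto κ
  obtain ⟨κ', ⟨S, hS, hl⟩, hκ'⟩ := (H.and_eventually (hcon.eventually_lt_const p2)).exists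
  refine ⟨⟨h, hc⟩, good_of_tsol p2 hc ht fun x a b => ?_⟩
  have hd := D κ' κ _ _ S.cont hc (hS.tsol fun x a b => by linarith [hl x a b]) ht
  have h1 := rad_diff_unif hγ0 hγ1 S.cont hc κ' κ hd a b
  have h2 := (hS x a b).2
  have h3 := hl x a b
  have h4 := (abs_le.1 h1).2
  linarith

end Prof

lemma mom_congr {h₁ h₂ : ℝ → ℝ} {x : ℝ} (hx : 0 ≤ x) (H : ∀ t, 0 ≤ t → t ≤ x → h₁ t = h₂ t)
    (j : ℕ) : mom h₁ j x = mom h₂ j x := by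
  refine intervalIntegral.integral_congr fun t ht => ?_
  rw [uIcc_of_le hx] at ht
  simp only [H t ht.1 ht.2]

lemma rad_congr {γ κ : ℝ} {h₁ h₂ : ℝ → ℝ} {x : ℝ} (hx : 0 ≤ x)
    (H : ∀ t, 0 ≤ t → t ≤ x → h₁ t = h₂ t) : Rad γ κ h₁ x = Rad γ κ h₂ x := by
  have : (∫ s in (0:ℝ)..1, ker γ s * h₁ (x * s)) = ∫ s in (0:ℝ)..1, ker γ s * h₂ (x * s) := by
    refine intervalIntegral.integral_congr fun s hs => ?_
    rw [uIcc_of_le (by norm_num)] at hs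
    simp only [H (x * s) (mul_nonneg hx hs.1) (mul_le_of_le_one_right hx hs.2)]
  simp only [Rad, this]

lemma rad_neg {γ κ : ℝ} {h : ℝ → ℝ} (H : ∀ t, h (-t) = h t) (x : ℝ) :
    Rad γ κ h (-x) = Rad γ κ h x := by
  have : ∀ s, h (-x * s) = h (x * s) := fun s => by rw [← H (x * s)]; congr 1; ring
  simp only [Rad, this]; ring

/-- Local solutions on all `[0, n]` glue to one even global solution. -/
lemma Prof.glue {γ κ : ℝ} (hγ0 : 0 < γ) (hγ1 : γ < 1)
    (H : ∀ R, 0 < R → ∃ S : Prof γ κ, S.Good R) :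
    ∃ S : Prof γ κ, (∀ R, S.Good R) ∧ ∀ x, S.h (-x) = S.h x := by
  choose S hS using fun n : ℕ => H (n + 1) (by positivity)
  have hu : ∀ m n : ℕ, ∀ x : ℝ, 0 ≤ x → x ≤ m + 1 → x ≤ n + 1 → (S m).h x = (S n).h x := by
    intro m n x h0 h1 h2
    rcases le_total m n with h | h
    · have : (m:ℝ) ≤ n := by exact_mod_cast h
      exact Good.unique hγ0 hγ1 (by positivity) (hS m) ((hS n).mono (by linarith)) x h0 h1
    · have : (n:ℝ) ≤ m := by exact_mod_cast h
      exact Good.unique hγ0 hγ1 (by positivity) ((hS m).mono (by linarith)) (hS n) x h0 h2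
  let h : ℝ → ℝ := fun x => (S ⌈|x|⌉₊).h |x|
  have hh : ∀ n : ℕ, ∀ x : ℝ, |x| ≤ n + 1 → h x = (S n).h |x| := fun n x hx =>
    hu _ _ _ (abs_nonneg _) (by linarith [Nat.le_ceil |x|]) hx
  have hc : Continuous h := by
    rw [continuous_iff_continuousAt]
    intro x
    have h1 : ∀ᶠ y in 𝓝 x, h y = (S ⌈|x|⌉₊).h |y| := by
      have : ∀ᶠ y in 𝓝 x, |y| < (⌈|x|⌉₊ : ℝ) + 1 :=
        continuous_abs.continuousAt.eventually_lt_const (by linarith [Nat.le_ceil |x|])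
      filter_upwards [this] with y hy
      exact hh _ _ hy.le
    have h2 : Continuous fun y : ℝ => (S ⌈|x|⌉₊).h |y| := (S _).cont.comp continuous_abs
    exact h2.continuousAt.congr (h1.mono fun y hy => hy.symm)
  refine ⟨⟨h, hc⟩, fun R x h0 _ => ?_, fun x => by simp [h]⟩
  have hx : ∀ t, 0 ≤ t → t ≤ x → h t = (S ⌈x⌉₊).h t := fun t t0 t1 => by
    rw [hh ⌈x⌉₊ t (by rw [abs_of_nonneg t0]; linarith [Nat.le_ceil x]), abs_of_nonneg t0]
  have h2 := hS ⌈x⌉₊ x h0 (by linarith [Nat.le_ceil x])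
  show 0 < h x ∧ h x ^ 2 = Rad γ κ h x
  rw [hx x h0 le_rfl, rad_congr h0 hx]
  exact h2

/-! ### Solutions, the expanding cone and the shooting set -/

/-- First exit: if `φ a > 0` and `φ b ≤ 0`, there is a first zero. -/
lemma first_zero {φ : ℝ → ℝ} {a b : ℝ} (hab : a ≤ b) (hc : ContinuousOn φ (Icc a b))
    (ha : 0 < φ a) (hb : φ b ≤ 0) :
    ∃ z, a < z ∧ z ≤ b ∧ φ z = 0 ∧ ∀ y, a ≤ y → y < z → 0 < φ y := by
  set s : Set ℝ := Icc a b ∩ φ ⁻¹' Iic 0 with hs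
  have hcl : IsClosed s := hc.preimage_isClosed_of_isClosed isClosed_Icc isClosed_Iic
  have hne : s.Nonempty := ⟨b, ⟨hab, le_rfl⟩, hb⟩
  have hbd : BddBelow s := ⟨a, fun y hy => hy.1.1⟩
  have hz : sInf s ∈ s := hcl.csInf_mem hne hbd
  have hlt : ∀ y, a ≤ y → y < sInf s → 0 < φ y := by
    intro y h1 h2
    by_contra h
    exact absurd (csInf_le hbd (show y ∈ s from ⟨⟨h1, h2.le.trans hz.1.2⟩, not_lt.1 h⟩))
      (not_le.2 h2)
  have haz : a < sInf s := by
    rcases hz.1.1.lt_or_eq with h | h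
    · exact h
    · have := hz.2
      rw [← h] at this
      exact absurd this (not_le.2 ha)
  refine ⟨sInf s, haz, hz.1.2, le_antisymm hz.2 ?_, hlt⟩
  by_contra hneg
  have hneg : φ (sInf s) < 0 := not_le.1 hneg
  have hcc : ContinuousOn φ (Icc a (sInf s)) := hc.mono (Icc_subset_Icc_right hz.1.2)
  obtain ⟨y, hy, hy0⟩ := intermediate_value_Icc' haz.le hcc ⟨hneg.le, ha.le⟩
  have : y ≠ sInf s := fun h => by rw [h] at hy0; linarith
  have := hlt y hy.1 (lt_of_le_of_ne hy.2 this)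
  linarith

/-- Continuation: a continuous `φ`, positive at `a`, that cannot vanish for the first time is
positive throughout. -/
lemma boot {φ : ℝ → ℝ} {a b : ℝ} (hc : ContinuousOn φ (Icc a b)) (ha : 0 < φ a)
    (hs : ∀ z, a < z → z ≤ b → (∀ y, a ≤ y → y < z → 0 < φ y) → 0 < φ z) :
    ∀ x, a ≤ x → x ≤ b → 0 < φ x := by
  intro x h0 h1
  by_contra h
  obtain ⟨z, z1, z2, z3, z4⟩ := first_zero h0 (hc.mono (Icc_subset_Icc_right h1)) ha (not_lt.1 h)
  exact absurd (hs z z1 (z2.trans h1) z4) (by rw [z3]; exact lt_irrefl _)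

namespace Prof
variable {γ κ : ℝ} {S : Prof γ κ} {R : ℝ}

lemma Good.g_pos (hS : S.Good R) {x : ℝ} (h0 : 0 < x) (h1 : x ≤ R) : 0 < S.g x :=
  mul_pos h0 (hS x h0.le h1).1

lemma Good.g_sq (hS : S.Good R) {x : ℝ} (h0 : 0 ≤ x) (h1 : x ≤ R) : S.g x ^ 2 = 2 * S.W0 x := by
  rw [← S.two_W0, g, mul_pow, (hS x h0 h1).2]

lemma Good.W0_pos (hS : S.Good R) {x : ℝ} (h0 : 0 < x) (h1 : x ≤ R) : 0 < S.W0 x := by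
  have := hS.g_sq h0.le h1
  have := pow_pos (hS.g_pos h0 h1) 2
  linarith

lemma Good.d_g (hS : S.Good R) {x : ℝ} (h0 : 0 < x) (h1 : x < R) :
    HasDerivAt S.g (S.W1 x / S.g x) x := by
  have hw := hS.W0_pos h0 h1.le
  have e : ∀ᶠ y in 𝓝 x, S.g y = √(2 * S.W0 y) := by
    filter_upwards [Ioo_mem_nhds h0 h1] with y hy
    rw [← hS.g_sq hy.1.le hy.2.le, Real.sqrt_sq (hS.g_pos hy.1 hy.2.le).le]
  have hd : HasDerivAt (fun y => √(2 * S.W0 y)) _ x :=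
    ((S.d_W0 x).const_mul 2).sqrt (by positivity)
  refine (hd.congr_of_eventuallyEq e).congr_deriv ?_
  rw [← e.self_of_nhds]
  have := (hS.g_pos h0 h1.le).ne'
  field_simp

lemma Good.d_W4 (hS : S.Good R) {x : ℝ} (h0 : 0 < x) (h1 : x < R) :
    HasDerivAt S.W4 (S.Q x / S.g x) x := by
  have e : S.W4 = fun x => x * S.g x - S.c x := funext S.W4_eq
  rw [e]
  refine (((hasDerivAt_id x).mul (hS.d_g h0 h1)).sub (S.d_c x)).congr_deriv ?_
  have hg := (hS.g_pos h0 h1.le).ne'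
  have h2 := hS.g_sq h0.le h1.le
  simp only [Q, id]
  field_simp
  linear_combination (-γ) * h2

lemma Good.h_zero (hS : S.Good R) (hR : 0 ≤ R) : S.h 0 = 1 := by
  obtain ⟨h1, h2⟩ := hS 0 le_rfl hR
  have : S.h 0 ^ 2 = 1 := by rw [h2]; simp [Rad]
  nlinarith

/-- The cone `Q, Q', W2, W3, W4 > 0`. -/
def Cone (S : Prof γ κ) (x : ℝ) : Prop :=
  0 < S.Q x ∧ 0 < S.Q1 x ∧ 0 < S.W2 x ∧ 0 < S.W3 x ∧ 0 < S.W4 x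

/-- While `W4 > 0`, the remaining cone inequalities persist. -/
lemma Cone.of_W4 (hγ1 : γ < 1) {a x : ℝ} (ha : 0 ≤ a) (hax : a ≤ x) (hC : S.Cone a)
    (h4 : ∀ y, a < y → y < x → 0 < S.W4 y) :
    0 < S.Q x ∧ 0 < S.Q1 x ∧ 0 < S.W2 x ∧ 0 < S.W3 x := by
  obtain ⟨q0, q1, w2, w3, -⟩ := hC
  have W3p : ∀ y, a ≤ y → y ≤ x → 0 < S.W3 y := fun y h0 h1 => w3.trans_le <|
    mono_of h0 S.cont_W3.continuousOn (fun t _ _ => S.d_W3 t)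
      (fun t t0 t1 => (h4 t t0 (t1.trans_le h1)).le)
  have W2p : ∀ y, a ≤ y → y ≤ x → 0 < S.W2 y := fun y h0 h1 => w2.trans_le <|
    mono_of h0 S.cont_W2.continuousOn (fun t _ _ => S.d_W2 t)
      (fun t t0 t1 => (W3p t t0.le (t1.le.trans h1)).le)
  have Q1p : ∀ y, a ≤ y → y ≤ x → 0 < S.Q1 y := fun y h0 h1 => q1.trans_le <|
    mono_of h0 S.cont_Q1.continuousOn (fun t _ _ => S.d_Q1 t)
      (fun t t0 t1 => by
        have h2 := W3p t t0.le (t1.le.trans h1)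
        have h3 := W2p t t0.le (t1.le.trans h1)
        have h4 : 0 < t := ha.trans_lt t0
        have h5 : 0 < 2 - 2 * γ := by linarith
        simp only [Q2]; positivity)
  have Q0p : 0 < S.Q x := q0.trans_le <|
    mono_of hax S.cont_Q.continuousOn (fun t _ _ => S.d_Q t)
      (fun t t0 t1 => (Q1p t t0.le t1.le).le)
  exact ⟨Q0p, Q1p x hax le_rfl, W2p x hax le_rfl, W3p x hax le_rfl⟩

lemma Cone.persist (hγ1 : γ < 1) (hS : S.Good R) {a : ℝ} (ha : 0 < a)
    (hC : S.Cone a) : ∀ x, a ≤ x → x ≤ R → S.Cone x := by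
  have h4 : ∀ x, a ≤ x → x ≤ R → 0 < S.W4 x := by
    refine boot S.cont_W4.continuousOn hC.2.2.2.2 fun z z1 z2 z3 => ?_
    refine hC.2.2.2.2.trans_le (mono_of z1.le S.cont_W4.continuousOn
      (fun t t0 t1 => hS.d_W4 (ha.trans t0) (t1.trans_le z2)) (fun t t0 t1 => ?_))
    have hq := (hC.of_W4 hγ1 ha.le t0.le (fun y y0 y1 => z3 y y0.le (y1.trans t1))).1
    have hg := hS.g_pos (ha.trans t0) (t1.le.trans z2)
    positivity
  intro x h0 h1
  obtain ⟨c1, c2, c3, c4⟩ := hC.of_W4 hγ1 ha.le h0 (fun y y0 y1 => h4 y y0.le (y1.le.trans h1))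
  exact ⟨c1, c2, c3, c4, h4 x h0 h1⟩

lemma W_congr {S T : Prof γ κ} {x : ℝ} (hx : 0 ≤ x) (H : ∀ t, 0 ≤ t → t ≤ x → S.h t = T.h t) :
    S.W0 x = T.W0 x ∧ S.W1 x = T.W1 x ∧ S.W2 x = T.W2 x ∧ S.W3 x = T.W3 x ∧ S.W4 x = T.W4 x := by
  simp only [W0, W1, W2, W3, W4, mom_congr hx H, H x hx le_rfl, and_self]

lemma Cone.congr {S T : Prof γ κ} {x : ℝ} (hx : 0 ≤ x) (H : ∀ t, 0 ≤ t → t ≤ x → S.h t = T.h t)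
    (hC : S.Cone x) : T.Cone x := by
  obtain ⟨e0, e1, e2, e3, e4⟩ := W_congr hx H
  simpa only [Cone, Q, Q1, e0, e1, e2, e3, e4] using hC

end Prof

open Prof

/-- The shooting set: parameters whose solution enters the cone. -/
def InA (γ κ : ℝ) : Prop := ∃ (S : Prof γ κ) (x : ℝ), 0 < x ∧ S.Good x ∧ S.Cone x

/-- The shooting set is open. -/
lemma Prof.Good.isOpen_aux {γ κ : ℝ} (hγ0 : 0 < γ) (hγ1 : γ < 1) (hA : InA γ κ) :
    ∀ᶠ κ' in 𝓝 κ, InA γ κ' := by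
  obtain ⟨S, x, hx, hS, c0, c1, c2, c3, c4⟩ := hA
  obtain ⟨T, hT, C, hC⟩ := hS.perturb hγ0 hγ1 hx
  have e : ∀ t, 0 ≤ t → t ≤ x → (T κ).h t = S.h t := fun t h0 h1 => by
    have := hC κ t h0 h1
    simp only [sub_self, abs_zero, mul_zero] at this
    linarith [abs_nonpos_iff.1 this]
  have ch : ContinuousAt (fun κ' => (T κ').h x) κ := by
    rw [ContinuousAt, e x hx.le le_rfl, tendsto_iff_dist_tendsto_zero]
    refine squeeze_zero (fun _ => dist_nonneg) (fun κ' => ?_) (g := fun κ' => C * |κ' - κ|) ?_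
    · rw [Real.dist_eq]; exact hC κ' x hx.le le_rfl
    · have : Continuous fun κ' => C * |κ' - κ| := by fun_prop
      simpa using this.tendsto κ
  have cm : ∀ j, ContinuousAt (fun κ' => mom (T κ').h j x) κ := by
    intro j
    rw [ContinuousAt, mom_congr hx.le e, tendsto_iff_dist_tendsto_zero]
    refine squeeze_zero (fun _ => dist_nonneg) (fun κ' => ?_)
      (g := fun κ' => (x ^ j * (C * |κ' - κ|)) * |x - 0|) ?_
    · have c1 := (T κ').cont
      have c2 := S.cont
      rw [Real.dist_eq, mom, mom, ← intervalIntegral.integral_sub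
        (Continuous.intervalIntegrable (by fun_prop) _ _)
        (Continuous.intervalIntegrable (by fun_prop) _ _)]
      rw [← Real.norm_eq_abs]
      refine intervalIntegral.norm_integral_le_of_norm_le_const fun t ht => ?_
      rw [uIoc_of_le hx.le] at ht
      have h0 := ht.1
      rw [← mul_sub, Real.norm_eq_abs, abs_mul, abs_of_nonneg (by positivity)]
      gcongr
      · exact ht.2
      · exact hC κ' t ht.1.le ht.2
    · have : Continuous fun κ' => (x ^ j * (C * |κ' - κ|)) * |x - 0| := by fun_prop
      simpa using this.tendsto κ
  have m1 := cm 1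
  have m2 := cm 2
  have m3 := cm 3
  have m4 := cm 4
  have m5 := cm 5
  obtain ⟨e0, e1, e2, e3, e4⟩ := W_congr (T := S) hx.le e
  have k4 : ContinuousAt (fun κ' => (T κ').W4 x) κ := by unfold W4; fun_prop
  have k3 : ContinuousAt (fun κ' => (T κ').W3 x) κ := by unfold W3; fun_prop
  have k2 : ContinuousAt (fun κ' => (T κ').W2 x) κ := by unfold W2; fun_prop
  have k1 : ContinuousAt (fun κ' => (T κ').W1 x) κ := by unfold W1; fun_prop
  have k0 : ContinuousAt (fun κ' => (T κ').W0 x) κ := by unfold W0; fun_prop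
  have kQ1 : ContinuousAt (fun κ' => (T κ').Q1 x) κ := by unfold Q1; fun_prop
  have kQ : ContinuousAt (fun κ' => (T κ').Q x) κ := by unfold Q; fun_prop
  have f4 := k4.eventually_const_lt (u := 0) (by simpa only [e4] using c4)
  have f3 := k3.eventually_const_lt (u := 0) (by simpa only [e3] using c3)
  have f2 := k2.eventually_const_lt (u := 0) (by simpa only [e2] using c2)
  have f1 := kQ1.eventually_const_lt (u := 0) (by simpa only [Q1, e1, e2] using c1)
  have f0 := kQ.eventually_const_lt (u := 0) (by simpa only [Q, e1, e0] using c0)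
  filter_upwards [hT, f0, f1, f2, f3, f4] with κ' g g0 g1 g2 g3 g4
  exact ⟨T κ', x, hx, g, g0, g1, g2, g3, g4⟩

/-- Solutions entering the cone exist on every interval. -/
lemma InA.global {γ κ : ℝ} (hγ0 : 0 < γ) (hγ1 : γ < 1) (hA : InA γ κ) {R : ℝ} (hR : 0 < R) :
    ∃ S : Prof γ κ, S.Good R := by
  obtain ⟨S, a, ha, hS, hC⟩ := hA
  obtain ⟨δ₁, p₁, l₁⟩ := hS.lower ha
  have hw := hS.W0_pos ha le_rfl
  set δ₂ := 2 * S.W0 a / R ^ 2 with hδ₂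
  have p₂ : 0 < δ₂ := by positivity
  set δ := min δ₁ δ₂ / 2 with hδ
  have p : 0 < δ := by have := lt_min p₁ p₂; positivity
  have d1 : 2 * δ ≤ δ₁ := by rw [hδ]; linarith [min_le_left δ₁ δ₂]
  have d2 : 2 * δ ≤ δ₂ := by rw [hδ]; linarith [min_le_right δ₁ δ₂]
  obtain ⟨h, hc, ht⟩ := exists_TSol hγ0 hγ1 κ p hR
  set T : Prof γ κ := ⟨h, hc⟩ with hT
  have key : ∀ y, 0 ≤ y → y ≤ R → T.Good y → 2 * δ ≤ Rad γ κ h y := by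
    intro y y0 yR hy
    rw [← (hy y y0 le_rfl).2]
    rcases y0.eq_or_lt with y0 | y0
    · rw [← y0]
      have h1 := hS.h_zero ha.le
      have h2 := l₁ 0 le_rfl ha.le
      have h3 : T.h 0 = 1 := hy.h_zero y0.le
      rw [h1] at h2
      show 2 * δ ≤ T.h 0 ^ 2
      rw [h3]
      linarith
    rcases le_total y a with h1 | h1
    · have := Good.unique hγ0 hγ1 y0 hy (hS.mono h1) y y0.le le_rfl
      rw [this]
      linarith [l₁ y y0.le h1]
    · have hu := Good.unique hγ0 hγ1 ha hS (hy.mono h1)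
      have hCT := hC.congr ha.le hu
      have hp := hCT.persist hγ1 hy ha
      have hmon : T.W0 a ≤ T.W0 y := mono_of h1 T.cont_W0.continuousOn (fun t _ _ => T.d_W0 t)
        (fun t t0 t1 => by
          have h2 := (hp t t0.le t1.le).1
          have h3 := hy.W0_pos (ha.trans t0) t1.le
          simp only [Q] at h2
          have h4 : 0 < t * T.W1 t := by nlinarith
          exact (pos_of_mul_pos_right h4 (ha.trans t0).le).le)
      have e0 := (W_congr ha.le hu).1
      have h5 := T.two_W0 y
      rw [← (hy y y0.le le_rfl).2] at h5
      refine d2.trans ?_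
      rw [hδ₂, div_le_iff₀ (by positivity)]
      have h6 : y ^ 2 ≤ R ^ 2 := by gcongr
      have h7 := mul_le_mul_of_nonneg_right h6 (sq_nonneg (T.h y))
      show _ ≤ T.h y ^ 2 * _
      linarith
  have fin := boot (φ := fun x => Rad γ κ h x - δ) (a := 0) (b := R)
    ((cont_Rad hc).sub continuous_const).continuousOn (by
      have h2 := l₁ 0 le_rfl ha.le
      rw [hS.h_zero ha.le] at h2
      simp only [Rad]; norm_num; linarith)
    (fun z z1 z2 z3 => by
      have g : ∀ y, 0 ≤ y → y < z → 2 * δ ≤ Rad γ κ h y := by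
        intro y y0 y1
        refine key y y0 (y1.le.trans z2) (good_of_tsol p hc
          (fun x x0 x1 => ht x x0 (x1.trans (y1.le.trans z2))) fun x x0 x1 => ?_)
        linarith [z3 x x0 (x1.trans_lt y1)]
      have : 2 * δ ≤ Rad γ κ h z := by
        have hm : z ∈ closure (Ico 0 z) := by rw [closure_Ico z1.ne]; exact ⟨z1.le, le_rfl⟩
        exact le_on_closure (f := fun _ => 2 * δ) (fun y hy => g y hy.1 hy.2)
          continuousOn_const (cont_Rad hc).continuousOn hm
      show 0 < Rad γ κ h z - δ
      linarith)
  exact ⟨T, good_of_tsol p hc ht fun x x0 x1 => by linarith [fin x x0 x1]⟩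

lemma exists_local {γ : ℝ} (hγ0 : 0 < γ) (hγ1 : γ < 1) (κ : ℝ) :
    ∃ (S : Prof γ κ) (r : ℝ), 0 < r ∧ S.Good r := by
  obtain ⟨h, hc, ht⟩ := exists_TSol hγ0 hγ1 κ (δ := 1 / 2) (R := 1) (by norm_num) (by norm_num)
  have h0 : 1 / 2 < Rad γ κ h 0 := by simp [Rad]; norm_num
  have h1 := (cont_Rad (γ := γ) (κ := κ) hc).continuousAt.eventually_const_lt h0
  obtain ⟨ε, hε, h2⟩ := Metric.eventually_nhds_iff.1 h1
  refine ⟨⟨h, hc⟩, min (ε / 2) 1, by positivity, good_of_tsol (δ := 1 / 2) (by norm_num) hc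
    (fun x x0 x1 => ht x x0 (x1.trans (min_le_right _ _))) fun x x0 x1 => (h2 ?_).le⟩
  rw [Real.dist_eq, sub_zero, abs_of_nonneg x0]
  linarith [x1.trans (min_le_left _ _)]

/-- Strict growth from the origin. -/
lemma pos_of_zero {F F' : ℝ → ℝ} {b : ℝ} (hb : 0 < b) (h0 : F 0 = 0)
    (hd : ∀ x, HasDerivAt F (F' x) x) (hn : ∀ x, 0 < x → x < b → 0 < F' x) : 0 < F b := by
  rw [← h0]
  exact smono_of hb (fun x _ => (hd x).continuousAt.continuousWithinAt) (fun x _ _ => hd x) hn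

lemma InA_zero {γ : ℝ} (hγ0 : 0 < γ) (hγ1 : γ < 1) : InA γ 0 := by
  obtain ⟨S, r, hr, hS⟩ := exists_local hγ0 hγ1 0
  set η := (1 - γ) / 8 with hη
  have hη0 : 0 < η := by rw [hη]; linarith
  have h1 := hS.h_zero hr.le
  have h2 : ∀ᶠ x in 𝓝 (0:ℝ), |S.h x - 1| < η := by
    have : Continuous fun x => |S.h x - 1| := by have := S.cont; fun_prop
    exact this.continuousAt.eventually_lt_const (by simp [h1, hη0])
  obtain ⟨ε, hε, h3⟩ := Metric.eventually_nhds_iff.1 h2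
  set b := min (ε / 2) r with hb
  have hb0 : 0 < b := by positivity
  have hh : ∀ x, 0 ≤ x → x ≤ b → |S.h x - 1| < η := fun x x0 x1 => h3 (by
    rw [Real.dist_eq, sub_zero, abs_of_nonneg x0]; linarith [x1.trans (min_le_left _ _)])
  have h4 : ∀ x, 0 < x → x ≤ b → 0 < S.W4 x := by
    intro x x0 x1
    have hm : mom S.h 1 x ≤ (1 + η) * (x ^ 2 / 2) := by
      have := mono_of (F := fun x => (1 + η) * (x ^ 2 / 2) - mom S.h 1 x)
        (F' := fun x => (1 + η) * x - x ^ 1 * S.h x) x0.le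
        (fun y _ => by
          have := (mom_hasDerivAt S.cont 1 y).continuousAt
          exact ContinuousAt.continuousWithinAt (by fun_prop))
        (fun y _ _ => by
          have := ((((hasDerivAt_id y).pow 2).div_const 2).const_mul (1 + η)).sub
            (mom_hasDerivAt S.cont 1 y)
          refine this.congr_deriv ?_
          simp)
        (fun y y0 y1 => by
          have := (abs_lt.1 (hh y y0.le (y1.le.trans x1))).2
          nlinarith)
      simp [mom_zero] at this
      linarith
    have hl := (abs_lt.1 (hh x x0.le x1)).1
    have hx2 : 0 < x ^ 2 := by positivity
    have : (1 + γ) * mom S.h 1 x ≤ (1 + γ) * ((1 + η) * (x ^ 2 / 2)) := by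
      gcongr
    have h6 : x ^ 2 * (1 - η) < x ^ 2 * S.h x := by gcongr; linarith
    have h7 : 0 < x ^ 2 * ((1 - η) - (1 + γ) * (1 + η) / 2) := by
      apply mul_pos hx2
      rw [hη]; nlinarith
    simp only [W4]
    nlinarith
  have w3 : ∀ x, 0 < x → x ≤ b → 0 < S.W3 x := fun x x0 x1 =>
    pos_of_zero x0 S.W3_zero S.d_W3 fun y y0 y1 => h4 y y0 (y1.le.trans x1)
  have w2 : ∀ x, 0 < x → x ≤ b → 0 < S.W2 x := fun x x0 x1 => by
    have := mono_of x0.le S.cont_W2.continuousOn (fun y _ _ => S.d_W2 y)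
      (fun y y0 y1 => (w3 y y0 (y1.le.trans x1)).le)
    rw [S.W2_zero] at this
    linarith
  have q1 : ∀ x, 0 < x → x ≤ b → 0 < S.Q1 x := fun x x0 x1 =>
    pos_of_zero x0 S.Q1_zero S.d_Q1 fun y y0 y1 => by
      have a1 := w3 y y0 (y1.le.trans x1)
      have a2 := w2 y y0 (y1.le.trans x1)
      have a3 : 0 < 2 - 2 * γ := by linarith
      simp only [Q2]; positivity
  have q0 : 0 < S.Q b :=
    pos_of_zero hb0 S.Q_zero S.d_Q fun y y0 y1 => q1 y y0 y1.le
  exact ⟨S, b, hb0, hS.mono (min_le_right _ _), q0, q1 b hb0 le_rfl, w2 b hb0 le_rfl,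
    w3 b hb0 le_rfl, h4 b hb0 le_rfl⟩

/-! ### Large negative `κ`: no global solution -/

lemma d_of_poly {G G' : ℝ → ℝ} (a0 a1 a2 a3 a4 a5 a6 a7 a8 : ℝ)
    (hG : ∀ x, G x = a0 + a1 * x + a2 * x ^ 2 + a3 * x ^ 3 + a4 * x ^ 4 + a5 * x ^ 5 + a6 * x ^ 6
      + a7 * x ^ 7 + a8 * x ^ 8)
    (hG' : ∀ x, G' x = a1 + 2 * a2 * x + 3 * a3 * x ^ 2 + 4 * a4 * x ^ 3 + 5 * a5 * x ^ 4
      + 6 * a6 * x ^ 5 + 7 * a7 * x ^ 6 + 8 * a8 * x ^ 7) (x : ℝ) : HasDerivAt G (G' x) x := by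
  have m : ∀ (a : ℝ) (n : ℕ), HasDerivAt (fun x : ℝ => a * x ^ n) (a * (n * x ^ (n - 1))) x :=
    fun a n => (hasDerivAt_pow n x).const_mul a
  have := ((((((((hasDerivAt_const x a0).add ((hasDerivAt_id x).const_mul a1)).add (m a2 2)).add
    (m a3 3)).add (m a4 4)).add (m a5 5)).add (m a6 6)).add (m a7 7)).add (m a8 8)
  rw [funext hG]
  refine this.congr_deriv ?_
  rw [hG']; push_cast; ring

/-- Comparison: `F(a) ≤ G(a)` and `F' ≤ G'` give `F(b) ≤ G(b)`. -/
lemma cmp {F F' G G' : ℝ → ℝ} {a b : ℝ} (hab : a ≤ b) (cF : ContinuousOn F (Icc a b))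
    (dF : ∀ x, a < x → x < b → HasDerivAt F (F' x) x) (dG : ∀ x, HasDerivAt G (G' x) x)
    (h0 : F a ≤ G a) (h : ∀ x, a < x → x < b → F' x ≤ G' x) : F b ≤ G b := by
  have := mono_of (F := fun x => G x - F x) (F' := fun x => G' x - F' x) hab
    (ContinuousOn.sub (fun x _ => (dG x).continuousAt.continuousWithinAt) cF)
    (fun x x0 x1 => (dG x).sub (dF x x0 x1)) (fun x x0 x1 => by linarith [h x x0 x1])
  linarith

lemma cmp' {F F' G G' : ℝ → ℝ} {a b : ℝ} (hab : a ≤ b) (cF : ContinuousOn F (Icc a b))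
    (dF : ∀ x, a < x → x < b → HasDerivAt F (F' x) x) (dG : ∀ x, HasDerivAt G (G' x) x)
    (h0 : G a ≤ F a) (h : ∀ x, a < x → x < b → G' x ≤ F' x) : G b ≤ F b := by
  have := cmp (F := fun x => - F x) (G := fun x => - G x) (F' := fun x => - F' x)
    (G' := fun x => - G' x) hab cF.neg (fun x x0 x1 => (dF x x0 x1).neg) (fun x => (dG x).neg)
    (by linarith) (fun x x0 x1 => by linarith [h x x0 x1])
  linarith

/-- A derivative eventually below a negative constant forces divergence to `-∞`. -/
lemma tendsto_bot_of_deriv {F F' : ℝ → ℝ} (hd : ∀ x, HasDerivAt F (F' x) x) {d : ℝ} (hd0 : 0 < d)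
    (h : ∀ᶠ x in atTop, F' x ≤ -d) : Tendsto F atTop atBot := by
  obtain ⟨a, ha⟩ := eventually_atTop.1 h
  have h1 : ∀ᶠ x in atTop, F x ≤ F a + d * a + (-d) * x := by
    filter_upwards [eventually_ge_atTop a] with x hx
    have := cmp (G := fun x => F a + d * a + (-d) * x) (G' := fun _ => -d) hx
      (fun x _ => (hd x).continuousAt.continuousWithinAt) (fun x _ _ => hd x)
      (d_of_poly (F a + d * a) (-d) 0 0 0 0 0 0 0 (fun x => by ring) (fun x => by ring))
      (by linarith) (fun x x0 _ => ha x x0.le)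
    exact this
  have h2 : Tendsto (fun x => F a + d * a + (-d) * x) atTop atBot :=
    tendsto_atBot_add_const_left _ _ (tendsto_id.const_mul_atTop_of_neg (by linarith))
  exact tendsto_atBot_mono' _ h1 h2

lemma tendsto_bot_of_bot {F F' : ℝ → ℝ} (hd : ∀ x, HasDerivAt F (F' x) x)
    (h : Tendsto F' atTop atBot) : Tendsto F atTop atBot :=
  tendsto_bot_of_deriv hd one_pos (h.eventually_le_atBot _)

namespace Prof
variable {γ κ : ℝ} {S : Prof γ κ}

/-- On a global solution `W0 > 0`, so `W0` cannot tend to `-∞`. -/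
lemma not_bot (hS : ∀ R, S.Good R) (h : Tendsto S.W0 atTop atBot) : False := by
  obtain ⟨x, h1, h2⟩ := ((h.eventually_le_atBot 0).and (eventually_gt_atTop 0)).exists
  exact absurd ((hS x).W0_pos h2 le_rfl) (not_lt.2 h1)

lemma not_W2_neg (hS : ∀ R, S.Good R) {d : ℝ} (hd : 0 < d) (h : ∀ᶠ x in atTop, S.W2 x ≤ -d) :
    False :=
  not_bot hS (tendsto_bot_of_bot S.d_W0 (tendsto_bot_of_deriv S.d_W1 hd h))

lemma not_W4_neg (hS : ∀ R, S.Good R) {d : ℝ} (hd : 0 < d) (h : ∀ᶠ x in atTop, S.W4 x ≤ -d) :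
    False :=
  not_bot hS (tendsto_bot_of_bot S.d_W0 (tendsto_bot_of_bot S.d_W1 (tendsto_bot_of_bot S.d_W2
    (tendsto_bot_of_deriv S.d_W3 hd h))))

/-- The mirror image of the cone is a trap incompatible with a global solution. -/
lemma no_neg_lock (hγ1 : γ < 1) (hS : ∀ R, S.Good R) {a : ℝ} (ha : 0 < a)
    (q0 : S.Q a < 0) (q1 : S.Q1 a < 0) (q2 : S.Q2 a < 0) (w3 : S.W3 a < 0) (w4 : S.W4 a < 0) :
    False := by
  have step : ∀ x, a ≤ x → (∀ y, a ≤ y → y < x → S.W4 y < 0) → S.Q x < 0 := by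
    intro x hx hy
    have W3p : ∀ y, a ≤ y → y ≤ x → S.W3 y < 0 := fun y h0 h1 => by
      have := mono_of (F := fun x => - S.W3 x) h0 S.cont_W3.neg.continuousOn
        (fun t _ _ => (S.d_W3 t).neg) (fun t t0 t1 => by linarith [hy t t0.le (t1.trans_le h1)])
      linarith
    have Q2p : ∀ y, a ≤ y → y ≤ x → S.Q2 y < 0 := fun y h0 h1 => by
      have := mono_of (F := fun x => - S.Q2 x) h0 S.cont_Q2.neg.continuousOn
        (fun t _ _ => (S.d_Q2 t).neg) (fun t t0 t1 => by
          have a1 := hy t t0.le (t1.trans_le h1)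
          have a2 := W3p t t0.le (t1.le.trans h1)
          have a3 : 0 < t := ha.trans t0
          nlinarith)
      linarith
    have Q1p : ∀ y, a ≤ y → y ≤ x → S.Q1 y < 0 := fun y h0 h1 => by
      have := mono_of (F := fun x => - S.Q1 x) h0 S.cont_Q1.neg.continuousOn
        (fun t _ _ => (S.d_Q1 t).neg) (fun t t0 t1 => by linarith [Q2p t t0.le (t1.le.trans h1)])
      linarith
    have := mono_of (F := fun x => - S.Q x) hx S.cont_Q.neg.continuousOn
        (fun t _ _ => (S.d_Q t).neg) (fun t t0 t1 => by linarith [Q1p t t0.le t1.le])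
    linarith
  have le : ∀ z, a ≤ z → (∀ y, a ≤ y → y < z → S.W4 y < 0) → S.W4 z ≤ S.W4 a := by
    intro z hz hy
    have := mono_of (F := fun x => - S.W4 x) hz S.cont_W4.neg.continuousOn
        (fun t t0 t1 => ((hS z).d_W4 (ha.trans t0) t1).neg) (fun t t0 t1 => by
          have h1 := step t t0.le (fun y y0 y1 => hy y y0 (y1.trans t1))
          have h2 := (hS t).g_pos (ha.trans t0) le_rfl
          rw [Left.nonneg_neg_iff]
          exact (div_neg_of_neg_of_pos h1 h2).le)
    linarith
  have neg : ∀ x, a ≤ x → S.W4 x < 0 := fun x hx => by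
    have := boot (φ := fun x => - S.W4 x) (a := a) (b := x) S.cont_W4.neg.continuousOn (by linarith)
      (fun z z1 _ z3 => by
        have := le z z1.le (fun y y0 y1 => by linarith [z3 y y0 y1])
        show 0 < - S.W4 z
        linarith) x hx le_rfl
    linarith
  refine not_W4_neg hS (d := - S.W4 a) (by linarith) ?_
  filter_upwards [eventually_ge_atTop a] with x hx
  rw [neg_neg]
  exact le x hx fun y y0 _ => neg y y0

/-- If `W4 < 0` on `[0, a]` and `Q(a) < 0`, then `Q, W4 < 0` persists and drives `W0`
to `-∞`, so the solution is not global. -/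
lemma lock_of_Q_neg (hγ1 : γ < 1) (hS : ∀ R, S.Good R) {a : ℝ} (ha : 0 < a)
    (h4 : ∀ y, 0 ≤ y → y ≤ a → S.W4 y < 0) (q0 : S.Q a < 0) : False := by
  have w3 : ∀ y, 0 < y → y ≤ a → S.W3 y < 0 := fun y y0 y1 => by
    have := pos_of_zero (F := fun x => - S.W3 x) y0 (by rw [S.W3_zero, neg_zero])
      (fun x => (S.d_W3 x).neg) (fun x x0 x1 => by linarith [h4 x x0.le (x1.le.trans y1)])
    linarith
  have q2 : ∀ y z, 0 ≤ y → y ≤ z → z ≤ a → S.Q2 z ≤ S.Q2 y := fun y z y0 yz z1 => by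
    have := mono_of (F := fun x => - S.Q2 x) yz S.cont_Q2.neg.continuousOn
        (fun t _ _ => (S.d_Q2 t).neg) (fun t t0 t1 => by
          have t00 : 0 < t := y0.trans_lt t0
          have a1 := h4 t t00.le (t1.le.trans z1)
          have a2 := w3 t t00 (t1.le.trans z1)
          nlinarith)
    linarith
  have q1n : S.Q1 a < 0 := by
    by_contra hq
    have : ∀ y, 0 < y → y ≤ a → 0 ≤ S.Q1 y := by
      intro y y0 y1
      rcases le_or_gt 0 (S.Q2 y) with h | h
      · rw [← S.Q1_zero]
        exact mono_of y0.le S.cont_Q1.continuousOn (fun t _ _ => S.d_Q1 t)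
          (fun t t0 t1 => h.trans (q2 t y t0.le t1.le y1))
      · have := mono_of (F := fun x => - S.Q1 x) y1 S.cont_Q1.neg.continuousOn
          (fun t _ _ => (S.d_Q1 t).neg)
          (fun t t0 t1 => by linarith [q2 y t y0.le t0.le t1.le])
        linarith
    have := mono_of ha.le S.cont_Q.continuousOn (fun t _ _ => S.d_Q t)
      (fun t t0 t1 => this t t0 t1.le)
    rw [S.Q_zero] at this
    linarith
  have q2n : S.Q2 a < 0 := by
    by_contra hq
    have := mono_of ha.le S.cont_Q1.continuousOn (fun t _ _ => S.d_Q1 t)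
      (fun t t0 t1 => (not_lt.1 hq).trans (q2 t a t0.le t1.le le_rfl))
    rw [S.Q1_zero] at this
    linarith
  exact no_neg_lock hγ1 hS ha q0 q1n q2n (w3 a ha le_rfl) (h4 a ha.le le_rfl)

/-- Polynomial lower bounds while `W4 ≥ m`. -/
lemma lower_of_W4 {m X : ℝ} (h : ∀ y, 0 < y → y < X → m ≤ S.W4 y) :
    ∀ x, 0 ≤ x → x ≤ X → m * x ≤ S.W3 x ∧ 1 + m * x ^ 2 / 2 ≤ S.W2 x ∧
      x + m * x ^ 3 / 6 ≤ S.W1 x ∧ x ^ 2 / 2 + m * x ^ 4 / 24 ≤ S.W0 x := by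
  have b3 : ∀ x, 0 ≤ x → x ≤ X → m * x ≤ S.W3 x := fun x x0 x1 =>
    cmp' (G := fun x => m * x) (G' := fun _ => m) x0 S.cont_W3.continuousOn (fun t _ _ => S.d_W3 t)
      (d_of_poly 0 m 0 0 0 0 0 0 0 (fun x => by ring) (fun x => by ring)) (by simp [S.W3_zero])
      (fun t t0 t1 => h t t0 (t1.trans_le x1))
  have b2 : ∀ x, 0 ≤ x → x ≤ X → 1 + m * x ^ 2 / 2 ≤ S.W2 x := fun x x0 x1 =>
    cmp' (G := fun x => 1 + m * x ^ 2 / 2) (G' := fun x => m * x) x0 S.cont_W2.continuousOn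
      (fun t _ _ => S.d_W2 t)
      (d_of_poly 1 0 (m / 2) 0 0 0 0 0 0 (fun x => by ring) (fun x => by ring)) (by simp [S.W2_zero])
      (fun t t0 t1 => b3 t t0.le (t1.le.trans x1))
  have b1 : ∀ x, 0 ≤ x → x ≤ X → x + m * x ^ 3 / 6 ≤ S.W1 x := fun x x0 x1 =>
    cmp' (G := fun x => x + m * x ^ 3 / 6) (G' := fun x => 1 + m * x ^ 2 / 2) x0
      S.cont_W1.continuousOn (fun t _ _ => S.d_W1 t)
      (d_of_poly 0 1 0 (m / 6) 0 0 0 0 0 (fun x => by ring) (fun x => by ring)) (by simp [S.W1_zero])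
      (fun t t0 t1 => b2 t t0.le (t1.le.trans x1))
  have b0 : ∀ x, 0 ≤ x → x ≤ X → x ^ 2 / 2 + m * x ^ 4 / 24 ≤ S.W0 x := fun x x0 x1 =>
    cmp' (G := fun x => x ^ 2 / 2 + m * x ^ 4 / 24) (G' := fun x => x + m * x ^ 3 / 6) x0
      S.cont_W0.continuousOn (fun t _ _ => S.d_W0 t)
      (d_of_poly 0 0 (1 / 2) 0 (m / 24) 0 0 0 0 (fun x => by ring) (fun x => by ring))
      (by simp [S.W0_zero])
      (fun t t0 t1 => b1 t t0.le (t1.le.trans x1))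
  exact fun x x0 x1 => ⟨b3 x x0 x1, b2 x x0 x1, b1 x x0 x1, b0 x x0 x1⟩

/-- While `W4 ≤ 0`: `W4` and `Q` lie below explicit polynomials (here `κ = -(1-γ)k`). -/
lemma upper_of_W4 (hγ0 : 0 < γ) (hγ1 : γ < 1) {k X : ℝ} (hk : κ = -((1 - γ) * k)) (hS : S.Good X)
    (h : ∀ y, 0 < y → y < X → S.W4 y ≤ 0) :
    ∀ x, 0 ≤ x → x ≤ X → S.W4 x ≤ (1 - γ) * (-k + x ^ 2 / 2) ∧
      S.Q x ≤ (1 - γ) * (x ^ 2 - k * (2 - γ) * x ^ 4 / 12 + (3 - γ) * x ^ 6 / 360) := by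
  have w3 : ∀ x, 0 ≤ x → x ≤ X → S.W3 x ≤ 0 := fun x x0 x1 => by
    have := mono_of (F := fun x => - S.W3 x) x0 S.cont_W3.neg.continuousOn
      (fun t _ _ => (S.d_W3 t).neg) (fun t t0 t1 => by linarith [h t t0 (t1.trans_le x1)])
    rw [S.W3_zero] at this
    linarith
  have w2 : ∀ x, 0 ≤ x → x ≤ X → S.W2 x ≤ 1 := fun x x0 x1 => by
    have := mono_of (F := fun x => - S.W2 x) x0 S.cont_W2.neg.continuousOn
      (fun t _ _ => (S.d_W2 t).neg) (fun t t0 t1 => by linarith [w3 t t0.le (t1.le.trans x1)])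
    rw [S.W2_zero] at this
    linarith
  have w1 : ∀ x, 0 ≤ x → x ≤ X → S.W1 x ≤ x := fun x x0 x1 =>
    cmp (G := fun x => x) (G' := fun _ => 1) x0 S.cont_W1.continuousOn (fun t _ _ => S.d_W1 t)
      (d_of_poly 0 1 0 0 0 0 0 0 0 (fun x => by ring) (fun x => by ring)) (by simp [S.W1_zero])
      (fun t t0 t1 => w2 t t0.le (t1.le.trans x1))
  have w0 : ∀ x, 0 ≤ x → x ≤ X → S.W0 x ≤ x ^ 2 / 2 := fun x x0 x1 =>
    cmp (G := fun x => x ^ 2 / 2) (G' := fun x => x) x0 S.cont_W0.continuousOn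
      (fun t _ _ => S.d_W0 t)
      (d_of_poly 0 0 (1 / 2) 0 0 0 0 0 0 (fun x => by ring) (fun x => by ring))
      (by simp [S.W0_zero]) (fun t t0 t1 => w1 t t0.le (t1.le.trans x1))
  -- `x g' ≤ g`, in the form `x W1 ≤ 2 W0`
  have e1 : ∀ x, 0 ≤ x → x ≤ X → 0 ≤ S.W1 x - x * S.W2 x := fun x x0 x1 => by
    have := mono_of (F := fun x => S.W1 x - x * S.W2 x) (F' := fun x => - (x * S.W3 x)) x0
      (S.cont_W1.sub (continuous_id.mul S.cont_W2)).continuousOn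
      (fun t _ _ => ((S.d_W1 t).sub ((hasDerivAt_id t).mul (S.d_W2 t))).congr_deriv
        (by simp only [id]; ring))
      (fun t t0 t1 => by nlinarith [w3 t t0.le (t1.le.trans x1)])
    simpa [S.W1_zero] using this
  have e0 : ∀ x, 0 ≤ x → x ≤ X → x * S.W1 x ≤ 2 * S.W0 x := fun x x0 x1 => by
    have := mono_of (F := fun x => 2 * S.W0 x - x * S.W1 x) (F' := fun x => S.W1 x - x * S.W2 x) x0
      ((continuous_const.mul S.cont_W0).sub (continuous_id.mul S.cont_W1)).continuousOn
      (fun t _ _ => (((S.d_W0 t).const_mul 2).sub ((hasDerivAt_id t).mul (S.d_W1 t))).congr_deriv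
        (by simp only [id]; ring))
      (fun t t0 t1 => e1 t t0.le (t1.le.trans x1))
    simp only [S.W0_zero, zero_mul, mul_zero, sub_zero] at this
    linarith
  have b4 : ∀ x, 0 ≤ x → x ≤ X → S.W4 x ≤ (1 - γ) * (-k + x ^ 2 / 2) := fun x x0 x1 =>
    cmp (G := fun x => (1 - γ) * (-k + x ^ 2 / 2)) (G' := fun x => (1 - γ) * x) x0
      S.cont_W4.continuousOn (fun t t0 t1 => hS.d_W4 t0 (t1.trans_le x1))
      (d_of_poly (-((1 - γ) * k)) 0 ((1 - γ) / 2) 0 0 0 0 0 0 (fun x => by ring) (fun x => by ring))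
      (by simp [S.W4_zero, hk])
      (fun t t0 t1 => by
        have tX := t1.le.trans x1
        have g0 := hS.g_pos t0 tX
        have g2 := hS.g_sq t0.le tX
        have h1 := w0 t t0.le tX
        have h2 := e0 t t0.le tX
        have h3 : S.g t ≤ t := abs_le_of_sq_le_sq' (by linarith) t0.le |>.2
        rw [div_le_iff₀ g0]
        have h5 : S.Q t ≤ (1 - γ) * (S.g t * S.g t) := by simp only [Q]; nlinarith
        have h6 : (1 - γ) * (S.g t * S.g t) ≤ (1 - γ) * (t * S.g t) := by
          have : 0 ≤ 1 - γ := by linarith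
          gcongr
        linarith)
  have b3 : ∀ x, 0 ≤ x → x ≤ X → S.W3 x ≤ (1 - γ) * (-k * x + x ^ 3 / 6) := fun x x0 x1 =>
    cmp (G := fun x => (1 - γ) * (-k * x + x ^ 3 / 6))
      (G' := fun x => (1 - γ) * (-k + x ^ 2 / 2)) x0
      S.cont_W3.continuousOn (fun t _ _ => S.d_W3 t)
      (d_of_poly 0 (-((1 - γ) * k)) 0 ((1 - γ) / 6) 0 0 0 0 0 (fun x => by ring) (fun x => by ring))
      (by simp [S.W3_zero])
      (fun t t0 t1 => b4 t t0.le (t1.le.trans x1))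
  have q2 : ∀ x, 0 ≤ x → x ≤ X →
      S.Q2 x ≤ (1 - γ) * (2 - k * (2 - γ) * x ^ 2 + (3 - γ) * x ^ 4 / 12) := fun x x0 x1 =>
    cmp (G := fun x => (1 - γ) * (2 - k * (2 - γ) * x ^ 2 + (3 - γ) * x ^ 4 / 12))
      (G' := fun x => (1 - γ) * (- (2 * k * (2 - γ) * x) + (3 - γ) * x ^ 3 / 3)) x0
      S.cont_Q2.continuousOn (fun t _ _ => S.d_Q2 t)
      (d_of_poly (2 * (1 - γ)) 0 (-((1 - γ) * k * (2 - γ))) 0 ((1 - γ) * (3 - γ) / 12) 0 0 0 0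
        (fun x => by ring) (fun x => by ring))
      (by rw [S.Q2_zero]; apply le_of_eq; ring)
      (fun t t0 t1 => by
        have h1 := mul_le_mul_of_nonneg_left (b4 t t0.le (t1.le.trans x1)) t0.le
        have h2 := mul_le_mul_of_nonneg_left (b3 t t0.le (t1.le.trans x1))
          (by linarith : 0 ≤ 3 - 2 * γ)
        refine (add_le_add h1 h2).trans (le_of_eq ?_)
        ring)
  have q1 : ∀ x, 0 ≤ x → x ≤ X →
      S.Q1 x ≤ (1 - γ) * (2 * x - k * (2 - γ) * x ^ 3 / 3 + (3 - γ) * x ^ 5 / 60) := fun x x0 x1 =>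
    cmp (G := fun x => (1 - γ) * (2 * x - k * (2 - γ) * x ^ 3 / 3 + (3 - γ) * x ^ 5 / 60))
      (G' := fun x => (1 - γ) * (2 - k * (2 - γ) * x ^ 2 + (3 - γ) * x ^ 4 / 12)) x0
      S.cont_Q1.continuousOn (fun t _ _ => S.d_Q1 t)
      (d_of_poly 0 (2 * (1 - γ)) 0 (-((1 - γ) * k * (2 - γ) / 3)) 0 ((1 - γ) * (3 - γ) / 60) 0 0 0
        (fun x => by ring) (fun x => by ring))
      (by simp [S.Q1_zero])
      (fun t t0 t1 => q2 t t0.le (t1.le.trans x1))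
  refine fun x x0 x1 => ⟨b4 x x0 x1, ?_⟩
  exact cmp (G := fun x => (1 - γ) * (x ^ 2 - k * (2 - γ) * x ^ 4 / 12 + (3 - γ) * x ^ 6 / 360))
      (G' := fun x => (1 - γ) * (2 * x - k * (2 - γ) * x ^ 3 / 3 + (3 - γ) * x ^ 5 / 60)) x0
      S.cont_Q.continuousOn (fun t _ _ => S.d_Q t)
      (d_of_poly 0 0 (1 - γ) 0 (-((1 - γ) * k * (2 - γ) / 12)) 0 ((1 - γ) * (3 - γ) / 360) 0 0
        (fun x => by ring) (fun x => by ring))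
      (by simp [S.Q_zero])
      (fun t t0 t1 => q1 t t0.le (t1.le.trans x1))

/-- No global solution for `κ = -(1-γ)k` with `k² ≥ 90.5/(13+14p)`, `p = 1-γ`. -/
lemma not_global_one (hγ0 : 0 < γ) (hγ1 : γ < 1) {k : ℝ} (hk0 : 0 < k) (hk : κ = -((1 - γ) * k))
    (hk2 : 90.5 ≤ k ^ 2 * (13 + 14 * (1 - γ))) (hS : ∀ R, S.Good R) : False := by
  have hp : 0 < 1 - γ := by linarith
  -- the bound `W4 ≤ p(-k + x²/2)` is strict up to `x² = 2k`; a slightly smaller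
  -- endpoint is taken
  set X := √(1.999 * k) with hX
  have hX2 : X ^ 2 = 1.999 * k := Real.sq_sqrt (by positivity)
  have hX0 : 0 < X := Real.sqrt_pos.2 (by positivity)
  have h4 : ∀ x, 0 ≤ x → x ≤ X → S.W4 x < 0 := fun x x0 x1 => by
    have := boot (φ := fun x => - S.W4 x) (a := 0) (b := X) S.cont_W4.neg.continuousOn
      (by rw [S.W4_zero, hk]; have := mul_pos hp hk0; linarith)
      (fun z z1 z2 z3 => by
        have h1 := (upper_of_W4 hγ0 hγ1 hk (hS z)
          (fun y y0 y1 => by linarith [z3 y y0.le y1]) z z1.le le_rfl).1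
        have h2 : z ^ 2 ≤ X ^ 2 := by gcongr
        have h3 : (1 - γ) * (-k + z ^ 2 / 2) < 0 :=
          mul_neg_of_pos_of_neg hp (by rw [hX2] at h2; linarith)
        show 0 < - S.W4 z
        linarith) x x0 x1
    linarith
  refine lock_of_Q_neg hγ1 hS hX0 h4 ?_
  have h1 := (upper_of_W4 hγ0 hγ1 hk (hS X) (fun y y0 y1 => (h4 y y0.le y1.le).le) X hX0.le
    le_rfl).2
  refine h1.trans_lt (mul_neg_of_pos_of_neg hp ?_)
  have e : X ^ 2 - k * (2 - γ) * X ^ 4 / 12 + (3 - γ) * X ^ 6 / 360 =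
    1.999 * k * (1 - k ^ 2 * ((2 - γ) * 1.999 / 12 - (3 - γ) * 1.999 ^ 2 / 360)) := by
    have : X ^ 4 = (1.999 * k) ^ 2 := by rw [← hX2]; ring
    have h6 : X ^ 6 = (1.999 * k) ^ 3 := by rw [← hX2]; ring
    rw [this, h6, hX2]; ring
  rw [e]
  refine mul_neg_of_pos_of_neg (by positivity) ?_
  have h5 : 0.9995 * (13 + 14 * (1 - γ)) / 90 ≤ (2 - γ) * 1.999 / 12 - (3 - γ) * 1.999 ^ 2 / 360 := by
    norm_num; linarith
  have h6 := mul_le_mul_of_nonneg_left h5 (sq_nonneg k)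
  linarith

/-- No global solution for `κ = -(1-γ)k` with `k² ≥ 2.3` when `1-γ ≥ 0.9`. -/
lemma not_global_two (hγ0 : 0 < γ) (hγ1 : γ ≤ 0.1) {k : ℝ} (hk0 : 0 < k) (hk : κ = -((1 - γ) * k))
    (hk2 : 2.3 ≤ k ^ 2) (hS : ∀ R, S.Good R) : False := by
  have hγ1' : γ < 1 := by linarith
  have hp : 0 < 1 - γ := by linarith
  by_cases H : ∃ a, 0 < a ∧ (∀ y, 0 ≤ y → y ≤ a → S.W4 y < 0) ∧ S.Q a < 0
  · obtain ⟨a, a0, a1, a2⟩ := H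
    exact lock_of_Q_neg hγ1' hS a0 a1 a2
  push Not at H
  set X := √(7.68 / k) with hX
  have hX2 : X ^ 2 = 7.68 / k := Real.sq_sqrt (by positivity)
  have hX0 : 0 < X := Real.sqrt_pos.2 (by positivity)
  -- `σ = k x²/12` and the polynomial bound for `Q` in terms of `σ`
  have sig : ∀ x, 0 ≤ x → x ≤ X → k * x ^ 2 / 12 ≤ 0.64 := fun x x0 x1 => by
    have : x ^ 2 ≤ X ^ 2 := by gcongr
    rw [hX2, le_div_iff₀ hk0] at this
    linarith
  have Qup : ∀ x σ, 0 < x → k * x ^ 2 / 12 = σ → σ ≤ 0.64 → 0 ≤ σ →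
      (1 - γ) * (x ^ 2 - k * (2 - γ) * x ^ 4 / 12 + (3 - γ) * x ^ 6 / 360) ≤
        (1 - γ) * (x ^ 2 * (1 - 1.9 * σ + 0.50435 * σ ^ 2)) := by
    intro x σ x0 hσ h1 h0
    refine mul_le_mul_of_nonneg_left ?_ hp.le
    have hx4 : x ^ 4 ≤ 144 * σ ^ 2 / 2.3 := by
      rw [le_div_iff₀ (by norm_num), ← hσ]
      nlinarith [mul_le_mul_of_nonneg_left hk2 (by positivity : 0 ≤ x ^ 4)]
    have e1 : x ^ 2 - k * (2 - γ) * x ^ 4 / 12 + (3 - γ) * x ^ 6 / 360 =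
      x ^ 2 * (1 - (2 - γ) * σ + (3 - γ) * x ^ 4 / 360) := by rw [← hσ]; ring
    rw [e1]
    refine mul_le_mul_of_nonneg_left ?_ (by positivity)
    have h3 := mul_le_mul_of_nonneg_left hx4 (by linarith : 0 ≤ 3 - γ)
    nlinarith [mul_nonneg h0 (by linarith : 0 ≤ 0.64 - σ), mul_nonneg (by linarith : 0 ≤ 0.1 - γ) h0,
      mul_nonneg (mul_nonneg h0 (by linarith : 0 ≤ 0.64 - σ)) (by linarith : 0 ≤ 0.1 - γ)]
  have h4 : ∀ x, 0 ≤ x → x ≤ X → S.W4 x < 0 := fun x x0 x1 => by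
    have := boot (φ := fun x => - S.W4 x) (a := 0) (b := X) S.cont_W4.neg.continuousOn
      (by rw [S.W4_zero, hk]; have := mul_pos hp hk0; linarith)
      (fun z z1 z2 z3 => by
        have n4 : ∀ y, 0 ≤ y → y < z → S.W4 y < 0 := fun y y0 y1 => by linarith [z3 y y0 y1]
        have qn : ∀ y, 0 < y → y < z → 0 ≤ S.Q y := fun y y0 y1 =>
          H y y0 (fun t t0 t1 => n4 t t0 (t1.trans_lt y1))
        have l4 : ∀ y, 0 ≤ y → y ≤ z → κ ≤ S.W4 y := fun y y0 y1 => by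
          have := mono_of y0 S.cont_W4.continuousOn
            (fun t t0 t1 => (hS y).d_W4 t0 t1) (fun t t0 t1 => div_nonneg (qn t t0 (t1.trans_le y1))
              ((hS t).g_pos t0 le_rfl).le)
          rwa [S.W4_zero] at this
        have lo := lower_of_W4 (S := S) (fun y y0 (y1 : y < z) => l4 y y0.le y1.le)
        have up := upper_of_W4 hγ0 hγ1' hk (hS z) (fun y y0 y1 => (n4 y y0.le y1).le)
        have main : S.W4 z ≤ (1 - γ) * (-k + 1.01 * z ^ 2 / 2 - 0.3945 * k * z ^ 4 / 24
            - 0.52855 * k ^ 2 * z ^ 6 / 288 + 0.13869625 * k ^ 3 * z ^ 8 / 3456) := by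
          refine cmp (G := fun z => (1 - γ) * (-k + 1.01 * z ^ 2 / 2 - 0.3945 * k * z ^ 4 / 24
            - 0.52855 * k ^ 2 * z ^ 6 / 288 + 0.13869625 * k ^ 3 * z ^ 8 / 3456))
            (G' := fun z => (1 - γ) * (1.01 * z - 0.3945 * k * z ^ 3 / 6
            - 0.52855 * k ^ 2 * z ^ 5 / 48 + 0.13869625 * k ^ 3 * z ^ 7 / 432)) z1.le
            S.cont_W4.continuousOn (fun t t0 t1 => (hS z).d_W4 t0 t1)
            (d_of_poly (-((1 - γ) * k)) 0 ((1 - γ) * 1.01 / 2) 0 (-((1 - γ) * 0.3945 * k / 24)) 0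
              (-((1 - γ) * 0.52855 * k ^ 2 / 288)) 0 ((1 - γ) * 0.13869625 * k ^ 3 / 3456)
              (fun x => by ring) (fun x => by ring)) (by simp [S.W4_zero, hk])
            (fun t t0 t1 => ?_)
          set σ := k * t ^ 2 / 12 with hσ
          have s0 : 0 ≤ σ := by positivity
          have s1 : σ ≤ 0.64 := sig t t0.le (t1.le.trans z2)
          have g0 := (hS z).g_pos t0 t1.le
          have g2 := (hS z).g_sq t0.le t1.le
          have w0 := (lo t t0.le t1.le).2.2.2
          have q := (up t t0.le t1.le).2.trans (Qup t σ t0 hσ.symm s1 s0)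
          -- `g ≥ x / (1 + 1.1 σ)`
          have hg : t ≤ S.g t * (1 + 1.1 * σ) := by
            refine abs_le_of_sq_le_sq' ?_ (by positivity) |>.2
            have h1 : t ^ 2 * (1 - σ) ≤ S.g t ^ 2 := by
              rw [g2]
              have : t ^ 2 * (1 - σ) ≤ 2 * (t ^ 2 / 2 + κ * t ^ 4 / 24) := by
                rw [hk, hσ]
                nlinarith [mul_nonneg (mul_nonneg hγ0.le hk0.le) (by positivity : 0 ≤ t ^ 4)]
              linarith
            have h2 : 1 ≤ (1 - σ) * (1 + 1.1 * σ) ^ 2 := by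
              nlinarith [mul_nonneg s0 (by linarith : 0 ≤ 0.64 - σ),
                mul_nonneg (mul_nonneg s0 s0) (by linarith : 0 ≤ 0.64 - σ)]
            calc t ^ 2 = t ^ 2 * 1 := by ring
              _ ≤ t ^ 2 * ((1 - σ) * (1 + 1.1 * σ) ^ 2) := by gcongr
              _ = (t ^ 2 * (1 - σ)) * (1 + 1.1 * σ) ^ 2 := by ring
              _ ≤ S.g t ^ 2 * (1 + 1.1 * σ) ^ 2 := by gcongr
              _ = _ := by ring
          have hU : 0 ≤ 1.01 - 1.9 * σ + 0.50435 * σ ^ 2 := by nlinarith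
          rw [div_le_iff₀ g0]
          calc S.Q t ≤ (1 - γ) * (t ^ 2 * (1.01 - 1.9 * σ + 0.50435 * σ ^ 2)) := by
                refine q.trans (mul_le_mul_of_nonneg_left ?_ hp.le)
                gcongr; norm_num
            _ = (1 - γ) * (t * (1.01 - 1.9 * σ + 0.50435 * σ ^ 2)) * t := by ring
            _ ≤ (1 - γ) * (t * (1.01 - 1.9 * σ + 0.50435 * σ ^ 2)) * (S.g t * (1 + 1.1 * σ)) :=
                mul_le_mul_of_nonneg_left hg (by positivity)
            _ = _ := by rw [hσ]; ring
        show 0 < - S.W4 z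
        have hneg : (1 - γ) * (-k + 1.01 * z ^ 2 / 2 - 0.3945 * k * z ^ 4 / 24
            - 0.52855 * k ^ 2 * z ^ 6 / 288 + 0.13869625 * k ^ 3 * z ^ 8 / 3456) < 0 := by
          refine mul_neg_of_pos_of_neg hp ?_
          set σ := k * z ^ 2 / 12 with hσ
          have s0 : 0 ≤ σ := by positivity
          have s1 : σ ≤ 0.64 := sig z z1.le z2
          have hJ : 1.01 * σ - 0.3945 * σ ^ 2 - 0.52855 * σ ^ 3 + 0.13869625 * σ ^ 4 ≤ 0.38 := by
            nlinarith [mul_nonneg s0 (by linarith : 0 ≤ 0.64 - σ), sq_nonneg (0.64 - σ),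
              mul_nonneg (mul_nonneg s0 s0) (by linarith : 0 ≤ 0.64 - σ), sq_nonneg σ,
              mul_nonneg s0 (sq_nonneg (0.64 - σ)), mul_nonneg (sq_nonneg σ) (sq_nonneg (0.64 - σ))]
          have e : k * (-k + 1.01 * z ^ 2 / 2 - 0.3945 * k * z ^ 4 / 24
            - 0.52855 * k ^ 2 * z ^ 6 / 288 + 0.13869625 * k ^ 3 * z ^ 8 / 3456) =
            - k ^ 2 + 6 * (1.01 * σ - 0.3945 * σ ^ 2 - 0.52855 * σ ^ 3 + 0.13869625 * σ ^ 4) := by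
            rw [hσ]; ring
          by_contra hcon
          have := mul_nonneg hk0.le (not_lt.1 hcon)
          rw [e] at this
          linarith
        linarith) x x0 x1
    linarith
  have h1 := (upper_of_W4 hγ0 hγ1' hk (hS X) (fun y y0 y1 => (h4 y y0.le y1.le).le) X hX0.le
    le_rfl).2
  have hs : k * X ^ 2 / 12 = 0.64 := by rw [hX2]; field_simp; norm_num
  have h2 := Qup X 0.64 hX0 hs le_rfl (by norm_num)
  have h3 : (1 - γ) * (X ^ 2 * (1 - 1.9 * 0.64 + 0.50435 * 0.64 ^ 2)) < 0 :=
    mul_neg_of_pos_of_neg hp (mul_neg_of_pos_of_neg (by positivity) (by norm_num))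
  linarith [H X hX0 h4]

end Prof

open Prof

/-! ### The critical parameter -/

/-- The critical parameter `κ = -K`: the largest one in `(-∞, 0]` outside the shooting set, with
quantitative bounds on `K`. -/
lemma exists_crit {γ : ℝ} (hγ0 : 0 < γ) (hγ1 : γ < 1) :
    ∃ K, 0 < K ∧ ¬ InA γ (-K) ∧ (∀ κ, -K < κ → κ ≤ 0 → InA γ κ) ∧
      (γ ≤ 0.1 → K ^ 2 ≤ 2.3 * (1 - γ) ^ 2) ∧
      (0.1 < γ → K ^ 2 * (13 + 14 * (1 - γ)) ≤ 90.5 * (1 - γ) ^ 2) := by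
  have hp : 0 < 1 - γ := by linarith
  have hq : 0 < 13 + 14 * (1 - γ) := by linarith
  obtain ⟨l, hl0, hl1, hl2, hl3⟩ : ∃ l : ℝ, 0 < l ∧ (γ ≤ 0.1 → l = 2.3) ∧
      (0.1 < γ → l = 90.5 / (13 + 14 * (1 - γ))) ∧ True := by
    by_cases h : γ ≤ 0.1
    · exact ⟨2.3, by norm_num, fun _ => rfl, fun h' => absurd h (not_le.2 h'), trivial⟩
    · exact ⟨90.5 / (13 + 14 * (1 - γ)), by positivity, fun h' => absurd h' h, fun _ => rfl,
        trivial⟩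
  have hs : √l ^ 2 = l := Real.sq_sqrt hl0.le
  have hs0 : 0 < √l := Real.sqrt_pos.2 hl0
  set κ₁ := -((1 - γ) * √l) with hκ₁
  have n1 : ¬ InA γ κ₁ := by
    intro hA
    obtain ⟨S, hS, -⟩ := Prof.glue hγ0 hγ1 fun R hR => hA.global hγ0 hγ1 hR
    by_cases h : γ ≤ 0.1
    · exact not_global_two hγ0 h hs0 hκ₁ (by rw [hs, hl1 h]) hS
    · refine not_global_one hγ0 hγ1 hs0 hκ₁ ?_ hS
      rw [hs, hl2 (not_le.1 h), div_mul_cancel₀ _ hq.ne']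
  have hκ₁0 : κ₁ < 0 := by rw [hκ₁]; have := mul_pos hp hs0; linarith
  set s : Set ℝ := Icc κ₁ 0 ∩ {κ | ¬ InA γ κ} with hsd
  have hop : IsOpen {κ | InA γ κ} := isOpen_iff_mem_nhds.2 fun κ hκ =>
    Prof.Good.isOpen_aux hγ0 hγ1 hκ
  have hcl : IsClosed s := isClosed_Icc.inter hop.isClosed_compl
  have hne : s.Nonempty := ⟨κ₁, ⟨le_rfl, hκ₁0.le⟩, n1⟩
  have hbd : BddAbove s := ⟨0, fun y hy => hy.1.2⟩
  have hm : sSup s ∈ s := hcl.csSup_mem hne hbd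
  have hneg : sSup s < 0 := lt_of_le_of_ne hm.1.2 fun h => hm.2 (by
    rw [h]; exact InA_zero hγ0 hγ1)
  have hK2 : (-sSup s) ^ 2 ≤ (1 - γ) ^ 2 * l := by
    have h1 : -sSup s ≤ (1 - γ) * √l := by have := hm.1.1; rw [hκ₁] at this; linarith
    calc (-sSup s) ^ 2 ≤ ((1 - γ) * √l) ^ 2 := by
          have : 0 ≤ -sSup s := by linarith
          gcongr
      _ = _ := by rw [mul_pow, hs]
  refine ⟨-sSup s, by linarith, by rw [neg_neg]; exact hm.2, fun κ h1 h2 => ?_, fun h => ?_,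
    fun h => ?_⟩
  · rw [neg_neg] at h1
    by_contra hA
    exact absurd (le_csSup hbd (show κ ∈ s from ⟨⟨hm.1.1.trans h1.le, h2⟩, hA⟩)) (not_le.2 h1)
  · rw [hl1 h] at hK2; linarith
  · rw [hl2 h] at hK2
    calc _ ≤ (1 - γ) ^ 2 * (90.5 / (13 + 14 * (1 - γ))) * (13 + 14 * (1 - γ)) := by gcongr
      _ = _ := by field_simp

namespace Prof
variable {γ κ : ℝ} {S : Prof γ κ}

/-- The quantity `W1 W3 - W2²/2 + c W0 - x g³/3`, increasing along solutions. -/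
noncomputable def H (S : Prof γ κ) (x : ℝ) : ℝ :=
  S.W1 x * S.W3 x - S.W2 x ^ 2 / 2 + S.c x * S.W0 x - x * S.g x ^ 3 / 3

lemma H_zero : S.H 0 = -1 / 2 := by simp [H, S.W1_zero, S.W2_zero, S.W0_zero]; norm_num

lemma cont_H : Continuous S.H := by
  have := S.cont_W0; have := S.cont_W1; have := S.cont_W2; have := S.cont_W3
  have := S.cont_c; have := S.cont_g
  unfold H; fun_prop

lemma Good.d_H {R : ℝ} (hS : S.Good R) {x : ℝ} (h0 : 0 < x) (h1 : x < R) :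
    HasDerivAt S.H ((1 + 3 * γ) / 6 * S.g x ^ 3) x := by
  have := ((((S.d_W1 x).mul (S.d_W3 x)).sub (((S.d_W2 x).pow 2).div_const 2)).add
    ((S.d_c x).mul (S.d_W0 x))).sub
    (((hasDerivAt_id x).mul ((hS.d_g h0 h1).pow 3)).div_const 3)
  refine HasDerivAt.congr_deriv this ?_
  have hg := (hS.g_pos h0 h1.le).ne'
  have h2 := hS.g_sq h0.le h1.le
  simp only [S.W4_eq, id, Pi.pow_apply]
  push_cast
  field_simp
  linear_combination (-9 * (1 + γ) * S.g x) * h2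

/-- If `W4 ≥ -K` on `[0, X]`, then `H(X)` is bounded below through `∫ g³`, and `h` is bounded
below. -/
lemma H_lower {K t X : ℝ} (hγ0 : 0 < γ) (hK : 0 < K) (hX : 0 < X) (ht : K * X ^ 2 / 12 = t)
    (ht1 : t ≤ 0.88) (hS : S.Good X) (h4 : ∀ y, 0 < y → y < X → -K ≤ S.W4 y) :
    -1 / 2 + (1 + 3 * γ) * (12 / K ^ 2) * (t ^ 2 / 2 - t ^ 3 / 2 + 3 * t ^ 4 / 32) ≤ S.H X ∧
      ∀ x, 0 ≤ x → x ≤ X → 0.12 ≤ S.h x ^ 2 := by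
  have tau : ∀ x, 0 ≤ x → x ≤ X → K * x ^ 2 / 12 ≤ t := fun x x0 x1 => by
    rw [← ht]; gcongr
  have g2 : ∀ x, 0 ≤ x → x ≤ X → x ^ 2 * (1 - K * x ^ 2 / 12) ≤ S.g x ^ 2 := by
    intro x x0 x1
    rw [hS.g_sq x0 x1]
    have := (lower_of_W4 h4 x x0 x1).2.2.2
    linarith
  constructor
  · have e : -1 / 2 + (1 + 3 * γ) * (12 / K ^ 2) * (t ^ 2 / 2 - t ^ 3 / 2 + 3 * t ^ 4 / 32) =
        -1 / 2 + (1 + 3 * γ) / 6 * (X ^ 4 / 4 - K * X ^ 6 / 48 + K ^ 2 * X ^ 8 / 3072) := by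
      rw [← ht]; field_simp; ring
    rw [e]
    refine cmp' (G := fun X => -1 / 2 + (1 + 3 * γ) / 6 * (X ^ 4 / 4 - K * X ^ 6 / 48
        + K ^ 2 * X ^ 8 / 3072)) (G' := fun X => (1 + 3 * γ) / 6 * (X ^ 3 - K * X ^ 5 / 8
        + K ^ 2 * X ^ 7 / 384)) hX.le S.cont_H.continuousOn (fun x x0 x1 => hS.d_H x0 x1)
      (d_of_poly (-1 / 2) 0 0 0 ((1 + 3 * γ) / 24) 0 (-((1 + 3 * γ) * K / 288)) 0
        ((1 + 3 * γ) * K ^ 2 / 18432) (fun x => by ring) (fun x => by ring))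
      (by simp [H_zero]) (fun x x0 x1 => ?_)
    refine mul_le_mul_of_nonneg_left ?_ (by positivity)
    set τ := K * x ^ 2 / 12 with hτ
    have τ0 : 0 ≤ τ := by positivity
    have τ1 : τ ≤ 0.88 := (tau x x0.le x1.le).trans ht1
    have h1 := g2 x x0.le x1.le
    rw [← hτ] at h1
    have h0 : 0 ≤ x ^ 2 * (1 - τ) := mul_nonneg (by positivity) (by linarith)
    have h2 : (x ^ 2 * (1 - τ)) ^ 3 ≤ (S.g x ^ 2) ^ 3 := by gcongr
    have e1 : x ^ 3 - K * x ^ 5 / 8 + K ^ 2 * x ^ 7 / 384 =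
        x ^ 3 * (1 - 1.5 * τ + 0.375 * τ ^ 2) := by rw [hτ]; ring
    rw [e1]
    -- `(1-τ)^{3/2} ≥ 1 - 3τ/2 + 3τ²/8`, compared after squaring
    refine abs_le_of_sq_le_sq' ?_ (pow_nonneg (hS.g_pos x0 x1.le).le 3) |>.2
    have h3 : (1 - 1.5 * τ + 0.375 * τ ^ 2) ^ 2 ≤ (1 - τ) ^ 3 := by
      have : 0 ≤ τ ^ 3 * (0.125 - 0.140625 * τ) := mul_nonneg (by positivity) (by linarith)
      nlinarith
    calc (x ^ 3 * (1 - 1.5 * τ + 0.375 * τ ^ 2)) ^ 2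
        = x ^ 6 * (1 - 1.5 * τ + 0.375 * τ ^ 2) ^ 2 := by ring
      _ ≤ x ^ 6 * (1 - τ) ^ 3 := by gcongr
      _ = (x ^ 2 * (1 - τ)) ^ 3 := by ring
      _ ≤ _ := h2
      _ = _ := by ring
  · intro x x0 x1
    rcases x0.eq_or_lt with h | h
    · rw [← h, hS.h_zero hX.le]; norm_num
    · have h1 := g2 x x0 x1
      have h2 := tau x x0 x1
      rw [g, mul_pow] at h1
      have := le_of_mul_le_mul_left h1 (by positivity)
      linarith

/-- Lower bound for `W4` by continuation, up to `K X²/12 = (1-γ)/(2-γ)`. -/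
lemma W4_ge_one {K t X : ℝ} (hγ1 : γ < 1) (hK : 0 < K) (ht : K * X ^ 2 / 12 = t)
    (ht1 : t = (1 - γ) / (2 - γ)) (hκ : -K < κ) (hS : S.Good X) :
    ∀ y, 0 < y → y < X → -K ≤ S.W4 y := by
  have h2 : 0 < 2 - γ := by linarith
  intro y y0 y1
  have := boot (φ := fun x => S.W4 x + K) (a := 0) (b := X)
    (S.cont_W4.add continuous_const).continuousOn (by rw [S.W4_zero]; linarith)
    (fun z z1 z2 z3 => by
      have lo := lower_of_W4 (S := S) (fun y y0 (y1 : y < z) =>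
        (by linarith [z3 y y0.le y1] : -K ≤ S.W4 y))
      have q2 : ∀ x, 0 ≤ x → x ≤ z → 2 * (1 - γ) - (2 - γ) * K * x ^ 2 ≤ S.Q2 x := fun x x0 x1 =>
        cmp' (G := fun x => 2 * (1 - γ) - (2 - γ) * K * x ^ 2)
          (G' := fun x => -(2 * (2 - γ) * K * x)) x0 S.cont_Q2.continuousOn (fun t _ _ => S.d_Q2 t)
          (d_of_poly (2 * (1 - γ)) 0 (-((2 - γ) * K)) 0 0 0 0 0 0 (fun x => by ring)
            (fun x => by ring)) (by rw [S.Q2_zero]; apply le_of_eq; ring)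
          (fun t t0 t1 => by
            have a1 := mul_le_mul_of_nonneg_left
              (by linarith [z3 t t0.le (t1.trans_le x1)] : -K ≤ S.W4 t) t0.le
            have a2 := mul_le_mul_of_nonneg_left (lo t t0.le (t1.le.trans x1)).1
              (by linarith : 0 ≤ 3 - 2 * γ)
            refine le_trans (le_of_eq ?_) (add_le_add a1 a2)
            ring)
      have q1 : ∀ x, 0 ≤ x → x ≤ z → 2 * (1 - γ) * x - (2 - γ) * K * x ^ 3 / 3 ≤ S.Q1 x :=
        fun x x0 x1 =>
        cmp' (G := fun x => 2 * (1 - γ) * x - (2 - γ) * K * x ^ 3 / 3)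
          (G' := fun x => 2 * (1 - γ) - (2 - γ) * K * x ^ 2) x0 S.cont_Q1.continuousOn
          (fun t _ _ => S.d_Q1 t)
          (d_of_poly 0 (2 * (1 - γ)) 0 (-((2 - γ) * K / 3)) 0 0 0 0 0 (fun x => by ring)
            (fun x => by ring)) (by simp [S.Q1_zero])
          (fun t t0 t1 => q2 t t0.le (t1.le.trans x1))
      have q0 : ∀ x, 0 ≤ x → x ≤ z → (1 - γ) * x ^ 2 - (2 - γ) * K * x ^ 4 / 12 ≤ S.Q x :=
        fun x x0 x1 =>
        cmp' (G := fun x => (1 - γ) * x ^ 2 - (2 - γ) * K * x ^ 4 / 12)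
          (G' := fun x => 2 * (1 - γ) * x - (2 - γ) * K * x ^ 3 / 3) x0 S.cont_Q.continuousOn
          (fun t _ _ => S.d_Q t)
          (d_of_poly 0 0 (1 - γ) 0 (-((2 - γ) * K / 12)) 0 0 0 0 (fun x => by ring)
            (fun x => by ring)) (by simp [S.Q_zero])
          (fun t t0 t1 => q1 t t0.le (t1.le.trans x1))
      have := mono_of z1.le S.cont_W4.continuousOn (fun t t0 t1 => hS.d_W4 t0 (t1.trans_le z2))
        (fun x x0 x1 => by
          refine div_nonneg ((?_ : (0:ℝ) ≤ _).trans (q0 x x0.le x1.le))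
            (hS.g_pos x0 (x1.le.trans z2)).le
          have h3 : K * x ^ 2 / 12 ≤ (1 - γ) / (2 - γ) := by
            rw [← ht1, ← ht]; have := x1.le.trans z2; gcongr
          rw [le_div_iff₀ h2] at h3
          have : 0 ≤ x ^ 2 * ((1 - γ) - K * x ^ 2 / 12 * (2 - γ)) :=
            mul_nonneg (by positivity) (by linarith)
          linarith)
      rw [S.W4_zero] at this
      show 0 < S.W4 z + K
      linarith) y y0.le y1.le
  linarith

set_option maxHeartbeats 1000000 in
/-- Lower bound for `W4` by continuation of two-sided bounds `m < h < μ`, for `K` not too small. -/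
lemma W4_ge_two {K t X t₀ : ℝ} (hγ0 : 0 < γ) (hγ1 : γ < 1) (hK : 0 < K) (hX : 0 < X)
    (ht : K * X ^ 2 / 12 = t) (ht0 : t₀ = 1 - (1 + γ) ^ 2 / 4) (ht1 : t = 0.97 * t₀)
    (hKt : t₀ ^ 2 ≤ K ^ 2) (hκ : -K < κ) (hκ' : κ < -(0.9 * K)) (hS : S.Good X) :
    ∀ y, 0 < y → y < X → -K ≤ S.W4 y := by
  have t00 : 0 < t₀ := by rw [ht0]; nlinarith
  have t01 : t₀ ≤ 0.75 := by rw [ht0]; nlinarith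
  set μ := √(1 + 0.03 * t₀) with hμ
  have μ2 : μ ^ 2 = 1 + 0.03 * t₀ := Real.sq_sqrt (by positivity)
  have μ0 : 0 < μ := Real.sqrt_pos.2 (by positivity)
  have μ1 : 1 < μ := by nlinarith
  have μ3 : μ ≤ 1.02 := by nlinarith
  set m := (1 + γ) / 2 * μ with hm
  have m2 : m ^ 2 < 1 - t := by
    have : m ^ 2 = (1 - t₀) * (1 + 0.03 * t₀) := by rw [hm, mul_pow, μ2, ht0]; ring
    rw [this, ht1]; nlinarith
  have m0 : 0 < m := by positivity
  have t0 : 0 < t := by rw [ht1]; positivity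
  have m1 : m < 1 := by nlinarith
  have kt : 0.8 * μ * t₀ * t ≤ -κ * K := by
    have : 0.9 * K * K ≤ -κ * K := by gcongr; linarith
    rw [ht1]
    nlinarith [mul_le_mul_of_nonneg_right μ3 (sq_nonneg t₀)]
  have w4 : ∀ z, 0 ≤ z → z ≤ X → (∀ y, 0 ≤ y → y < z → m < S.h y ∧ S.h y < μ) →
      ∀ x, 0 ≤ x → x ≤ z → κ ≤ S.W4 x ∧ S.W4 x ≤ κ + μ * t₀ * x ^ 2 := by
    intro z z0 zX hb x x0 x1
    have hm1 : mom S.h 1 x ≤ μ * x ^ 2 / 2 :=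
      cmp (G := fun x => μ * x ^ 2 / 2) (G' := fun x => μ * x) x0
        (fun y _ => (mom_hasDerivAt S.cont 1 y).continuousAt.continuousWithinAt)
        (fun y _ _ => mom_hasDerivAt S.cont 1 y)
        (d_of_poly 0 0 (μ / 2) 0 0 0 0 0 0 (fun x => by ring) (fun x => by ring))
        (by simp [mom_zero]) (fun y y0 y1 => by nlinarith [(hb y y0.le (y1.trans_le x1)).2])
    have hm2 : m * x ^ 2 / 2 ≤ mom S.h 1 x :=
      cmp' (G := fun x => m * x ^ 2 / 2) (G' := fun x => m * x) x0
        (fun y _ => (mom_hasDerivAt S.cont 1 y).continuousAt.continuousWithinAt)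
        (fun y _ _ => mom_hasDerivAt S.cont 1 y)
        (d_of_poly 0 0 (m / 2) 0 0 0 0 0 0 (fun x => by ring) (fun x => by ring))
        (by simp [mom_zero]) (fun y y0 y1 => by nlinarith [(hb y y0.le (y1.trans_le x1)).1])
    have hh : m ≤ S.h x ∧ S.h x ≤ μ := by
      rcases x1.lt_or_eq with h | h
      · exact ⟨(hb x x0 h).1.le, (hb x x0 h).2.le⟩
      · rcases x0.eq_or_lt with h' | h'
        · rw [← h', hS.h_zero hX.le]; exact ⟨m1.le, μ1.le⟩
        have hmem : x ∈ closure (Ico 0 x) := by rw [closure_Ico h'.ne]; exact ⟨x0, le_rfl⟩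
        exact ⟨le_on_closure (f := fun _ => m) (fun y hy => (hb y hy.1 (hy.2.trans_eq h)).1.le)
          continuousOn_const S.cont.continuousOn hmem,
          le_on_closure (g := fun _ => μ) (fun y hy => (hb y hy.1 (hy.2.trans_eq h)).2.le)
          S.cont.continuousOn continuousOn_const hmem⟩
    have a1 := mul_le_mul_of_nonneg_left hm1 (by linarith : 0 ≤ 1 + γ)
    have a2 := mul_le_mul_of_nonneg_left hm2 (by linarith : 0 ≤ 1 + γ)
    have a3 := mul_le_mul_of_nonneg_left hh.1 (sq_nonneg x)
    have a4 := mul_le_mul_of_nonneg_left hh.2 (sq_nonneg x)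
    simp only [W4]
    constructor
    · have : x ^ 2 * m = (1 + γ) * (μ * x ^ 2 / 2) := by rw [hm]; ring
      linarith
    · have : μ * t₀ * x ^ 2 = x ^ 2 * μ - (1 + γ) * (m * x ^ 2 / 2) := by rw [hm, ht0]; ring
      linarith
  have key := boot (φ := fun x => min (S.h x - m) (μ - S.h x)) (a := 0) (b := X)
    (by have := S.cont; fun_prop) (by
      rw [hS.h_zero hX.le]; exact lt_min (by linarith) (by linarith))
    (fun z z1 z2 z3 => by
      have hb : ∀ y, 0 ≤ y → y < z → m < S.h y ∧ S.h y < μ := fun y y0 y1 => by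
        have := lt_min_iff.1 (z3 y y0 y1)
        exact ⟨by linarith [this.1], by linarith [this.2]⟩
      have w := w4 z z1.le z2 hb
      have lo := (lower_of_W4 (S := S) (fun y y0 (y1 : y < z) => (w y y0.le y1.le).1) z z1.le
        le_rfl).2.2.2
      have u3 : ∀ x, 0 ≤ x → x ≤ z → S.W3 x ≤ κ * x + μ * t₀ * x ^ 3 / 3 := fun x x0 x1 =>
        cmp (G := fun x => κ * x + μ * t₀ * x ^ 3 / 3) (G' := fun x => κ + μ * t₀ * x ^ 2) x0
          S.cont_W3.continuousOn (fun t _ _ => S.d_W3 t)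
          (d_of_poly 0 κ 0 (μ * t₀ / 3) 0 0 0 0 0 (fun x => by ring) (fun x => by ring))
          (by simp [S.W3_zero]) (fun t t0 t1 => (w t t0.le (t1.le.trans x1)).2)
      have u2 : ∀ x, 0 ≤ x → x ≤ z → S.W2 x ≤ 1 + κ * x ^ 2 / 2 + μ * t₀ * x ^ 4 / 12 :=
        fun x x0 x1 =>
        cmp (G := fun x => 1 + κ * x ^ 2 / 2 + μ * t₀ * x ^ 4 / 12)
          (G' := fun x => κ * x + μ * t₀ * x ^ 3 / 3) x0
          S.cont_W2.continuousOn (fun t _ _ => S.d_W2 t)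
          (d_of_poly 1 0 (κ / 2) 0 (μ * t₀ / 12) 0 0 0 0 (fun x => by ring) (fun x => by ring))
          (by simp [S.W2_zero]) (fun t t0 t1 => u3 t t0.le (t1.le.trans x1))
      have u1 : ∀ x, 0 ≤ x → x ≤ z → S.W1 x ≤ x + κ * x ^ 3 / 6 + μ * t₀ * x ^ 5 / 60 :=
        fun x x0 x1 =>
        cmp (G := fun x => x + κ * x ^ 3 / 6 + μ * t₀ * x ^ 5 / 60)
          (G' := fun x => 1 + κ * x ^ 2 / 2 + μ * t₀ * x ^ 4 / 12) x0
          S.cont_W1.continuousOn (fun t _ _ => S.d_W1 t)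
          (d_of_poly 0 1 0 (κ / 6) 0 (μ * t₀ / 60) 0 0 0 (fun x => by ring) (fun x => by ring))
          (by simp [S.W1_zero]) (fun t t0 t1 => u2 t t0.le (t1.le.trans x1))
      have u0 : S.W0 z ≤ z ^ 2 / 2 + κ * z ^ 4 / 24 + μ * t₀ * z ^ 6 / 360 :=
        cmp (G := fun x => x ^ 2 / 2 + κ * x ^ 4 / 24 + μ * t₀ * x ^ 6 / 360)
          (G' := fun x => x + κ * x ^ 3 / 6 + μ * t₀ * x ^ 5 / 60) z1.le
          S.cont_W0.continuousOn (fun t _ _ => S.d_W0 t)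
          (d_of_poly 0 0 (1 / 2) 0 (κ / 24) 0 (μ * t₀ / 360) 0 0 (fun x => by ring)
            (fun x => by ring))
          (by simp [S.W0_zero]) (fun t t0 t1 => u1 t t0.le t1.le)
      have e := hS.g_sq z1.le z2
      rw [g, mul_pow] at e
      have hp := (hS z z1.le z2).1
      have zt : K * z ^ 2 / 12 ≤ t := by rw [← ht]; gcongr
      have lo2 : 1 - t ≤ S.h z ^ 2 := by
        have h1 : z ^ 2 * (1 + κ * z ^ 2 / 12) ≤ z ^ 2 * S.h z ^ 2 := by linarith
        have h2 := le_of_mul_le_mul_left h1 (by positivity)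
        nlinarith [mul_nonneg (by linarith : 0 ≤ K + κ) (sq_nonneg z)]
      have up2 : S.h z ^ 2 ≤ 1 := by
        have h1 : z ^ 2 * S.h z ^ 2 ≤ z ^ 2 * (1 + κ * z ^ 2 / 12 + μ * t₀ * z ^ 4 / 180) := by
          linarith
        have h2 := le_of_mul_le_mul_left h1 (by positivity)
        have h3 : μ * t₀ * z ^ 2 / 15 ≤ -κ := by
          have h4 : μ * t₀ * (K * z ^ 2 / 12) ≤ μ * t₀ * t := by gcongr
          have h5 : (μ * t₀ * z ^ 2 / 15) * K ≤ -κ * K := by linarith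
          exact le_of_mul_le_mul_right h5 hK
        nlinarith [mul_le_mul_of_nonneg_right h3 (sq_nonneg z)]
      exact lt_min (by nlinarith) (by nlinarith))
  intro y y0 y1
  have := (w4 X hX.le le_rfl (fun y y0 y1 => by
    have := lt_min_iff.1 (key y y0 y1.le)
    exact ⟨by linarith [this.1], by linarith [this.2]⟩) y y0.le y1.le).1
  linarith

end Prof

/-- For `κ` slightly above the critical value, `H` becomes positive at a uniform point. -/
lemma exists_H_pos {γ K : ℝ} (hγ0 : 0 < γ) (hγ1 : γ < 1) (hK : 0 < K)
    (hK1 : γ ≤ 0.1 → K ^ 2 ≤ 2.3 * (1 - γ) ^ 2)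
    (hK2 : 0.1 < γ → K ^ 2 * (13 + 14 * (1 - γ)) ≤ 90.5 * (1 - γ) ^ 2) :
    ∃ X η : ℝ, 0 < X ∧ 0 < η ∧ ∀ κ, -K < κ → κ < -(0.9 * K) → ∀ S : Prof γ κ, S.Good X →
      η ≤ S.H X ∧ ∀ x, 0 ≤ x → x ≤ X → 0.12 ≤ S.h x ^ 2 := by
  have fin : ∀ t, 0 < t → t ≤ 0.88 → K ^ 2 < 24 * (t ^ 2 / 2 - t ^ 3 / 2 + 3 * t ^ 4 / 32) *
      (1 + 3 * γ) → (∀ X, 0 < X → K * X ^ 2 / 12 = t → ∀ κ, -K < κ → κ < -(0.9 * K) →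
      ∀ S : Prof γ κ, S.Good X → ∀ y, 0 < y → y < X → -K ≤ S.W4 y) →
    ∃ X η : ℝ, 0 < X ∧ 0 < η ∧ ∀ κ, -K < κ → κ < -(0.9 * K) → ∀ S : Prof γ κ, S.Good X →
      η ≤ S.H X ∧ ∀ x, 0 ≤ x → x ≤ X → 0.12 ≤ S.h x ^ 2 := by
    intro t t0 t1 hin hW
    set X := √(12 * t / K) with hX
    have hX2 : X ^ 2 = 12 * t / K := Real.sq_sqrt (by positivity)
    have hX0 : 0 < X := Real.sqrt_pos.2 (by positivity)
    have hXt : K * X ^ 2 / 12 = t := by rw [hX2]; field_simp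
    refine ⟨X, _, hX0, ?_, fun κ k1 k2 S hS =>
      H_lower hγ0 hK hX0 hXt t1 hS (hW X hX0 hXt κ k1 k2 S hS)⟩
    have : 1 < 24 * (t ^ 2 / 2 - t ^ 3 / 2 + 3 * t ^ 4 / 32) * (1 + 3 * γ) / K ^ 2 := by
      rwa [one_lt_div (by positivity)]
    have e : (1 + 3 * γ) * (12 / K ^ 2) * (t ^ 2 / 2 - t ^ 3 / 2 + 3 * t ^ 4 / 32) =
      24 * (t ^ 2 / 2 - t ^ 3 / 2 + 3 * t ^ 4 / 32) * (1 + 3 * γ) / K ^ 2 / 2 := by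
      field_simp; ring
    rw [e]; linarith
  have hp : 0 < 1 - γ := by linarith
  set t₀ := 1 - (1 + γ) ^ 2 / 4 with ht₀
  rcases le_total (K ^ 2) (t₀ ^ 2) with h | h
  · have h2 : 0 < 2 - γ := by linarith
    set t := (1 - γ) / (2 - γ) with ht
    have t0 : 0 < t := by positivity
    have t1 : t ≤ 1 / 2 := by rw [ht, div_le_iff₀ h2]; linarith
    refine fin t t0 (by linarith) ?_ (fun X hX hXt κ k1 _ S hS =>
      W4_ge_one hγ1 hK hXt ht k1 hS)
    have h3 : t₀ ^ 2 ≤ (1 - γ) ^ 2 := by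
      have a1 : 0 ≤ t₀ := by rw [ht₀]; nlinarith
      have a2 : t₀ ≤ 1 - γ := by rw [ht₀]; nlinarith
      gcongr
    have h4 : (1 - γ) = t * (2 - γ) := by rw [ht]; field_simp
    have h5 : (1 - γ) ^ 2 ≤ 4 * t ^ 2 := by
      rw [h4]; nlinarith [sq_nonneg t, mul_nonneg (sq_nonneg t) (by nlinarith : 0 ≤ 4 - (2 - γ) ^ 2)]
    have h6 : 6 * t ^ 2 ≤ 24 * (t ^ 2 / 2 - t ^ 3 / 2 + 3 * t ^ 4 / 32) := by
      nlinarith [mul_nonneg (sq_nonneg t) (by linarith : 0 ≤ 1 / 2 - t), sq_nonneg (t ^ 2)]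
    have h7 : 0 < t ^ 2 := by positivity
    nlinarith [mul_nonneg hγ0.le h7.le]
  · have t00 : 0 < t₀ := by rw [ht₀]; nlinarith
    have t01 : t₀ ≤ 0.75 := by rw [ht₀]; nlinarith
    refine fin (0.97 * t₀) (by positivity) (by linarith) ?_ (fun X hX hXt κ k1 k2 S hS =>
      W4_ge_two hγ0 hγ1 hK hX hXt ht₀ rfl h k1 k2 hS)
    -- with `p = 1-γ` both sides carry a factor `p²`
    set p := 1 - γ with hpd
    have hγp : γ = 1 - p := by rw [hpd]; ring
    set u := 0.97 * (1 - p / 4) with hu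
    have htu : 0.97 * t₀ = p * u := by rw [ht₀, hγp, hu]; ring
    rw [htu]
    have e : 24 * ((p * u) ^ 2 / 2 - (p * u) ^ 3 / 2 + 3 * (p * u) ^ 4 / 32) * (1 + 3 * γ) =
      p ^ 2 * (24 * u ^ 2 * (1 / 2 - p * u / 2 + 3 * (p * u) ^ 2 / 32) * (4 - 3 * p)) := by
      rw [hγp]; ring
    rw [e]
    by_cases hg : γ ≤ 0.1
    · have h8 : 2.3 < 24 * u ^ 2 * (1 / 2 - p * u / 2 + 3 * (p * u) ^ 2 / 32) * (4 - 3 * p) := by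
        have e2 : p = 1 - γ := hpd
        have pos : 0 < 24 * u ^ 2 * (1 / 2 - p * u / 2 + 3 * (p * u) ^ 2 / 32) * (4 - 3 * p)
            - 2.3 := by
          rw [hu, e2]; ring_nf; positivity
        linarith
      nlinarith [hK1 hg, mul_lt_mul_of_pos_left h8 (by positivity : 0 < p ^ 2)]
    · have hg' := not_le.1 hg
      have h8 : 90.5 < 24 * u ^ 2 * (1 / 2 - p * u / 2 + 3 * (p * u) ^ 2 / 32) * (4 - 3 * p)
          * (13 + 14 * p) := by
        obtain ⟨q, hq⟩ : ∃ q, q = 0.9 - p := ⟨_, rfl⟩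
        have q0 : 0 < q := by rw [hq, hpd]; linarith
        have q1 : q ≤ 1 := by rw [hq]; linarith
        have e2 : p = 0.9 - q := by rw [hq]; ring
        have pw : ∀ n : ℕ, q ^ (n + 1) ≤ q := fun n => by
          rw [pow_succ]; exact mul_le_of_le_one_left q0.le (pow_le_one₀ q0.le q1)
        have p4 := pw 3
        have p5 := pw 4
        have p6 := pw 5
        have p7 := pw 6
        have p8 := pw 7
        have p2 : 0 ≤ q ^ 2 := by positivity
        have p3 : 0 ≤ q ^ 3 := by positivity
        norm_num at p4 p5 p6 p7 p8
        have pos : 0 < 24 * u ^ 2 * (1 / 2 - p * u / 2 + 3 * (p * u) ^ 2 / 32) * (4 - 3 * p)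
          * (13 + 14 * p) - 90.5 := by
          rw [hu, e2]; ring_nf; linarith
        linarith
      have h9 := hK2 hg'
      have h10 := mul_lt_mul_of_pos_left h8 (by positivity : 0 < p ^ 2)
      have h11 : 0 < 13 + 14 * p := by positivity
      refine lt_of_mul_lt_mul_right (a := 13 + 14 * p) ?_ h11.le
      linarith

/-! ### The critical solution is global -/

namespace Prof
variable {γ κ : ℝ} {S : Prof γ κ}

/-- A priori bound for `κ ≤ 0`: at a maximum `m` of `h` one has `m² ≤ 1 + B⁴ m`. -/
lemma Good.h_le (hγ0 : 0 < γ) (hγ1 : γ < 1) {B : ℝ} (hB : 0 < B) (hκ : κ ≤ 0) (hS : S.Good B) :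
    ∀ x, 0 ≤ x → x ≤ B → S.h x ≤ 1 + B ^ 4 := by
  obtain ⟨z, hz, hm⟩ := isCompact_Icc.exists_isMaxOn (nonempty_Icc.2 hB.le) S.cont.continuousOn
  have hm : ∀ y, 0 ≤ y → y ≤ B → S.h y ≤ S.h z := fun y h0 h1 => hm ⟨h0, h1⟩
  have hI : ‖∫ s in (0:ℝ)..1, ker γ s * S.h (z * s)‖ ≤ S.h z * |1 - 0| := by
    refine intervalIntegral.norm_integral_le_of_norm_le_const fun s hs => ?_
    rw [uIoc_of_le zero_le_one] at hs
    have h1 : z * s ≤ B := (mul_le_of_le_one_right hz.1 hs.2).trans hz.2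
    have h0 : 0 ≤ z * s := mul_nonneg hz.1 hs.1.le
    rw [norm_mul, Real.norm_eq_abs, Real.norm_eq_abs, abs_of_pos (hS _ h0 h1).1]
    have := abs_ker_le hγ0 hγ1 hs.1.le hs.2
    have h2 := hm _ h0 h1
    have h3 := (hS _ h0 h1).1
    nlinarith [abs_nonneg (ker γ s)]
  have p := (hS z hz.1 hz.2).1
  have e := (hS z hz.1 hz.2).2
  rw [Rad] at e
  rw [Real.norm_eq_abs, sub_zero, abs_one, mul_one] at hI
  have hI := (abs_le.1 hI).2
  have hz4 : z ^ 4 ≤ B ^ 4 := pow_le_pow_left₀ hz.1 hz.2 4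
  have h1 : z ^ 4 * (∫ s in (0:ℝ)..1, ker γ s * S.h (z * s)) ≤ B ^ 4 * S.h z :=
    (mul_le_mul_of_nonneg_left hI (by positivity)).trans (mul_le_mul_of_nonneg_right hz4 p.le)
  have h2 : κ * z ^ 2 ≤ 0 := mul_nonpos_of_nonpos_of_nonneg hκ (sq_nonneg z)
  have h3 : S.h z ^ 2 ≤ 1 + B ^ 4 * S.h z := by linarith
  have hb : 0 < B ^ 4 := by positivity
  have : S.h z ≤ 1 + B ^ 4 := by
    by_contra h
    push Not at h
    nlinarith
  exact fun x x0 x1 => (hm x x0 x1).trans this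

lemma Good.coeff_bounds (hγ0 : 0 < γ) (hγ1 : γ < 1) {B K : ℝ} (hB : 0 < B) (hκ : κ ≤ 0)
    (hK : -K ≤ κ) (hS : S.Good B) : ∀ x, 0 ≤ x → x ≤ B →
      0 ≤ S.c x ∧ S.c x ≤ K + 3 * B ^ 2 * (1 + B ^ 4) ∧
      |S.W3 x| ≤ (K + 3 * B ^ 2 * (1 + B ^ 4)) * B := by
  set M := 1 + B ^ 4 with hM
  have hh : ∀ x, 0 ≤ x → x ≤ B → S.h x ≤ M := hS.h_le hγ0 hγ1 hB hκ
  have M0 : 0 < M := by positivity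
  have m0 : ∀ x, 0 ≤ x → x ≤ B → 0 ≤ mom S.h 1 x := fun x x0 x1 => by
    have := mono_of (F := mom S.h 1) x0
      (fun y _ => (mom_hasDerivAt S.cont 1 y).continuousAt.continuousWithinAt)
      (fun y _ _ => mom_hasDerivAt S.cont 1 y)
      (fun y y0 y1 => by have := (hS y y0.le (y1.le.trans x1)).1; positivity)
    rwa [mom_zero] at this
  have m1 : ∀ x, 0 ≤ x → x ≤ B → mom S.h 1 x ≤ M * x ^ 2 / 2 := fun x x0 x1 =>
    cmp (G := fun x => M * x ^ 2 / 2) (G' := fun x => M * x) x0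
      (fun y _ => (mom_hasDerivAt S.cont 1 y).continuousAt.continuousWithinAt)
      (fun y _ _ => mom_hasDerivAt S.cont 1 y)
      (d_of_poly 0 0 (M / 2) 0 0 0 0 0 0 (fun x => by ring) (fun x => by ring))
      (by simp [mom_zero]) (fun y y0 y1 => by
        nlinarith [hh y y0.le (y1.le.trans x1)])
  have m2 : ∀ x, 0 ≤ x → x ≤ B → M * x ^ 2 ≤ B ^ 2 * M := fun x x0 x1 => by
    have : x ^ 2 ≤ B ^ 2 := pow_le_pow_left₀ x0 x1 2
    nlinarith
  have cb : ∀ x, 0 ≤ x → x ≤ B → 0 ≤ S.c x ∧ S.c x ≤ K + 2 * (B ^ 2 * M) := fun x x0 x1 => by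
    have a0 := m0 x x0 x1
    have a1 := m1 x x0 x1
    have a2 := m2 x x0 x1
    simp only [c]
    constructor
    · nlinarith
    · nlinarith
  have w4 : ∀ x, 0 ≤ x → x ≤ B → |S.W4 x| ≤ K + 3 * B ^ 2 * M := fun x x0 x1 => by
    obtain ⟨c0, c1⟩ := cb x x0 x1
    have a2 := m2 x x0 x1
    have a3 : S.h x * x ^ 2 ≤ M * x ^ 2 := by gcongr; exact hh x x0 x1
    have a4 := (hS x x0 x1).1
    have a5 : 0 < B ^ 2 * M := by positivity
    have a6 : 0 ≤ S.h x * x ^ 2 := by positivity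
    rw [S.W4_eq, g, abs_le]
    constructor <;> nlinarith
  intro x x0 x1
  refine ⟨(cb x x0 x1).1, ?_, ?_⟩
  · have a5 : 0 < B ^ 2 * M := by positivity
    linarith [(cb x x0 x1).2]
  set N := K + 3 * B ^ 2 * M with hN
  have hN0 : 0 ≤ N := (abs_nonneg _).trans (w4 x x0 x1)
  have u := cmp (G := fun x => N * x) (G' := fun _ => N) x0 S.cont_W3.continuousOn
    (fun t _ _ => S.d_W3 t)
    (d_of_poly 0 N 0 0 0 0 0 0 0 (fun x => by ring) (fun x => by ring)) (by simp [S.W3_zero])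
    (fun t t0 t1 => (abs_le.1 (w4 t t0.le (t1.le.trans x1))).2)
  have l := cmp' (G := fun x => -N * x) (G' := fun _ => -N) x0 S.cont_W3.continuousOn
    (fun t _ _ => S.d_W3 t)
    (d_of_poly 0 (-N) 0 0 0 0 0 0 0 (fun x => by ring) (fun x => by ring)) (by simp [S.W3_zero])
    (fun t t0 t1 => (abs_le.1 (w4 t t0.le (t1.le.trans x1))).1)
  rw [abs_le]
  constructor <;> nlinarith

/-- Once `H ≥ η > 0`, the solution stays away from zero: where `W0` is small, `W1 W3 ≥ η/2`, so
`W1` cannot vanish and `W0` would be driven below zero, forwards or backwards. -/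
lemma Good.W0_ge (hγ0 : 0 < γ) {X η N L R ε : ℝ} (hX : 0 < X) (hη : 0 < η) (hN : 0 < N)
    (hL : 0 < L) (hS : S.Good (R + 1))
    (hb : ∀ x, 0 ≤ x → x ≤ R + 1 → 0 ≤ S.c x ∧ S.c x ≤ N ∧ |S.W3 x| ≤ L)
    (hH : η ≤ S.H X) (hWX : ε ≤ S.W0 X)
    (h1 : ε * N ≤ η / 2) (h2 : ε * L ≤ η / 2) :
    ∀ x, X ≤ x → x ≤ R → ε ≤ S.W0 x := by
  have Hm : ∀ x, X ≤ x → x ≤ R + 1 → η ≤ S.H x := fun x x0 x1 => hH.trans <|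
    mono_of x0 cont_H.continuousOn (fun t t0 t1 => hS.d_H (hX.trans t0) (t1.trans_le x1))
      (fun t t0 t1 => by
        have := hS.g_pos (hX.trans t0) (t1.le.trans x1)
        positivity)
  have key : ∀ x, X ≤ x → x ≤ R + 1 → S.W0 x ≤ ε → η / 2 ≤ S.W1 x * S.W3 x := by
    intro x x0 x1 hx
    have a1 := Hm x x0 x1
    obtain ⟨c0, c1, -⟩ := hb x (hX.le.trans x0) x1
    have a2 := hS.g_pos (hX.trans_le x0) x1
    have a3 : 0 ≤ x * S.g x ^ 3 := by have := hX.trans_le x0; positivity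
    have a4 := hS.W0_pos (hX.trans_le x0) x1
    have a5 : S.c x * S.W0 x ≤ N * ε := mul_le_mul c1 hx a4.le hN.le
    rw [H] at a1
    nlinarith [sq_nonneg (S.W2 x)]
  intro x₀ b0 b1
  by_contra hlt
  push Not at hlt
  have k0 := key x₀ b0 (by linarith) hlt.le
  rcases lt_trichotomy (S.W1 x₀) 0 with hw | hw | hw
  · have neg : ∀ z, x₀ ≤ z → z ≤ x₀ + 1 → S.W1 z < 0 := by
      intro z z0 z1
      by_contra hz
      obtain ⟨y, y1, y2, y3, y4⟩ := first_zero (φ := fun x => - S.W1 x) z0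
        S.cont_W1.neg.continuousOn (by linarith) (by linarith)
      have hy : S.W1 y = 0 := by linarith
      have := cmp (F := S.W0) (G := fun _ => S.W0 x₀) (G' := fun _ => 0) y1.le
        S.cont_W0.continuousOn (fun t _ _ => S.d_W0 t) (fun x => hasDerivAt_const _ _) le_rfl
        (fun t t0 t1 => by linarith [y4 t t0.le t1])
      have := key y (by linarith) (by linarith) (by linarith)
      rw [hy] at this; linarith
    have w0 : ∀ z, x₀ ≤ z → z ≤ x₀ + 1 → S.W0 z ≤ S.W0 x₀ := fun z z0 z1 =>
      cmp (G := fun _ => S.W0 x₀) (G' := fun _ => 0) z0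
        S.cont_W0.continuousOn (fun t _ _ => S.d_W0 t) (fun x => hasDerivAt_const _ _) le_rfl
        (fun t t0 t1 => (neg t t0.le (t1.le.trans z1)).le)
    have := cmp (F := S.W0) (G := fun x => S.W0 x₀ + η / (2 * L) * x₀ - η / (2 * L) * x)
      (G' := fun _ => -(η / (2 * L))) (a := x₀) (b := x₀ + 1) (by linarith)
        S.cont_W0.continuousOn (fun t _ _ => S.d_W0 t)
        (d_of_poly (S.W0 x₀ + η / (2 * L) * x₀) (-(η / (2 * L))) 0 0 0 0 0 0 0
          (fun x => by ring) (fun x => by ring)) (by linarith)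
        (fun t t0 t1 => by
          have a1 := key t (by linarith) (by linarith) ((w0 t t0.le t1.le).trans hlt.le)
          have a2 := neg t t0.le t1.le
          have a3 := (abs_le.1 (hb t (by linarith) (by linarith)).2.2).1
          have a4 : η / (2 * L) ≤ - S.W1 t := by
            rw [div_le_iff₀ (by positivity)]
            nlinarith
          linarith)
    have p := hS.W0_pos (x := x₀ + 1) (by linarith) (by linarith)
    have a5 : ε ≤ η / (2 * L) := by
      rw [le_div_iff₀ (by positivity)]; linarith
    have e : S.W0 x₀ + η / (2 * L) * x₀ - η / (2 * L) * (x₀ + 1) = S.W0 x₀ - η / (2 * L) := by ring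
    simp only [e] at this
    linarith
  · rw [hw] at k0; linarith
  · have mono : ∀ y, X ≤ y → y ≤ x₀ → (∀ t, y < t → t < x₀ → 0 < S.W1 t) → S.W0 y ≤ S.W0 x₀ :=
      fun y y0 y1 ht => mono_of y1 S.cont_W0.continuousOn (fun t _ _ => S.d_W0 t)
        (fun t t0 t1 => (ht t t0 t1).le)
    by_cases hall : ∀ t, X < t → t < x₀ → 0 < S.W1 t
    · have := mono X le_rfl b0 hall
      linarith
    · push Not at hall
      obtain ⟨t, t0, t1, t2⟩ := hall
      obtain ⟨z, z1, z2, z3, z4⟩ := first_zero (φ := fun s => S.W1 (-s)) (a := -x₀) (b := -t)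
        (by linarith) (S.cont_W1.comp continuous_neg).continuousOn (by simpa using hw)
        (by simpa using t2)
      have := mono (-z) (by linarith) (by linarith) (fun s s0 s1 => by
        have := z4 (-s) (by linarith) (by linarith)
        simpa using this)
      have := key (-z) (by linarith) (by linarith) (by linarith)
      rw [z3] at this; linarith

end Prof

open Prof

/-- There is a global even solution outside the shooting set, with `κ = -K < 0`. -/
lemma exists_critical {γ : ℝ} (hγ0 : 0 < γ) (hγ1 : γ < 1) :
    ∃ (K : ℝ) (S : Prof γ (-K)), 0 < K ∧ ¬ InA γ (-K) ∧ (∀ R, S.Good R) ∧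
      ∀ x, S.h (-x) = S.h x := by
  obtain ⟨K, hK, hA, hin, hK1, hK2⟩ := exists_crit hγ0 hγ1
  obtain ⟨X, η, hX, hη, hH⟩ := exists_H_pos hγ0 hγ1 hK hK1 hK2
  suffices h : ∀ R, 0 < R → ∃ S : Prof γ (-K), S.Good R by
    obtain ⟨S, h1, h2⟩ := Prof.glue hγ0 hγ1 h
    exact ⟨K, S, hK, hA, h1, h2⟩
  suffices h : ∀ R, X ≤ R → ∃ S : Prof γ (-K), S.Good R by
    intro R _
    obtain ⟨S, hS⟩ := h (max X R) (le_max_left _ _)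
    exact ⟨S, hS.mono (le_max_right _ _)⟩
  intro R hR
  have R0 : 0 < R := hX.trans_le hR
  set N := K + 3 * (R + 1) ^ 2 * (1 + (R + 1) ^ 4) with hN
  have N0 : 0 < N := by positivity
  set L := N * (R + 1) with hL
  have L0 : 0 < L := by positivity
  set ε := min (min (η / (2 * N)) (η / (2 * L))) (0.06 * X ^ 2) with hε
  have ε0 : 0 < ε := by positivity
  have e1 : ε * N ≤ η / 2 := by
    have : ε ≤ η / (2 * N) := (min_le_left _ _).trans (min_le_left _ _)
    rw [le_div_iff₀ (by positivity)] at this; linarith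
  have e2 : ε * L ≤ η / 2 := by
    have : ε ≤ η / (2 * L) := (min_le_left _ _).trans (min_le_right _ _)
    rw [le_div_iff₀ (by positivity)] at this; linarith
  have e3 : ε ≤ 0.06 * X ^ 2 := min_le_right _ _
  refine exists_good_of_limit hγ0 hγ1 R0 (δ := min 0.12 (2 * ε / R ^ 2)) (by positivity) ?_
  have hfr : ∃ᶠ κ' in 𝓝[>] (-K), κ' ∈ Ioo (-K) (-(0.9 * K)) :=
    Filter.Eventually.frequently (Ioo_mem_nhdsGT (by linarith))
  refine (hfr.filter_mono nhdsWithin_le_nhds).mono ?_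
  rintro κ ⟨k1, k2⟩
  obtain ⟨S, hS⟩ := (hin κ k1 (by linarith)).global hγ0 hγ1 (R := R + 1) (by linarith)
  refine ⟨S, hS.mono (by linarith), ?_⟩
  obtain ⟨hH1, hH2⟩ := hH κ k1 k2 S (hS.mono (by linarith))
  have hWX : ε ≤ S.W0 X := by
    have a := hS.g_sq hX.le (by linarith)
    have b := hH2 X hX.le le_rfl
    rw [g, mul_pow] at a
    nlinarith [sq_nonneg X]
  have hW := hS.W0_ge hγ0 hX hη N0 L0
    (hS.coeff_bounds hγ0 hγ1 (by linarith) (by linarith) k1.le) hH1 hWX e1 e2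
  intro x x0 x1
  rcases le_total x X with hx | hx
  · exact (min_le_left _ _).trans (hH2 x x0 hx)
  · refine (min_le_right _ _).trans ?_
    have a := hS.g_sq x0 (by linarith)
    have b := hW x hx x1
    rw [g, mul_pow] at a
    rw [div_le_iff₀ (by positivity)]
    have : x ^ 2 ≤ R ^ 2 := pow_le_pow_left₀ x0 x1 2
    nlinarith [sq_nonneg (S.h x)]

/-! ### Two monotone quantities along global solutions -/

lemma d_rpow_mul {F : ℝ → ℝ} {F' x : ℝ} (s : ℝ) (hx : 0 < x) (hF : HasDerivAt F F' x) :
    HasDerivAt (fun x => x ^ s * F x) (x ^ (s - 1) * (s * F x + x * F')) x := by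
  have := (Real.hasDerivAt_rpow_const (p := s) (Or.inl hx.ne')).mul hF
  refine HasDerivAt.congr_deriv this ?_
  have : x ^ s = x ^ (s - 1) * x := by
    rw [← Real.rpow_add_one hx.ne']; congr 1; ring
  rw [this]; ring

lemma d_rpow_mul_cont {F : ℝ → ℝ} (s : ℝ) {a b : ℝ} (ha : 0 < a) (hF : Continuous F) :
    ContinuousOn (fun x => x ^ s * F x) (Icc a b) := by
  refine ContinuousOn.mul (fun x hx => ?_) hF.continuousOn
  exact (Real.continuousAt_rpow_const _ _ (Or.inl (ha.trans_le hx.1).ne')).continuousWithinAt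

namespace Prof
variable {γ κ : ℝ} {S : Prof γ κ}

/-- The combination `x² W2 - 4γ x W1 + 2γ(2γ+1) W0`; it equals `x^{2+2γ}` times the second
derivative of `x^{-2γ} W0`. -/
noncomputable def A (S : Prof γ κ) (x : ℝ) : ℝ :=
  x ^ 2 * S.W2 x - 4 * γ * (x * S.W1 x) + 2 * γ * (2 * γ + 1) * S.W0 x

/-- The nonnegative quadratic form subtracted in `E`. -/
noncomputable def qf (S : Prof γ κ) (x : ℝ) : ℝ :=
  S.A x ^ 2 / 2 + γ * ((2 + γ) * S.Q x ^ 2 - 2 * (1 - γ) * (S.Q x * S.W0 x)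
    + 2 * (1 - γ) * S.W0 x ^ 2)

/-- The nonnegative quadratic form in the derivative of `x^{-2γ-4} E`. -/
noncomputable def rf (S : Prof γ κ) (x : ℝ) : ℝ :=
  γ * (5 * S.A x ^ 2 - 10 * (1 - γ) * (S.A x * S.Q x)
    + 2 * (1 - γ) * (4 * (1 - γ) - 1) * (S.A x * S.W0 x)
    + (1 - γ) * (8 - 2 * (1 - γ)) * S.Q x ^ 2
    - 2 * (1 - γ) * (3 + 2 * (1 - γ)) * (S.Q x * S.W0 x)
    + 4 * (1 - γ) * (1 + (1 - γ)) * S.W0 x ^ 2)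

/-- The quantity `E = x³ Q W3 - qf`, for which `x^{-2γ-4} E` is nondecreasing while `Q W4 ≥ 0`. -/
noncomputable def E (S : Prof γ κ) (x : ℝ) : ℝ := S.Q x * x ^ 3 * S.W3 x - S.qf x

/-- The quantity for which `x^{-2γ-4} P` is nonincreasing along solutions. -/
noncomputable def P (S : Prof γ κ) (x : ℝ) : ℝ :=
  S.c x ^ 3 * x ^ 2 - 6 * x ^ 4 * (S.c x * S.W0 x) + 2 * x ^ 5 * S.g x ^ 3 - 6 * S.E x

lemma qf_nonneg (h0 : 0 < γ) (h1 : γ < 1) (x : ℝ) : 0 ≤ S.qf x := by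
  have : S.qf x = S.A x ^ 2 / 2 + γ * (2 * (1 - γ) * (S.W0 x - S.Q x / 2) ^ 2
    + (2 + γ - (1 - γ) / 2) * S.Q x ^ 2) := by rw [qf]; ring
  rw [this]
  have a : 0 < 1 - γ := by linarith
  have b : 0 < 2 + γ - (1 - γ) / 2 := by linarith
  positivity

lemma rf_nonneg (h0 : 0 < γ) (h1 : γ < 1) (x : ℝ) : 0 ≤ S.rf x := by
  obtain ⟨p, hp⟩ : ∃ p, p = 1 - γ := ⟨_, rfl⟩
  have p0 : 0 < p := by linarith
  have p1 : p < 1 := by linarith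
  -- complete the square in `A`, then in `Q`
  have hd : 0 < 8 - 7 * p := by linarith
  have disc : (3 + 3 * p - 4 * p ^ 2) ^ 2 ≤
      (8 - 7 * p) * (4 * (1 + p) - p * (4 * p - 1) ^ 2 / 5) := by
    nlinarith [mul_pos p0 (sub_pos.2 p1), pow_pos p0 3, pow_pos p0 2,
      mul_pos (pow_pos p0 2) (sub_pos.2 p1), mul_pos (pow_pos p0 3) (sub_pos.2 p1),
      sq_nonneg (p - 1 / 2), sq_nonneg (p * (p - 1 / 2))]
  have in0 : 0 ≤ (8 - 7 * p) * S.Q x ^ 2 - 2 * (3 + 3 * p - 4 * p ^ 2) * (S.Q x * S.W0 x)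
      + (4 * (1 + p) - p * (4 * p - 1) ^ 2 / 5) * S.W0 x ^ 2 := by
    refine nonneg_of_mul_nonneg_right (a := 8 - 7 * p) ?_ hd
    nlinarith [sq_nonneg ((8 - 7 * p) * S.Q x - (3 + 3 * p - 4 * p ^ 2) * S.W0 x),
      mul_nonneg (sub_nonneg.2 disc) (sq_nonneg (S.W0 x))]
  have : S.rf x = γ * (5 * (S.A x - p * S.Q x + p * (4 * p - 1) / 5 * S.W0 x) ^ 2
      + p * ((8 - 7 * p) * S.Q x ^ 2 - 2 * (3 + 3 * p - 4 * p ^ 2) * (S.Q x * S.W0 x)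
      + (4 * (1 + p) - p * (4 * p - 1) ^ 2 / 5) * S.W0 x ^ 2)) := by
    rw [rf, ← hp]; ring
  rw [this]
  have := mul_nonneg p0.le in0
  positivity

lemma cont_E : Continuous S.E := by
  have := S.cont_W0; have := S.cont_W1; have := S.cont_W2; have := S.cont_W3
  have := S.cont_Q
  unfold E qf A; fun_prop

lemma cont_P : Continuous S.P := by
  have := S.cont_W0; have := cont_E (S := S); have := S.cont_c; have := S.cont_g
  unfold P; fun_prop

lemma d_E (x : ℝ) : ∃ E', HasDerivAt S.E E' x ∧
    (-2 * γ - 4) * S.E x + x * E' = x ^ 4 * (S.Q x * S.W4 x) + S.rf x := by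
  have hx := hasDerivAt_id x
  have hA := (((hx.pow 2).mul (S.d_W2 x)).sub ((hx.mul (S.d_W1 x)).const_mul (4 * γ))).add
    ((S.d_W0 x).const_mul (2 * γ * (2 * γ + 1)))
  have hq := ((hA.pow 2).div_const 2).add ((((((S.d_Q x).pow 2).const_mul (2 + γ)).sub
    (((S.d_Q x).mul (S.d_W0 x)).const_mul (2 * (1 - γ)))).add
    (((S.d_W0 x).pow 2).const_mul (2 * (1 - γ)))).const_mul γ)
  have hE := (((S.d_Q x).mul (hx.pow 3)).mul (S.d_W3 x)).sub hq
  refine ⟨_, hE, ?_⟩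
  simp only [id, Pi.pow_apply, Pi.mul_apply, Pi.add_apply, Pi.sub_apply, E, qf, rf, A, Q, Q1]
  push_cast
  ring

lemma Good.d_P {R : ℝ} (hS : S.Good R) {x : ℝ} (h0 : 0 < x) (h1 : x < R) :
    ∃ P', HasDerivAt S.P P' x ∧ (-2 * γ - 4) * S.P x + x * P' =
      - (1 + γ) * x ^ 2 * S.W4 x ^ 2 * (x * S.g x + 2 * S.c x) - 6 * S.rf x := by
  have hx := hasDerivAt_id x
  obtain ⟨E', hE, he⟩ := S.d_E x
  have hP := (((((S.d_c x).pow 3).mul (hx.pow 2)).sub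
    (((hx.pow 4).const_mul 6).mul ((S.d_c x).mul (S.d_W0 x)))).add
    (((hx.pow 5).const_mul 2).mul ((hS.d_g h0 h1).pow 3))).sub (hE.const_mul 6)
  refine ⟨_, hP, ?_⟩
  have hg := (hS.g_pos h0 h1.le).ne'
  have h2 := hS.g_sq h0.le h1.le
  have e1 : S.g x ^ 2 * (S.W1 x / S.g x) = S.g x * S.W1 x := by field_simp
  simp only [id, Pi.pow_apply, Pi.mul_apply, P]
  push_cast
  have h4 := S.W4_eq x
  rw [h4] at he ⊢
  have hQ : S.Q x = x * S.W1 x - 2 * γ * S.W0 x := rfl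
  linear_combination (-6) * he + 6 * x ^ 6 * e1 + (6 - 3 * (1 + γ)) * x ^ 5 * S.g x * h2
    + (6 * S.c x * x ^ 4 - 6 * x ^ 5 * S.g x) * hQ

/-- `P` in terms of `W4`. -/
lemma Good.P_eq {R : ℝ} (hS : S.Good R) {x : ℝ} (h0 : 0 ≤ x) (h1 : x ≤ R) :
    S.P x = x ^ 2 * S.W4 x ^ 2 * (S.c x + 2 * (x * S.g x)) - 6 * S.E x := by
  have h2 := hS.g_sq h0 h1
  rw [P, S.W4_eq]
  linear_combination 3 * x ^ 4 * S.c x * h2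

/-- The positive lock: if `Q`, `W4`, `E` are positive at a point, the solution enters the cone. -/
lemma lock_pos (hγ0 : 0 < γ) (hγ1 : γ < 1) (hS : ∀ R, S.Good R) {a : ℝ} (ha : 0 < a)
    (hQ : 0 < S.Q a) (h4 : 0 < S.W4 a) (hE : 0 < S.E a) : InA γ κ := by
  have w4 : ∀ x, a ≤ x → (∀ y, a ≤ y → y < x → 0 < S.Q y) → S.W4 a ≤ S.W4 x := fun x hx hq =>
    mono_of hx S.cont_W4.continuousOn (fun t t0 t1 => (hS x).d_W4 (ha.trans t0) t1)
      (fun t t0 t1 => (div_pos (hq t t0.le t1) ((hS t).g_pos (ha.trans t0) le_rfl)).le)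
  have Ep : ∀ x, a ≤ x → (∀ y, a ≤ y → y < x → 0 < S.Q y) → 0 < S.E x := fun x hx hq => by
    choose E' h1 h2 using S.d_E
    have := mono_of (F := fun x => x ^ (-2 * γ - 4) * S.E x) hx
      (d_rpow_mul_cont _ ha cont_E) (fun t t0 t1 => d_rpow_mul _ (ha.trans t0) (h1 t))
      (fun t t0 t1 => by
        rw [h2]
        have b1 := hq t t0.le t1
        have b2 := w4 t t0.le (fun y y0 y1 => hq y y0 (y1.trans t1))
        have b3 := S.rf_nonneg hγ0 hγ1 t
        have b4 := ha.trans t0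
        have b5 : 0 < S.W4 t := h4.trans_le b2
        positivity)
    have p1 : 0 < a ^ (-2 * γ - 4) * S.E a := by positivity
    exact pos_of_mul_pos_right (p1.trans_le this) (Real.rpow_nonneg (ha.le.trans hx) _)
  have Qp : ∀ x, a ≤ x → 0 < S.Q x := by
    intro x hx
    by_contra h
    obtain ⟨z, z1, z2, z3, z4⟩ := first_zero hx S.cont_Q.continuousOn hQ (not_lt.1 h)
    have := Ep z z1.le z4
    rw [E, z3] at this
    linarith [S.qf_nonneg hγ0 hγ1 z]
  have n4 : ∀ᶠ x in atTop, - S.W4 x ≤ - S.W4 a := by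
    filter_upwards [eventually_ge_atTop a] with x hx
    linarith [w4 x hx fun y y0 _ => Qp y y0]
  have t3 := tendsto_bot_of_deriv (F := fun x => - S.W3 x) (fun x => (S.d_W3 x).neg) h4 n4
  have t2 := tendsto_bot_of_bot (F := fun x => - S.W2 x) (fun x => (S.d_W2 x).neg) t3
  have tQ2 : Tendsto (fun x => - S.Q2 x) atTop atBot := by
    refine tendsto_atBot_mono' _ ?_ t3
    filter_upwards [eventually_ge_atTop 1, t3.eventually_le_atBot 0, t2.eventually_le_atBot 0]
      with x x1 x2 x3
    rw [Q2]
    nlinarith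
  have tQ1 := tendsto_bot_of_bot (F := fun x => - S.Q1 x) (fun x => (S.d_Q1 x).neg) tQ2
  obtain ⟨x, ⟨⟨⟨x0, x1⟩, x2⟩, x3⟩, x4⟩ := ((((eventually_ge_atTop a).and
    (t3.eventually_lt_atBot 0)).and (t2.eventually_lt_atBot 0)).and
    (tQ1.eventually_lt_atBot 0)).and n4 |>.exists
  exact ⟨S, x, ha.trans_le x0, hS x, Qp x x0, by linarith, by linarith, by linarith, by linarith⟩

/-- The negative lock: if `Q, W4 < 0 < E` at a point, then `W0` tends to `-∞`, which is
impossible. -/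
lemma lock_neg (hγ0 : 0 < γ) (hγ1 : γ < 1) (hS : ∀ R, S.Good R) {a : ℝ} (ha : 0 < a)
    (hQ : S.Q a < 0) (h4 : S.W4 a < 0) (hE : 0 < S.E a) : False := by
  have w4 : ∀ x, a ≤ x → (∀ y, a ≤ y → y < x → S.Q y < 0) → S.W4 x ≤ S.W4 a := fun x hx hq => by
    have := mono_of (F := fun x => - S.W4 x) hx S.cont_W4.neg.continuousOn
      (fun t t0 t1 => ((hS x).d_W4 (ha.trans t0) t1).neg)
      (fun t t0 t1 => by
        rw [Left.nonneg_neg_iff]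
        exact (div_neg_of_neg_of_pos (hq t t0.le t1) ((hS t).g_pos (ha.trans t0) le_rfl)).le)
    linarith
  have Ep : ∀ x, a ≤ x → (∀ y, a ≤ y → y < x → S.Q y < 0) → 0 < S.E x := fun x hx hq => by
    choose E' h1 h2 using S.d_E
    have := mono_of (F := fun x => x ^ (-2 * γ - 4) * S.E x) hx
      (d_rpow_mul_cont _ ha cont_E) (fun t t0 t1 => d_rpow_mul _ (ha.trans t0) (h1 t))
      (fun t t0 t1 => by
        rw [h2]
        have b1 := hq t t0.le t1
        have b2 := w4 t t0.le (fun y y0 y1 => hq y y0 (y1.trans t1))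
        have b3 := S.rf_nonneg hγ0 hγ1 t
        have b4 := ha.trans t0
        have b5 : 0 < S.Q t * S.W4 t := mul_pos_of_neg_of_neg b1 (b2.trans_lt h4)
        positivity)
    have p1 : 0 < a ^ (-2 * γ - 4) * S.E a := by positivity
    exact pos_of_mul_pos_right (p1.trans_le this) (Real.rpow_nonneg (ha.le.trans hx) _)
  have Qp : ∀ x, a ≤ x → S.Q x < 0 := by
    intro x hx
    by_contra h
    obtain ⟨z, z1, z2, z3, z4⟩ := first_zero (φ := fun x => - S.Q x) hx S.cont_Q.neg.continuousOn
      (by linarith) (by linarith [not_lt.1 h])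
    have := Ep z z1.le (fun y y0 y1 => by linarith [z4 y y0 y1])
    rw [E, neg_eq_zero.1 z3] at this
    linarith [S.qf_nonneg hγ0 hγ1 z]
  refine not_W4_neg hS (d := - S.W4 a) (by linarith) ?_
  filter_upwards [eventually_ge_atTop a] with x hx
  linarith [w4 x hx fun y y0 _ => Qp y y0]

/-- Outside the shooting set, `E ≤ 0` wherever `Q W4 > 0`. -/
lemma E_nonpos (hγ0 : 0 < γ) (hγ1 : γ < 1) (hS : ∀ R, S.Good R) (hA : ¬ InA γ κ) {x : ℝ}
    (hx : 0 < x) (h : 0 < S.Q x * S.W4 x) : S.E x ≤ 0 := by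
  by_contra hE
  rcases pos_and_pos_or_neg_and_neg_of_mul_pos h with h | h
  · exact hA (lock_pos hγ0 hγ1 hS hx h.1 h.2 (not_le.1 hE))
  · exact lock_neg hγ0 hγ1 hS hx h.1 h.2 (not_le.1 hE)

end Prof

/-! ### Convergence of `c x^{-1-γ}` -/

/-- A function nonincreasing and bounded below on `[1, ∞)` converges. -/
lemma exists_lim {F : ℝ → ℝ} {m : ℝ} (h1 : ∀ x y, 1 ≤ x → x ≤ y → F y ≤ F x)
    (h2 : ∀ x, 1 ≤ x → m ≤ F x) : ∃ l, Tendsto F atTop (𝓝 l) := by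
  have ha : Antitone fun x => F (max 1 x) := fun x y h =>
    h1 _ _ (le_max_left _ _) (max_le_max le_rfl h)
  have hb : BddBelow (range fun x => F (max 1 x)) := ⟨m, by
    rintro _ ⟨x, rfl⟩; exact h2 _ (le_max_left _ _)⟩
  refine ⟨_, (tendsto_atTop_ciInf ha hb).congr' ?_⟩
  filter_upwards [eventually_ge_atTop 1] with x hx
  simp [max_eq_right hx]

/-- A quadratic lower bound is incompatible with growth at most `x^{2γ}`, `γ < 1`. -/
lemma not_quad_growth {γ C d : ℝ} (hγ1 : γ < 1) (hd : 0 < d) {W : ℝ → ℝ}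
    (h1 : ∀ᶠ x in atTop, W x ≤ C * x ^ (2 * γ)) (h2 : ∀ᶠ x in atTop, d * x ^ 2 ≤ W x) : False := by
  have ht := tendsto_rpow_atTop (y := 2 - 2 * γ) (by linarith)
  obtain ⟨x, ⟨⟨a, b⟩, c⟩, e⟩ := (((h1.and h2).and (eventually_gt_atTop 0)).and
    (ht.eventually_gt_atTop (C / d))).exists
  have p : 0 < x ^ (2 * γ) := Real.rpow_pos_of_pos c _
  have : x ^ 2 = x ^ (2 * γ) * x ^ (2 - 2 * γ) := by
    rw [← Real.rpow_add c, ← Real.rpow_natCast]; congr 1; push_cast; ring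
  rw [div_lt_iff₀ hd] at e
  have := a.trans' b
  nlinarith

namespace Prof
variable {γ κ : ℝ} {S : Prof γ κ}

lemma c_mono (hγ0 : 0 < γ) (hS : ∀ R, S.Good R) {x y : ℝ} (h0 : 0 ≤ x) (h1 : x ≤ y) :
    S.c x ≤ S.c y :=
  mono_of h1 S.cont_c.continuousOn (fun t _ _ => S.d_c t) (fun t t0 t1 => by
    have := (hS t).g_pos (h0.trans_lt t0) le_rfl
    positivity)

lemma c_ge (hγ0 : 0 < γ) (hS : ∀ R, S.Good R) {x : ℝ} (h0 : 0 ≤ x) : -κ ≤ S.c x := by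
  have := c_mono hγ0 hS le_rfl h0
  rwa [S.c_zero] at this

/-- The normalised profile `Y = c x^{-1-γ}`. -/
noncomputable def Y (S : Prof γ κ) (x : ℝ) : ℝ := x ^ (-1 - γ) * S.c x

/-- The nonincreasing quantity `D = x^{-2γ-4} P`. -/
noncomputable def D (S : Prof γ κ) (x : ℝ) : ℝ := x ^ (-2 * γ - 4) * S.P x

lemma d_Y {x : ℝ} (hx : 0 < x) :
    HasDerivAt S.Y ((1 + γ) * x ^ (-2 - γ) * S.W4 x) x := by
  refine HasDerivAt.congr_deriv (d_rpow_mul _ hx (S.d_c x)) ?_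
  rw [S.W4_eq, show -1 - γ - 1 = -2 - γ by ring]; ring

lemma d_D (hS : ∀ R, S.Good R) {x : ℝ} (hx : 0 < x) :
    HasDerivAt S.D (x ^ (-2 * γ - 5) * (- (1 + γ) * x ^ 2 * S.W4 x ^ 2 *
      (x * S.g x + 2 * S.c x) - 6 * S.rf x)) x := by
  obtain ⟨P', h1, h2⟩ := (hS (x + 1)).d_P hx (by linarith)
  refine HasDerivAt.congr_deriv (d_rpow_mul _ hx h1) ?_
  rw [h2, show -2 * γ - 4 - 1 = -2 * γ - 5 by ring]

lemma D_anti (hγ0 : 0 < γ) (hγ1 : γ < 1) (hκ : κ < 0) (hS : ∀ R, S.Good R) {x y : ℝ} (h0 : 0 < x)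
    (h1 : x ≤ y) : S.D y ≤ S.D x := by
  have := mono_of (F := fun x => - S.D x) h1
    (d_rpow_mul_cont _ h0 cont_P).neg (fun t t0 t1 => (d_D hS (h0.trans t0)).neg)
    (fun t t0 t1 => by
      have p := h0.trans t0
      have a1 := (hS t).g_pos p le_rfl
      have a2 : 0 < S.c t := by linarith [c_ge hγ0 hS p.le]
      have a3 := S.rf_nonneg hγ0 hγ1 t
      have : -(t ^ (-2 * γ - 5) * (- (1 + γ) * t ^ 2 * S.W4 t ^ 2 *
        (t * S.g t + 2 * S.c t) - 6 * S.rf t)) = t ^ (-2 * γ - 5) * ((1 + γ) * t ^ 2 * S.W4 t ^ 2 *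
        (t * S.g t + 2 * S.c t) + 6 * S.rf t) := by ring
      rw [this]; positivity)
  linarith

lemma D_ge (hγ0 : 0 < γ) (hκ : κ < 0) (hS : ∀ R, S.Good R) {x : ℝ} (hx : 0 < x) :
    -6 * (x ^ (-2 * γ - 4) * S.E x) ≤ S.D x := by
  have a1 := (hS x).g_pos hx le_rfl
  have a2 : 0 < S.c x := by linarith [c_ge hγ0 hS hx.le]
  have p : 0 < x ^ (-2 * γ - 4) := Real.rpow_pos_of_pos hx _
  have : 0 ≤ x ^ 2 * S.W4 x ^ 2 * (S.c x + 2 * (x * S.g x)) := by positivity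
  rw [D, (hS x).P_eq hx.le le_rfl]
  nlinarith

lemma E_le (hγ0 : 0 < γ) (hγ1 : γ < 1) {x : ℝ} (hx : 0 < x) :
    x ^ (-2 * γ - 4) * S.E x ≤ x ^ (-2 * γ - 1) * (S.Q x * S.W3 x) := by
  have e : x ^ (-2 * γ - 1) = x ^ (-2 * γ - 4) * x ^ 3 := by
    rw [← Real.rpow_natCast, ← Real.rpow_add hx]; congr 1; push_cast; ring
  have p : 0 < x ^ (-2 * γ - 4) := Real.rpow_pos_of_pos hx _
  rw [e, mul_assoc]
  gcongr
  rw [E]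
  linarith [S.qf_nonneg hγ0 hγ1 x]

/-- Bound for `x^{-2γ-1} Q W3` when `Q, W3 > 0 ≥ W4` from `a` on. -/
lemma QW3_bound_pos (hγ0 : 0 < γ) (hγ1 : γ < 1) (hS : ∀ R, S.Good R) {a : ℝ}
    (ha : 1 ≤ a) (hQ : ∀ x, a ≤ x → 0 < S.Q x) (h3 : ∀ x, a ≤ x → 0 < S.W3 x)
    (h4 : ∀ x, a ≤ x → S.W4 x ≤ 0) :
    ∃ B, ∀ x, a ≤ x → x ^ (-2 * γ - 1) * (S.Q x * S.W3 x) ≤ B := by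
  have a0 : 0 < a := by linarith
  have W1p : ∀ x, a ≤ x → 0 < S.W1 x := fun x hx => by
    have h1 := hQ x hx
    have h2 := (hS x).W0_pos (a0.trans_le hx) le_rfl
    rw [Q] at h1
    have : 0 < x * S.W1 x := by nlinarith
    exact pos_of_mul_pos_right this (a0.le.trans hx)
  have Ya : ∀ x, a ≤ x → S.Y x ≤ S.Y a := fun x hx => by
    have := mono_of (F := fun x => - S.Y x) hx (d_rpow_mul_cont _ a0 S.cont_c).neg
      (fun t t0 t1 => (d_Y (a0.trans t0)).neg) (fun t t0 t1 => by
        have b1 := h4 t t0.le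
        have b2 : 0 < t ^ (-2 - γ) := Real.rpow_pos_of_pos (a0.trans t0) _
        rw [Left.nonneg_neg_iff]
        exact mul_nonpos_of_nonneg_of_nonpos (by positivity) b1)
    linarith
  have W2n : ∀ x, a ≤ x → S.W2 x ≤ 0 := by
    intro b hb
    by_contra hW
    push Not at hW
    have b0 : 0 < b := a0.trans_le hb
    have w2 : ∀ x, b ≤ x → S.W2 b ≤ S.W2 x := fun x hx =>
      mono_of hx S.cont_W2.continuousOn (fun t _ _ => S.d_W2 t)
        (fun t t0 t1 => (h3 t (hb.trans t0.le)).le)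
    have w1 : ∀ x, b ≤ x → S.W2 b * (x - b) ≤ S.W1 x := fun x hx =>
      cmp' (G := fun x => S.W2 b * (x - b)) (G' := fun _ => S.W2 b) hx S.cont_W1.continuousOn
        (fun t _ _ => S.d_W1 t)
        (d_of_poly (-S.W2 b * b) (S.W2 b) 0 0 0 0 0 0 0 (fun x => by ring) (fun x => by ring))
        (by simpa using (W1p b hb).le) (fun t t0 t1 => w2 t t0.le)
    have w0 : ∀ x, b ≤ x → S.W2 b * (x - b) ^ 2 / 2 ≤ S.W0 x := fun x hx =>
      cmp' (G := fun x => S.W2 b * (x - b) ^ 2 / 2) (G' := fun x => S.W2 b * (x - b)) hx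
        S.cont_W0.continuousOn (fun t _ _ => S.d_W0 t)
        (d_of_poly (S.W2 b * b ^ 2 / 2) (-S.W2 b * b) (S.W2 b / 2) 0 0 0 0 0 0
          (fun x => by ring) (fun x => by ring))
        (by simpa using ((hS b).W0_pos b0 le_rfl).le) (fun t t0 t1 => w1 t t0.le)
    refine not_quad_growth (γ := γ) (C := S.Y a ^ 2 / 2) (d := S.W2 b / 8) hγ1 (by positivity)
      (W := S.W0) ?_ ?_
    · filter_upwards [eventually_ge_atTop a] with x hx
      have x0 : 0 < x := a0.trans_le hx
      have b1 := h4 x hx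
      have b2 := Ya x hx
      have b3 := (hS x).g_pos x0 le_rfl
      have b4 := (hS x).g_sq x0.le le_rfl
      rw [S.W4_eq] at b1
      have pw : 0 < x ^ (-1 - γ) := Real.rpow_pos_of_pos x0 _
      have e1 : x ^ γ * (x ^ (-1 - γ) * x) = 1 := by
        rw [← Real.rpow_add_one x0.ne', ← Real.rpow_add x0]
        rw [show γ + (-1 - γ + 1) = 0 by ring, Real.rpow_zero]
      have pg : 0 < x ^ γ := Real.rpow_pos_of_pos x0 _
      have b5 : S.g x ≤ S.Y a * x ^ γ := by
        have h1 : x ^ (-1 - γ) * (x * S.g x) ≤ x ^ (-1 - γ) * S.c x :=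
          mul_le_mul_of_nonneg_left (by linarith) pw.le
        have h2 : x ^ (-1 - γ) * (x * S.g x) ≤ S.Y a := h1.trans b2
        calc S.g x = x ^ γ * (x ^ (-1 - γ) * x) * S.g x := by rw [e1, one_mul]
          _ = x ^ γ * (x ^ (-1 - γ) * (x * S.g x)) := by ring
          _ ≤ x ^ γ * S.Y a := by gcongr
          _ = _ := by ring
      have b6 := pow_le_pow_left₀ b3.le b5 2
      have e2 : (x ^ γ) ^ 2 = x ^ (2 * γ) := by
        rw [← Real.rpow_natCast, ← Real.rpow_mul x0.le]; congr 1; push_cast; ring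
      rw [mul_pow, e2, b4] at b6
      linarith
    · filter_upwards [eventually_ge_atTop (2 * b)] with x hx
      have := w0 x (by linarith)
      have h1 : x ^ 2 / 4 ≤ (x - b) ^ 2 := by nlinarith
      nlinarith
  refine ⟨S.W1 a * S.W3 a, fun x hx => ?_⟩
  have x0 : 0 < x := a0.trans_le hx
  have w1 : S.W1 x ≤ S.W1 a :=
    cmp (G := fun _ => S.W1 a) (G' := fun _ => 0) hx S.cont_W1.continuousOn (fun t _ _ => S.d_W1 t)
      (fun x => hasDerivAt_const _ _) le_rfl (fun t t0 t1 => W2n t t0.le)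
  have w3 : S.W3 x ≤ S.W3 a :=
    cmp (G := fun _ => S.W3 a) (G' := fun _ => 0) hx S.cont_W3.continuousOn (fun t _ _ => S.d_W3 t)
      (fun x => hasDerivAt_const _ _) le_rfl (fun t t0 t1 => h4 t t0.le)
  have e1 : x ^ (-2 * γ - 1) * x = x ^ (-2 * γ) := by
    rw [← Real.rpow_add_one x0.ne']; congr 1; ring
  have e2 : x ^ (-2 * γ) ≤ 1 := Real.rpow_le_one_of_one_le_of_nonpos (ha.trans hx) (by linarith)
  have e3 : S.Q x ≤ x * S.W1 x := by
    rw [Q]; have := (hS x).W0_pos x0 le_rfl; nlinarith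
  have p3 := h3 x hx
  have p1 := W1p x hx
  have pw : 0 < x ^ (-2 * γ - 1) := Real.rpow_pos_of_pos x0 _
  calc x ^ (-2 * γ - 1) * (S.Q x * S.W3 x) ≤ x ^ (-2 * γ - 1) * ((x * S.W1 x) * S.W3 x) := by gcongr
    _ = x ^ (-2 * γ) * (S.W1 x * S.W3 x) := by rw [← e1]; ring
    _ ≤ 1 * (S.W1 x * S.W3 x) := by gcongr
    _ ≤ S.W1 a * S.W3 a := by
      rw [one_mul]; exact mul_le_mul w1 w3 p3.le (W1p a le_rfl).le

/-- Bound for `x^{-2γ-1} Q W3` when `Q, W3 < 0 ≤ W4` from `a` on. -/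
lemma QW3_bound_neg (hγ0 : 0 < γ) (hS : ∀ R, S.Good R) {a : ℝ}
    (ha : 1 ≤ a) (hQ : ∀ x, a ≤ x → S.Q x < 0) (h3 : ∀ x, a ≤ x → S.W3 x < 0)
    (h4 : ∀ x, a ≤ x → 0 ≤ S.W4 x) :
    ∃ B, ∀ x, a ≤ x → x ^ (-2 * γ - 1) * (S.Q x * S.W3 x) ≤ B := by
  have a0 : 0 < a := by linarith
  have W2n : ∀ x, a ≤ x → 0 ≤ S.W2 x := by
    intro b hb
    by_contra hW
    push Not at hW
    refine not_W2_neg hS (d := - S.W2 b) (by linarith) ?_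
    filter_upwards [eventually_ge_atTop b] with x hx
    rw [neg_neg]
    exact cmp (G := fun _ => S.W2 b) (G' := fun _ => 0) hx S.cont_W2.continuousOn
      (fun t _ _ => S.d_W2 t) (fun x => hasDerivAt_const _ _) le_rfl
      (fun t t0 t1 => (h3 t (hb.trans t0.le)).le)
  set C := a ^ (-2 * γ) * S.W0 a with hC
  have C0 : 0 < C := mul_pos (Real.rpow_pos_of_pos a0 _) ((hS a).W0_pos a0 le_rfl)
  refine ⟨(2 * γ * C + |S.W1 a|) * (- S.W3 a), fun x hx => ?_⟩
  have x0 : 0 < x := a0.trans_le hx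
  have w1 : S.W1 a ≤ S.W1 x :=
    mono_of hx S.cont_W1.continuousOn (fun t _ _ => S.d_W1 t) (fun t t0 t1 => W2n t t0.le)
  have w3 : S.W3 a ≤ S.W3 x :=
    mono_of hx S.cont_W3.continuousOn (fun t _ _ => S.d_W3 t) (fun t t0 t1 => h4 t t0.le)
  have w0 : x ^ (-2 * γ) * S.W0 x ≤ C := by
    have := mono_of (F := fun x => - (x ^ (-2 * γ) * S.W0 x)) hx
      (d_rpow_mul_cont _ a0 S.cont_W0).neg
      (fun t t0 t1 => (d_rpow_mul _ (a0.trans t0) (S.d_W0 t)).neg) (fun t t0 t1 => by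
        have b1 := hQ t t0.le
        rw [Q] at b1
        have b2 : 0 < t ^ (-2 * γ - 1) := Real.rpow_pos_of_pos (a0.trans t0) _
        rw [Left.nonneg_neg_iff]
        exact mul_nonpos_of_nonneg_of_nonpos b2.le (by linarith))
    linarith
  have e1 : x ^ (-2 * γ - 1) * x = x ^ (-2 * γ) := by
    rw [← Real.rpow_add_one x0.ne']; congr 1; ring
  have e2 : x ^ (-2 * γ) ≤ 1 :=
    Real.rpow_le_one_of_one_le_of_nonpos (ha.trans hx) (by linarith)
  have e4 : x ^ (-2 * γ - 1) ≤ x ^ (-2 * γ) :=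
    Real.rpow_le_rpow_of_exponent_le (ha.trans hx) (by linarith)
  have pw : 0 < x ^ (-2 * γ - 1) := Real.rpow_pos_of_pos x0 _
  have W0p := (hS x).W0_pos x0 le_rfl
  have q : x ^ (-2 * γ - 1) * (- S.Q x) ≤ 2 * γ * C + |S.W1 a| := by
    have h1 : x ^ (-2 * γ - 1) * S.W0 x ≤ C := (mul_le_mul_of_nonneg_right e4 W0p.le).trans w0
    have h2 : - (x ^ (-2 * γ) * S.W1 x) ≤ |S.W1 a| := by
      have h3 : - S.W1 x ≤ |S.W1 a| := by linarith [neg_abs_le (S.W1 a)]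
      have p2 : 0 < x ^ (-2 * γ) := Real.rpow_pos_of_pos x0 _
      calc - (x ^ (-2 * γ) * S.W1 x) = x ^ (-2 * γ) * (- S.W1 x) := by ring
        _ ≤ x ^ (-2 * γ) * |S.W1 a| := by gcongr
        _ ≤ 1 * |S.W1 a| := by gcongr
        _ = _ := one_mul _
    have : x ^ (-2 * γ - 1) * (- S.Q x) = 2 * γ * (x ^ (-2 * γ - 1) * S.W0 x)
        + - (x ^ (-2 * γ) * S.W1 x) := by rw [← e1, Q]; ring
    rw [this]
    gcongr
  have p3 := h3 x hx
  have p4 := hQ x hx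
  calc x ^ (-2 * γ - 1) * (S.Q x * S.W3 x) = (x ^ (-2 * γ - 1) * (- S.Q x)) * (- S.W3 x) := by ring
    _ ≤ (2 * γ * C + |S.W1 a|) * (- S.W3 a) := by
      apply mul_le_mul q (by linarith) (by linarith) (by positivity)

lemma D_bdd (hγ0 : 0 < γ) (hγ1 : γ < 1) (hκ : κ < 0) (hS : ∀ R, S.Good R) (hA : ¬ InA γ κ) :
    ∃ m, ∀ x, 1 ≤ x → m ≤ S.D x := by
  by_cases hf : ∃ᶠ x in atTop, S.E x ≤ 0
  · refine ⟨0, fun x hx => ?_⟩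
    obtain ⟨y, hy1, hy2⟩ := (hf.and_eventually (eventually_ge_atTop x)).exists
    have y0 : 0 < y := by linarith
    have := D_ge hγ0 hκ hS y0
    have p : 0 < y ^ (-2 * γ - 4) := Real.rpow_pos_of_pos y0 _
    have h2 := D_anti hγ0 hγ1 hκ hS (by linarith) hy2
    nlinarith
  · obtain ⟨a₀, ha₀⟩ := eventually_atTop.1 (not_frequently.1 hf)
    set a := max a₀ 1 with ha
    have a1 : 1 ≤ a := le_max_right _ _
    have Ep : ∀ x, a ≤ x → 0 < S.E x := fun x hx => not_le.1 (ha₀ x ((le_max_left _ _).trans hx))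
    have QW : ∀ x, a ≤ x → 0 < S.Q x * S.W3 x := fun x hx => by
      have h1 := Ep x hx
      have h2 := S.qf_nonneg hγ0 hγ1 x
      have x0 : 0 < x := by linarith
      rw [E] at h1
      have h3 : 0 < x ^ 3 * (S.Q x * S.W3 x) := by linarith
      exact pos_of_mul_pos_right h3 (by positivity)
    have W4s : ∀ x, a ≤ x → S.Q x * S.W4 x ≤ 0 := fun x hx => by
      by_contra h
      exact absurd (E_nonpos hγ0 hγ1 hS hA (by linarith) (not_le.1 h)) (not_le.2 (Ep x hx))
    obtain ⟨B, hB⟩ : ∃ B, ∀ x, a ≤ x → x ^ (-2 * γ - 1) * (S.Q x * S.W3 x) ≤ B := by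
      rcases lt_or_ge 0 (S.Q a) with h | h
      · have Qp : ∀ x, a ≤ x → 0 < S.Q x := fun x hx => by
          by_contra hq
          obtain ⟨z, z1, z2, z3, z4⟩ := first_zero hx S.cont_Q.continuousOn h (not_lt.1 hq)
          have := QW z z1.le
          rw [z3] at this; linarith
        exact QW3_bound_pos hγ0 hγ1 hS a1 Qp
          (fun x hx => pos_of_mul_pos_right (QW x hx) (Qp x hx).le)
          (fun x hx => by
            by_contra h4
            exact absurd (W4s x hx) (not_le.2 (mul_pos (Qp x hx) (not_le.1 h4))))
      · have h : S.Q a < 0 := lt_of_le_of_ne h fun h => by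
          have := QW a le_rfl
          rw [h] at this; linarith
        have Qp : ∀ x, a ≤ x → S.Q x < 0 := fun x hx => by
          by_contra hq
          obtain ⟨z, z1, z2, z3, z4⟩ := first_zero (φ := fun x => - S.Q x) hx
            S.cont_Q.neg.continuousOn (by linarith) (by linarith [not_lt.1 hq])
          have := QW z z1.le
          rw [neg_eq_zero.1 z3] at this; linarith
        exact QW3_bound_neg hγ0 hS a1 Qp
          (fun x hx => neg_of_mul_pos_right (QW x hx) (Qp x hx).le)
          (fun x hx => by
            by_contra h4
            exact absurd (W4s x hx) (not_le.2 (mul_pos_of_neg_of_neg (Qp x hx) (not_le.1 h4))))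
    refine ⟨-6 * B, fun x hx => ?_⟩
    have h0 := D_anti hγ0 hγ1 hκ hS (by linarith) (le_max_left x a)
    have p : 0 < max x a := lt_max_of_lt_left (by linarith)
    have h1 := D_ge hγ0 hκ hS p
    have h2 := S.E_le hγ0 hγ1 p
    have h3 := hB _ (le_max_right x a)
    linarith

lemma Y_pos (hγ0 : 0 < γ) (hκ : κ < 0) (hS : ∀ R, S.Good R) {x : ℝ} (hx : 0 < x) : 0 < S.Y x :=
  mul_pos (Real.rpow_pos_of_pos hx _) (by linarith [c_ge hγ0 hS hx.le])

/-- `Y` converges: the variation of `Y^{3/2}` is controlled by that of `D` and of `x^{-1-γ}`. -/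
lemma Y_tendsto (hγ0 : 0 < γ) (hγ1 : γ < 1) (hκ : κ < 0) (hS : ∀ R, S.Good R) (hA : ¬ InA γ κ) :
    ∃ l, 0 ≤ l ∧ Tendsto S.Y atTop (𝓝 l) := by
  obtain ⟨m, hm⟩ := D_bdd hγ0 hγ1 hκ hS hA
  obtain ⟨lD, hD⟩ := exists_lim (F := S.D)
    (fun x y hx hy => D_anti hγ0 hγ1 hκ hS (by linarith) hy) hm
  have Yp : ∀ x, 0 < x → 0 < S.Y x := fun x hx => Y_pos hγ0 hκ hS hx
  have cY : ∀ a b : ℝ, 0 < a → ContinuousOn S.Y (Icc a b) := fun a b ha =>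
    d_rpow_mul_cont _ ha S.cont_c
  set G : ℝ → ℝ := fun x => S.Y x ^ (3 / 2 : ℝ) + 3 / 8 * S.D x + 3 / 4 * x ^ (-1 - γ) with hG
  have G1 : ∀ x y, 1 ≤ x → x ≤ y → G y ≤ G x := by
    intro x y hx hxy
    have x0 : 0 < x := by linarith
    have dG : ∀ t, 0 < t → HasDerivAt G ((1 + γ) * t ^ (-2 - γ) * S.W4 t * (3 / 2) *
        S.Y t ^ ((3 / 2 : ℝ) - 1) + 3 / 8 * (t ^ (-2 * γ - 5) * (- (1 + γ) * t ^ 2 * S.W4 t ^ 2 *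
      (t * S.g t + 2 * S.c t) - 6 * S.rf t)) + 3 / 4 * ((-1 - γ) * t ^ (-1 - γ - 1))) t :=
      fun t ht => (((d_Y ht).rpow_const (Or.inl (Yp t ht).ne')).add
        ((d_D hS ht).const_mul _)).add
        ((Real.hasDerivAt_rpow_const (Or.inl ht.ne')).const_mul _)
    have := mono_of (F := fun x => - G x) hxy
      (fun t ht => (dG t (x0.trans_le ht.1)).continuousAt.neg.continuousWithinAt)
      (fun t t0 t1 => (dG t (x0.trans t0)).neg) (fun t t0 t1 => by
        have p := x0.trans t0
        have a1 := (hS t).g_pos p le_rfl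
        have a2 : 0 < S.c t := by linarith [c_ge hγ0 hS p.le]
        have a3 := S.rf_nonneg hγ0 hγ1 t
        have e0 : S.Y t ^ ((3 / 2 : ℝ) - 1) = √(S.Y t) := by
          rw [Real.sqrt_eq_rpow]; norm_num
        have e1 : t ^ (-2 * γ - 5) * t ^ 2 * S.c t = t ^ (-2 - γ) * S.Y t := by
          rw [Y, ← mul_assoc, ← Real.rpow_natCast, ← Real.rpow_add p, ← Real.rpow_add p]
          congr 2; push_cast; ring
        rw [e0, show -1 - γ - 1 = -2 - γ by ring]
        have s2 := Real.sq_sqrt (Yp t p).le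
        set s := √(S.Y t)
        have pw : 0 < t ^ (-2 - γ) := Real.rpow_pos_of_pos p _
        have pv : 0 < t ^ (-2 * γ - 5) := Real.rpow_pos_of_pos p _
        set u := t ^ (-2 - γ)
        set v := t ^ (-2 * γ - 5)
        rw [← s2] at e1
        have e2 : -((1 + γ) * u * S.W4 t * (3 / 2) * s +
            3 / 8 * (v * (-(1 + γ) * t ^ 2 * S.W4 t ^ 2 * (t * S.g t + 2 * S.c t) - 6 * S.rf t)) +
            3 / 4 * ((-1 - γ) * u)) =
            3 / 4 * (1 + γ) * (u * (s * S.W4 t - 1) ^ 2)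
            + 3 / 8 * v * ((1 + γ) * t ^ 2 * S.W4 t ^ 2 * (t * S.g t) + 6 * S.rf t) := by
          linear_combination (3 / 4 * (1 + γ) * S.W4 t ^ 2) * e1
        rw [e2]
        positivity)
    linarith
  obtain ⟨lG, hl⟩ := exists_lim (F := G) (m := 3 / 8 * m) G1 (fun x hx => by
    have x0 : 0 < x := by linarith
    have h1 := Real.rpow_pos_of_pos (Yp x x0) (3 / 2 : ℝ)
    have h2 := Real.rpow_pos_of_pos x0 (-1 - γ)
    have h3 := hm x hx
    simp only [hG]
    linarith)
  have hz : Tendsto (fun x : ℝ => x ^ (-1 - γ)) atTop (𝓝 0) := by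
    have := tendsto_rpow_neg_atTop (y := 1 + γ) (by linarith)
    simpa only [neg_add'] using this
  have hF : Tendsto (fun x => S.Y x ^ (3 / 2 : ℝ)) atTop (𝓝 (lG - 3 / 8 * lD - 3 / 4 * 0)) := by
    refine ((hl.sub (hD.const_mul _)).sub (hz.const_mul _)).congr fun x => ?_
    simp only [hG]; ring
  have hY : Tendsto S.Y atTop (𝓝 ((lG - 3 / 8 * lD - 3 / 4 * 0) ^ (2 / 3 : ℝ))) := by
    refine (hF.rpow_const (p := (2 / 3 : ℝ)) (Or.inr (by norm_num))).congr' ?_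
    filter_upwards [eventually_gt_atTop 0] with x hx
    rw [← Real.rpow_mul (Yp x hx).le]; norm_num
  refine ⟨_, ge_of_tendsto hY ?_, hY⟩
  filter_upwards [eventually_gt_atTop 0] with x hx using (Yp x hx).le

end Prof

/-! ### The limit is positive, and `g ~ C x^γ` -/

/-- If `F' ≤ -k/x` wherever `F ≥ ε` (for large `x`), then eventually `F ≤ ε`. -/
lemma eventually_le_of_push {F F' : ℝ → ℝ} {ε k a : ℝ} (ha : 0 < a) (hk : 0 < k)
    (hd : ∀ x, a ≤ x → HasDerivAt F (F' x) x)
    (h : ∀ x, a ≤ x → ε ≤ F x → F' x ≤ -(k / x)) : ∀ᶠ x in atTop, F x ≤ ε := by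
  obtain ⟨b, hb, hbε⟩ : ∃ b, a ≤ b ∧ F b ≤ ε := by
    by_contra hcon
    push Not at hcon
    have h1 : ∀ x, a ≤ x → F x ≤ F a + k * Real.log a - k * Real.log x := fun x hx => by
      have := mono_of (F := fun x => - (F x + k * Real.log x)) hx
        (fun t ht => ((hd t ht.1).add ((Real.hasDerivAt_log
          (ha.trans_le ht.1).ne').const_mul k)).continuousAt.neg.continuousWithinAt)
        (fun t t0 t1 => ((hd t t0.le).add ((Real.hasDerivAt_log
          (ha.trans t0).ne').const_mul k)).neg)
        (fun t t0 t1 => by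
          have := h t t0.le (hcon t t0.le).le
          rw [← div_eq_mul_inv]
          linarith)
      linarith
    have h2 : Tendsto (fun x => F a + k * Real.log a - k * Real.log x) atTop atBot := by
      have := (Real.tendsto_log_atTop.const_mul_atTop hk)
      simpa only [sub_eq_add_neg, Function.comp_def] using
        tendsto_atBot_add_const_left _ (F a + k * Real.log a) (tendsto_neg_atTop_atBot.comp this)
    obtain ⟨x, x1, x2⟩ := ((eventually_ge_atTop a).and (h2.eventually_lt_atBot ε)).exists
    linarith [h1 x x1, hcon x x1]
  filter_upwards [eventually_ge_atTop b] with z hz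
  by_contra hlt
  push Not at hlt
  -- the last time before `z` at which `F = ε`
  obtain ⟨s, s1, s2, s3, s4⟩ := first_zero (φ := fun s => F (-s) - ε) (a := -z) (b := -b)
    (by linarith)
    (fun s hs => by
      have : ContinuousAt F (-s) := (hd (-s) (by linarith [hs.2])).continuousAt
      exact ((this.comp continuous_neg.continuousAt).sub continuousAt_const).continuousWithinAt)
    (by simpa using hlt) (by simpa using hbε)
  have := mono_of (F := fun x => - F x) (a := -s) (b := z) (by linarith)
    (fun t ht => (hd t (by linarith [ht.1])).continuousAt.neg.continuousWithinAt)
    (fun t t0 t1 => (hd t (by linarith)).neg)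
    (fun t t0 t1 => by
      have h1 := s4 (-t) (by linarith) (by linarith)
      rw [neg_neg] at h1
      have h2 := h t (by linarith) (by linarith)
      have h3 : 0 < k / t := div_pos hk (by linarith)
      linarith)
  linarith

namespace Prof
variable {γ κ : ℝ} {S : Prof γ κ}

/-- The first iterated primitive of `c`. -/
noncomputable def C1 (S : Prof γ κ) (x : ℝ) : ℝ :=
  -κ * x + (1 + γ) * (x * mom S.h 1 x - mom S.h 2 x)
/-- The second iterated primitive of `c`. -/
noncomputable def C2 (S : Prof γ κ) (x : ℝ) : ℝ :=
  -κ * x ^ 2 / 2 + (1 + γ) / 2 * (x ^ 2 * mom S.h 1 x - 2 * x * mom S.h 2 x + mom S.h 3 x)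
/-- The third iterated primitive of `c`. -/
noncomputable def C3 (S : Prof γ κ) (x : ℝ) : ℝ :=
  -κ * x ^ 3 / 6 + (1 + γ) / 6 * (x ^ 3 * mom S.h 1 x - 3 * x ^ 2 * mom S.h 2 x
    + 3 * x * mom S.h 3 x - mom S.h 4 x)
/-- The fourth iterated primitive of `c`. -/
noncomputable def C4 (S : Prof γ κ) (x : ℝ) : ℝ :=
  -κ * x ^ 4 / 24 + (1 + γ) / 24 * (x ^ 4 * mom S.h 1 x - 4 * x ^ 3 * mom S.h 2 x
    + 6 * x ^ 2 * mom S.h 3 x - 4 * x * mom S.h 4 x + mom S.h 5 x)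

lemma d_C1 (x : ℝ) : HasDerivAt S.C1 (S.c x) x := by
  have h1 := mom_hasDerivAt S.cont 1 x
  have h2 := mom_hasDerivAt S.cont 2 x
  have hx := hasDerivAt_id x
  have := (hx.const_mul (-κ)).add (((hx.mul h1).sub h2).const_mul (1 + γ))
  refine HasDerivAt.congr_deriv this ?_
  simp only [c, id]; ring

lemma d_C2 (x : ℝ) : HasDerivAt S.C2 (S.C1 x) x := by
  have h1 := mom_hasDerivAt S.cont 1 x
  have h2 := mom_hasDerivAt S.cont 2 x
  have h3 := mom_hasDerivAt S.cont 3 x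
  have hx := hasDerivAt_id x
  have := (((hx.pow 2).const_mul (-κ)).div_const 2).add
    (((((hx.pow 2).mul h1).sub ((hx.const_mul 2).mul h2)).add h3).const_mul ((1 + γ) / 2))
  refine HasDerivAt.congr_deriv this ?_
  simp only [C1, id, Pi.pow_apply]; push_cast; ring

lemma d_C3 (x : ℝ) : HasDerivAt S.C3 (S.C2 x) x := by
  have h1 := mom_hasDerivAt S.cont 1 x
  have h2 := mom_hasDerivAt S.cont 2 x
  have h3 := mom_hasDerivAt S.cont 3 x
  have h4 := mom_hasDerivAt S.cont 4 x
  have hx := hasDerivAt_id x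
  have := (((hx.pow 3).const_mul (-κ)).div_const 6).add
    ((((((hx.pow 3).mul h1).sub (((hx.pow 2).const_mul 3).mul h2)).add
      ((hx.const_mul 3).mul h3)).sub h4).const_mul ((1 + γ) / 6))
  refine HasDerivAt.congr_deriv this ?_
  simp only [C2, id, Pi.pow_apply]; push_cast; ring

lemma d_C4 (x : ℝ) : HasDerivAt S.C4 (S.C3 x) x := by
  have h1 := mom_hasDerivAt S.cont 1 x
  have h2 := mom_hasDerivAt S.cont 2 x
  have h3 := mom_hasDerivAt S.cont 3 x
  have h4 := mom_hasDerivAt S.cont 4 x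
  have h5 := mom_hasDerivAt S.cont 5 x
  have hx := hasDerivAt_id x
  have := (((hx.pow 4).const_mul (-κ)).div_const 24).add
    (((((((hx.pow 4).mul h1).sub (((hx.pow 3).const_mul 4).mul h2)).add
      (((hx.pow 2).const_mul 6).mul h3)).sub ((hx.const_mul 4).mul h4)).add h5).const_mul
        ((1 + γ) / 24))
  refine HasDerivAt.congr_deriv this ?_
  simp only [C3, id, Pi.pow_apply]; push_cast; ring

lemma C4_identity (x : ℝ) :
    (-5 - γ) * S.C4 x + x * S.C3 x = (1 + γ) * (S.W0 x - x ^ 2 / 2) := by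
  simp only [C3, C4, W0]; ring

lemma C4_bounds (hγ0 : 0 < γ) (hS : ∀ R, S.Good R) (hκ : κ < 0) {x : ℝ} (hx : 0 ≤ x) :
    -κ * x ^ 4 / 24 ≤ S.C4 x ∧ S.C4 x ≤ x ^ 4 * S.c x := by
  have cc : ∀ {F F' : ℝ → ℝ}, (∀ x, HasDerivAt F (F' x) x) → Continuous F := fun h =>
    continuous_iff_continuousAt.2 fun x => (h x).continuousAt
  have z1 : S.C1 0 = 0 := by simp [C1, mom_zero]
  have z2 : S.C2 0 = 0 := by simp [C2, mom_zero]
  have z3 : S.C3 0 = 0 := by simp [C3, mom_zero]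
  have z4 : S.C4 0 = 0 := by simp [C4, mom_zero]
  have l1 : ∀ x, 0 ≤ x → -κ * x ≤ S.C1 x := fun x x0 =>
    cmp' (G := fun x => -κ * x) (G' := fun _ => -κ) x0 (cc S.d_C1).continuousOn
      (fun t _ _ => S.d_C1 t)
      (d_of_poly 0 (-κ) 0 0 0 0 0 0 0 (fun x => by ring) (fun x => by ring)) (by simp [z1])
      (fun t t0 t1 => c_ge hγ0 hS t0.le)
  have l2 : ∀ x, 0 ≤ x → -κ * x ^ 2 / 2 ≤ S.C2 x := fun x x0 =>
    cmp' (G := fun x => -κ * x ^ 2 / 2) (G' := fun x => -κ * x) x0 (cc S.d_C2).continuousOn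
      (fun t _ _ => S.d_C2 t)
      (d_of_poly 0 0 (-κ / 2) 0 0 0 0 0 0 (fun x => by ring) (fun x => by ring)) (by simp [z2])
      (fun t t0 t1 => l1 t t0.le)
  have l3 : ∀ x, 0 ≤ x → -κ * x ^ 3 / 6 ≤ S.C3 x := fun x x0 =>
    cmp' (G := fun x => -κ * x ^ 3 / 6) (G' := fun x => -κ * x ^ 2 / 2) x0 (cc S.d_C3).continuousOn
      (fun t _ _ => S.d_C3 t)
      (d_of_poly 0 0 0 (-κ / 6) 0 0 0 0 0 (fun x => by ring) (fun x => by ring)) (by simp [z3])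
      (fun t t0 t1 => l2 t t0.le)
  have l4 : -κ * x ^ 4 / 24 ≤ S.C4 x :=
    cmp' (G := fun x => -κ * x ^ 4 / 24) (G' := fun x => -κ * x ^ 3 / 6) hx (cc S.d_C4).continuousOn
      (fun t _ _ => S.d_C4 t)
      (d_of_poly 0 0 0 0 (-κ / 24) 0 0 0 0 (fun x => by ring) (fun x => by ring)) (by simp [z4])
      (fun t t0 t1 => l3 t t0.le)
  refine ⟨l4, ?_⟩
  -- each primitive is nondecreasing, so integrating gains at most a factor `x`
  have step : ∀ {F F' : ℝ → ℝ}, (∀ x, HasDerivAt F (F' x) x) → F 0 = 0 →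
      ∀ x, 0 ≤ x → (∀ t, 0 ≤ t → t ≤ x → F' t ≤ F' x) → F x ≤ x * F' x := by
    intro F F' hd h0 x x0 hm
    have := cmp (G := fun t => F' x * t) (G' := fun _ => F' x) x0 (cc hd).continuousOn
      (fun t _ _ => hd t)
      (d_of_poly 0 (F' x) 0 0 0 0 0 0 0 (fun x => by ring) (fun x => by ring)) (by simp [h0])
      (fun t t0 t1 => hm t t0.le t1.le)
    linarith
  have mono : ∀ {F F' : ℝ → ℝ}, (∀ x, HasDerivAt F (F' x) x) → (∀ t, 0 ≤ t → 0 ≤ F' t) →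
      ∀ x t, 0 ≤ t → t ≤ x → F t ≤ F x := fun hd hp x t t0 t1 =>
    mono_of t1 (cc hd).continuousOn (fun s _ _ => hd s) (fun s s0 _ => hp s (t0.trans s0.le))
  have p0 : ∀ t, 0 ≤ t → 0 ≤ S.c t := fun t ht => by linarith [c_ge hγ0 hS ht]
  have p1 : ∀ t, 0 ≤ t → 0 ≤ S.C1 t := fun t ht => (l1 t ht).trans' (by nlinarith)
  have p2 : ∀ t, 0 ≤ t → 0 ≤ S.C2 t := fun t ht => (l2 t ht).trans' (by nlinarith [sq_nonneg t])
  have s1 := step S.d_C1 z1 x hx (fun t t0 t1 => c_mono hγ0 hS t0 t1)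
  have s2 := step S.d_C2 z2 x hx (mono S.d_C1 p0 x)
  have s3 := step S.d_C3 z3 x hx (mono S.d_C2 p1 x)
  have s4 := step S.d_C4 z4 x hx (mono S.d_C3 p2 x)
  calc S.C4 x ≤ x * S.C3 x := s4
    _ ≤ x * (x * (x * (x * S.c x))) := by
      gcongr
      exact s3.trans (mul_le_mul_of_nonneg_left (s2.trans (mul_le_mul_of_nonneg_left s1 hx)) hx)
    _ = _ := by ring

/-- The limit of `Y` is positive: otherwise `x^{-5-γ} C4 - O(x^{-3-γ})` would be nondecreasing
with limit `0`, so that `C4 = O(x²)`, against `C4 ≥ -κ x⁴/24`. -/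
lemma Y_lim_pos (hγ0 : 0 < γ) (hκ : κ < 0) (hS : ∀ R, S.Good R) :
    ¬ Tendsto S.Y atTop (𝓝 0) := by
  intro hY
  have hc : Continuous S.C4 := continuous_iff_continuousAt.2 fun x => (S.d_C4 x).continuousAt
  set k := (1 + γ) / (2 * (3 + γ)) with hk
  have hk' : k * (3 + γ) = (1 + γ) / 2 := by rw [hk]; field_simp
  have mono : ∀ x y, 1 ≤ x → x ≤ y → x ^ (-5 - γ) * (S.C4 x - k * x ^ 2) ≤
      y ^ (-5 - γ) * (S.C4 y - k * y ^ 2) := by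
    intro x y hx hxy
    have x0 : 0 < x := by linarith
    have hd : ∀ t, HasDerivAt (fun x => S.C4 x - k * x ^ 2) (S.C3 t - k * (2 * t)) t := fun t => by
      refine ((S.d_C4 t).sub (((hasDerivAt_id t).pow 2).const_mul k)).congr_deriv ?_
      simp
    refine mono_of (F := fun x => x ^ (-5 - γ) * (S.C4 x - k * x ^ 2)) hxy
      (d_rpow_mul_cont _ x0 (by fun_prop)) (fun t t0 t1 => d_rpow_mul _ (x0.trans t0) (hd t))
      (fun t t0 t1 => ?_)
    have p := x0.trans t0
    have := (hS t).W0_pos p le_rfl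
    have e : (-5 - γ) * (S.C4 t - k * t ^ 2) + t * (S.C3 t - k * (2 * t)) = (1 + γ) * S.W0 t := by
      linear_combination S.C4_identity t + t ^ 2 * hk'
    rw [e]; positivity
  have up : ∀ x : ℝ, 0 < x → x ^ (-5 - γ) * (S.C4 x - k * x ^ 2) ≤ S.Y x := fun x x0 => by
    have h1 := (S.C4_bounds hγ0 hS hκ x0.le).2
    have p : 0 < x ^ (-5 - γ) := Real.rpow_pos_of_pos x0 _
    have e : x ^ (-1 - γ) = x ^ (-5 - γ) * x ^ 4 := by
      rw [← Real.rpow_natCast, ← Real.rpow_add x0]; congr 1; push_cast; ring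
    rw [Y, e, mul_assoc]
    have k0 : 0 < k := by positivity
    gcongr
    nlinarith [sq_nonneg x]
  have le0 : ∀ x, 1 ≤ x → S.C4 x ≤ k * x ^ 2 := fun x hx => by
    have x0 : 0 < x := by linarith
    have : x ^ (-5 - γ) * (S.C4 x - k * x ^ 2) ≤ 0 := by
      refine ge_of_tendsto hY ?_
      filter_upwards [eventually_ge_atTop x] with y hy
      exact (mono x y hx hy).trans (up y (by linarith))
    have p : 0 < x ^ (-5 - γ) := Real.rpow_pos_of_pos x0 _
    by_contra h
    push Not at h
    nlinarith [mul_pos p (sub_pos.2 h)]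
  have ht : Tendsto (fun x : ℝ => -κ * x) atTop atTop :=
    tendsto_id.const_mul_atTop (by linarith)
  obtain ⟨x, x1, x2⟩ := ((eventually_ge_atTop 1).and (ht.eventually_gt_atTop (24 * k))).exists
  have h1 := le0 x x1
  have h2 := (S.C4_bounds hγ0 hS hκ (by linarith : 0 ≤ x)).1
  have h3 : 0 < x ^ 2 := by positivity
  have h4 : 24 * k * x ^ 2 < -κ * x * x ^ 2 := by gcongr
  have h5 : -κ * x * x ^ 2 * 1 ≤ -κ * x * x ^ 2 * x := by
    have : 0 < -κ * x * x ^ 2 := by nlinarith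
    gcongr
  nlinarith

/-- Logarithm of the ratio `x g / c`. -/
noncomputable def L (S : Prof γ κ) (x : ℝ) : ℝ := Real.log x + Real.log (S.g x) - Real.log (S.c x)

lemma exp_L (hγ0 : 0 < γ) (hκ : κ < 0) (hS : ∀ R, S.Good R) {x : ℝ} (hx : 0 < x) :
    Real.exp (S.L x) * S.c x = x * S.g x := by
  have a1 := (hS x).g_pos hx le_rfl
  have a2 : 0 < S.c x := by linarith [c_ge hγ0 hS hx.le]
  rw [L, Real.exp_sub, Real.exp_add, Real.exp_log hx, Real.exp_log a1, Real.exp_log a2]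
  field_simp

lemma d_L (hγ0 : 0 < γ) (hκ : κ < 0) (hS : ∀ R, S.Good R) {x : ℝ} (hx : 0 < x) :
    HasDerivAt S.L (((1 + γ) * (1 - Real.exp (S.L x)) + S.Q x / (2 * S.W0 x)) / x) x := by
  have a1 := (hS x).g_pos hx le_rfl
  have a2 : 0 < S.c x := by linarith [c_ge hγ0 hS hx.le]
  have a3 := (hS x).W0_pos hx le_rfl
  have a4 := (hS x).g_sq hx.le le_rfl
  have := ((Real.hasDerivAt_log hx.ne').add (((hS (x + 1)).d_g hx (by linarith)).log a1.ne')).sub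
    ((S.d_c x).log a2.ne')
  refine HasDerivAt.congr_deriv this ?_
  have e : Real.exp (S.L x) = x * S.g x / S.c x := by
    rw [eq_div_iff a2.ne']; exact exp_L hγ0 hκ hS hx
  rw [e, Q, div_div, ← pow_two, a4]
  field_simp
  ring

lemma L_tendsto (hγ0 : 0 < γ) (hγ1 : γ < 1) (hκ : κ < 0) (hS : ∀ R, S.Good R) (hA : ¬ InA γ κ)
    {l : ℝ} (hl : 0 < l) (hY : Tendsto S.Y atTop (𝓝 l)) : Tendsto S.L atTop (𝓝 0) := by
  -- where `Q W4 > 0`, the bound on `D` forces `x g / c` to be close to `1`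
  have key : ∀ x, 1 ≤ x → 0 < S.Q x * S.W4 x →
      x ^ (1 + γ) * S.Y x ^ 3 * (Real.exp (S.L x) - 1) ^ 2 ≤ S.D 1 := by
    intro x x1 hq
    have x0 : 0 < x := by linarith
    refine le_trans ?_ (D_anti hγ0 hγ1 hκ hS one_pos x1)
    have a1 := (hS x).g_pos x0 le_rfl
    have a2 : 0 < S.c x := by linarith [c_ge hγ0 hS x0.le]
    have hE := E_nonpos hγ0 hγ1 hS hA x0 hq
    have ex := exp_L hγ0 hκ hS x0
    have e : x ^ (1 + γ) * S.Y x ^ 3 = x ^ (-2 * γ - 4) * (x ^ 2 * S.c x ^ 3) := by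
      rw [Y, mul_pow, ← Real.rpow_natCast (x ^ (-1 - γ)), ← Real.rpow_mul x0.le, ← mul_assoc,
        ← mul_assoc, ← Real.rpow_natCast x 2, ← Real.rpow_add x0, ← Real.rpow_add x0]
      congr 2; push_cast; ring
    rw [e, D, (hS x).P_eq x0.le le_rfl, mul_assoc]
    have p : 0 < x ^ (-2 * γ - 4) := Real.rpow_pos_of_pos x0 _
    have e2 : x ^ 2 * S.c x ^ 3 * (Real.exp (S.L x) - 1) ^ 2 = x ^ 2 * S.W4 x ^ 2 * S.c x := by
      rw [S.W4_eq, ← ex]; ring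
    rw [e2]
    gcongr
    have : 0 ≤ x ^ 2 * S.W4 x ^ 2 * (2 * (x * S.g x)) := by positivity
    linarith
  have hbig : Tendsto (fun x : ℝ => x ^ (1 + γ) * S.Y x ^ 3) atTop atTop :=
    (tendsto_rpow_atTop (by linarith : 0 < 1 + γ)).atTop_mul_pos (by positivity) (hY.pow 3)
  have close : ∀ η, 0 < η → ∀ᶠ x in atTop, 0 < S.Q x * S.W4 x →
      (Real.exp (S.L x) - 1) ^ 2 < η := by
    intro η hη
    filter_upwards [eventually_ge_atTop 1, hbig.eventually_gt_atTop (|S.D 1| / η)] with x x1 x2 hq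
    have := key x x1 hq
    rw [div_lt_iff₀ hη] at x2
    by_contra hcon
    push Not at hcon
    have pY : 0 < S.Y x := Y_pos hγ0 hκ hS (by linarith)
    have pp : 0 < x ^ (1 + γ) * S.Y x ^ 3 := by positivity
    have := mul_le_mul_of_nonneg_left hcon pp.le
    linarith [le_abs_self (S.D 1)]
  have W4s : ∀ x, 0 < x → S.W4 x = S.c x * (Real.exp (S.L x) - 1) := fun x x0 => by
    rw [S.W4_eq, ← exp_L hγ0 hκ hS x0]; ring
  have up : ∀ ε, 0 < ε → ∀ᶠ x in atTop, S.L x ≤ ε := by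
    intro ε hε
    have e1 : 0 < Real.exp ε - 1 := by linarith [Real.add_one_lt_exp hε.ne']
    obtain ⟨a, ha⟩ := eventually_atTop.1 (close _ (by positivity : 0 < (Real.exp ε - 1) ^ 2))
    refine eventually_le_of_push (a := max a 1) (k := (1 + γ) * (Real.exp ε - 1))
      (lt_max_of_lt_right one_pos) (by positivity)
      (fun x hx => d_L hγ0 hκ hS (by linarith [(le_max_right a 1).trans hx])) (fun x hx hL => ?_)
    have x0 : 0 < x := by linarith [(le_max_right a 1).trans hx]
    have ee : Real.exp ε ≤ Real.exp (S.L x) := Real.exp_le_exp.2 hL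
    have a2 : 0 < S.c x := by linarith [c_ge hγ0 hS x0.le]
    have a3 := (hS x).W0_pos x0 le_rfl
    have w4 : 0 < S.W4 x := by rw [W4s x x0]; exact mul_pos a2 (by linarith)
    have q : S.Q x ≤ 0 := by
      by_contra hq
      have := ha x ((le_max_left _ _).trans hx) (mul_pos (not_le.1 hq) w4)
      nlinarith
    rw [← neg_div]
    gcongr
    have : S.Q x / (2 * S.W0 x) ≤ 0 := div_nonpos_of_nonpos_of_nonneg q (by positivity)
    nlinarith
  have lo : ∀ ε, 0 < ε → ∀ᶠ x in atTop, - S.L x ≤ ε := by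
    intro ε hε
    have e1 : 0 < 1 - Real.exp (-ε) := by
      have : Real.exp (-ε) < 1 := by rw [Real.exp_lt_one_iff]; linarith
      linarith
    obtain ⟨a, ha⟩ := eventually_atTop.1 (close _ (by positivity : 0 < (1 - Real.exp (-ε)) ^ 2))
    refine eventually_le_of_push (F := fun x => - S.L x) (a := max a 1)
      (k := (1 + γ) * (1 - Real.exp (-ε)))
      (lt_max_of_lt_right one_pos) (by positivity)
      (fun x hx => (d_L hγ0 hκ hS (by linarith [(le_max_right a 1).trans hx])).neg)
      (fun x hx hL => ?_)
    have x0 : 0 < x := by linarith [(le_max_right a 1).trans hx]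
    have ee : Real.exp (S.L x) ≤ Real.exp (-ε) := Real.exp_le_exp.2 (by linarith)
    have a2 : 0 < S.c x := by linarith [c_ge hγ0 hS x0.le]
    have a3 := (hS x).W0_pos x0 le_rfl
    have w4 : S.W4 x < 0 := by rw [W4s x x0]; exact mul_neg_of_pos_of_neg a2 (by linarith)
    have q : 0 ≤ S.Q x := by
      by_contra hq
      have := ha x ((le_max_left _ _).trans hx) (mul_pos_of_neg_of_neg (not_le.1 hq) w4)
      nlinarith
    rw [neg_le_neg_iff]
    gcongr
    have : 0 ≤ S.Q x / (2 * S.W0 x) := by positivity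
    nlinarith
  rw [Metric.tendsto_nhds]
  intro ε hε
  filter_upwards [up (ε / 2) (by positivity), lo (ε / 2) (by positivity)] with x h1 h2
  rw [Real.dist_eq, sub_zero, abs_lt]
  constructor <;> linarith

/-- The far-field asymptotics of the critical profile. -/
lemma g_tendsto (hγ0 : 0 < γ) (hγ1 : γ < 1) (hκ : κ < 0) (hS : ∀ R, S.Good R) (hA : ¬ InA γ κ) :
    ∃ l, 0 < l ∧ Tendsto (fun x => S.g x * x ^ (-γ)) atTop (𝓝 l) := by
  obtain ⟨l, hl, hY⟩ := Y_tendsto hγ0 hγ1 hκ hS hA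
  have hl : 0 < l := lt_of_le_of_ne hl fun h => Y_lim_pos hγ0 hκ hS (h ▸ hY)
  refine ⟨l, hl, ?_⟩
  have hL := L_tendsto hγ0 hγ1 hκ hS hA hl hY
  have := ((Real.continuous_exp.tendsto 0).comp hL).mul hY
  rw [Real.exp_zero, one_mul] at this
  refine this.congr' ?_
  filter_upwards [eventually_gt_atTop 0] with x hx
  have ex := exp_L hγ0 hκ hS hx
  have e : x ^ (-γ) = x ^ (-1 - γ) * x := by
    rw [← Real.rpow_add_one hx.ne']; congr 1; ring
  simp only [Function.comp, Y]
  rw [e]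
  linear_combination x ^ (-1 - γ) * ex

end Prof

/-! ### Smoothness of solutions of the Volterra equation -/

/-- The dilation average `x ↦ ∫₀¹ sʲ u(x s) ds`. -/
noncomputable def avg (j : ℕ) (u : ℝ → ℝ) (x : ℝ) : ℝ := ∫ s in (0:ℝ)..1, s ^ j * u (x * s)

lemma cont_avg (j : ℕ) {u : ℝ → ℝ} (hu : Continuous u) : Continuous (avg j u) := by
  unfold avg
  apply intervalIntegral.continuous_parametric_intervalIntegral_of_continuous'
  fun_prop

lemma avg_hasDerivAt (j : ℕ) {u : ℝ → ℝ} (hu : ContDiff ℝ 1 u) (x : ℝ) :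
    HasDerivAt (avg j u) (avg (j + 1) (deriv u) x) x := by
  have hc := hu.continuous
  have hd : Continuous (deriv u) := hu.continuous_deriv le_rfl
  obtain ⟨M, hM⟩ := (isCompact_Icc (a := -(|x| + 1)) (b := |x| + 1)).exists_bound_of_continuousOn
    hd.continuousOn
  refine (intervalIntegral.hasDerivAt_integral_of_dominated_loc_of_deriv_le
    (F := fun x s => s ^ j * u (x * s)) (F' := fun x s => s ^ (j + 1) * deriv u (x * s))
    (bound := fun _ => M) (Metric.ball_mem_nhds x one_pos) ?_ ?_ ?_ ?_ ?_ ?_).2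
  · exact Eventually.of_forall fun y => Continuous.aestronglyMeasurable (by fun_prop)
  · exact Continuous.intervalIntegrable (by fun_prop) _ _
  · exact Continuous.aestronglyMeasurable (by fun_prop)
  · refine Eventually.of_forall fun s hs y hy => ?_
    rw [uIoc_of_le zero_le_one] at hs
    have hy : |y| ≤ |x| + 1 := by
      rw [Metric.mem_ball, Real.dist_eq] at hy
      have := abs_sub_abs_le_abs_sub y x
      linarith
    have h1 : |y * s| ≤ |x| + 1 := by
      rw [abs_mul, abs_of_pos hs.1]
      exact (mul_le_of_le_one_right (abs_nonneg _) hs.2).trans hy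
    have h2 := hM (y * s) (abs_le.1 h1)
    rw [norm_mul, Real.norm_eq_abs, abs_of_nonneg (pow_nonneg hs.1.le _)]
    exact (mul_le_of_le_one_left (norm_nonneg _) (pow_le_one₀ hs.1.le hs.2)).trans h2
  · exact intervalIntegrable_const
  · refine Eventually.of_forall fun s _ y _ => ?_
    have h1 := (hu.differentiable one_ne_zero (y * s)).hasDerivAt
    have h2 : HasDerivAt (fun y => y * s) s y := by simpa using (hasDerivAt_id y).mul_const s
    exact ((h1.comp y h2).const_mul (s ^ j)).congr_deriv (by ring)

lemma contDiff_avg (n : ℕ) : ∀ (j : ℕ) {u : ℝ → ℝ}, ContDiff ℝ n u → ContDiff ℝ n (avg j u) := by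
  induction n with
  | zero => exact fun j u hu => contDiff_zero.2 (cont_avg j hu.continuous)
  | succ n ih =>
    intro j u hu
    have hu1 : ContDiff ℝ 1 u := hu.of_le (by exact_mod_cast Nat.le_add_left 1 n)
    push_cast at hu ⊢
    rw [contDiff_succ_iff_deriv] at hu ⊢
    refine ⟨fun x => (avg_hasDerivAt j hu1 x).differentiableAt, by simp, ?_⟩
    rw [funext fun x => (avg_hasDerivAt j hu1 x).deriv]
    exact ih (j + 1) hu.2.2

lemma avg_mom (j : ℕ) (u : ℝ → ℝ) (x : ℝ) : x ^ (j + 1) * avg j u x = mom u j x := by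
  have e := intervalIntegral.smul_integral_comp_mul_left (a := 0) (b := 1) (fun t => t ^ j * u t) x
  simp only [mul_zero, mul_one, smul_eq_mul] at e
  rw [mom, ← e, avg, pow_succ', mul_assoc, ← intervalIntegral.integral_const_mul]
  congr 2; ext s; ring

/-- The averages gain one derivative after multiplication by `x`. -/
lemma x_avg_hasDerivAt (j : ℕ) {u : ℝ → ℝ} (hu : Continuous u) (x : ℝ) :
    HasDerivAt (fun x => x * avg j u x) (u x - j * avg j u x) x := by
  rcases eq_or_ne x 0 with rfl | hx
  · have h0 : avg j u 0 = u 0 / (j + 1) := by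
      simp [avg, div_eq_inv_mul]
    have : u 0 - j * avg j u 0 = avg j u 0 := by
      rw [h0]; field_simp; ring
    rw [this, hasDerivAt_iff_tendsto_slope]
    refine ((cont_avg j hu).tendsto 0).mono_left nhdsWithin_le_nhds |>.congr' ?_
    filter_upwards [self_mem_nhdsWithin] with y hy
    have hy : y ≠ 0 := hy
    simp [slope_def_field, hy]
  · have h1 := (mom_hasDerivAt hu j x).div ((hasDerivAt_id x).pow j) (by simp [hx])
    have e : ∀ᶠ y in 𝓝 x, y * avg j u y = (mom u j / (id ^ j : ℝ → ℝ)) y := by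
      filter_upwards [isOpen_ne.mem_nhds hx] with y hy
      have hy : y ≠ 0 := hy
      simp only [Pi.div_apply, Pi.pow_apply, id]
      rw [← avg_mom, pow_succ]; field_simp
    refine (h1.congr_of_eventuallyEq e).congr_deriv ?_
    simp only [Pi.pow_apply, id]
    rw [← avg_mom]
    rcases j with _ | j
    · simp
    · simp only [Nat.add_sub_cancel]
      field_simp
      ring

lemma contDiff_x_avg (n j : ℕ) {u : ℝ → ℝ} (hu : ContDiff ℝ n u) :
    ContDiff ℝ (n + 1) (fun x => x * avg j u x) := by
  rw [contDiff_succ_iff_deriv]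
  have hd := x_avg_hasDerivAt j hu.continuous
  refine ⟨fun x => (hd x).differentiableAt, by simp, ?_⟩
  rw [funext fun x => (hd x).deriv]
  exact hu.sub (contDiff_const.mul (contDiff_avg n j hu))

lemma Rad_eq_avg {γ κ : ℝ} {h : ℝ → ℝ} (hc : Continuous h) (x : ℝ) :
    Rad γ κ h x = 1 + κ * x ^ 2 / 12 + x ^ 3 * (-(1 + γ) / 12 * (x * avg 1 h x)
      + (1 / 3 + (1 + γ) / 3) * (x * avg 2 h x) + (-1 - (1 + γ) / 2) * (x * avg 3 h x)
      + (1 + (1 + γ) / 3) * (x * avg 4 h x) + (-1 / 3 - (1 + γ) / 12) * (x * avg 5 h x)) := by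
  have I : ∀ j : ℕ, IntervalIntegrable (fun s => s ^ j * h (x * s)) MeasureTheory.volume 0 1 :=
    fun j => Continuous.intervalIntegrable (by fun_prop) _ _
  have J := fun (a : ℝ) (j : ℕ) => (I j).const_mul a
  have e3 : (fun s => ker γ s * h (x * s)) =
      fun s => (-(1 + γ) / 12) * (s ^ 1 * h (x * s))
        + (1 / 3 + (1 + γ) / 3) * (s ^ 2 * h (x * s)) + (-1 - (1 + γ) / 2) * (s ^ 3 * h (x * s))
        + (1 + (1 + γ) / 3) * (s ^ 4 * h (x * s))
        + (-1 / 3 - (1 + γ) / 12) * (s ^ 5 * h (x * s)) := by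
    ext t; simp only [ker]; ring
  rw [Rad, e3,
    intervalIntegral.integral_add ((((J _ 1).add (J _ 2)).add (J _ 3)).add (J _ 4)) (J _ 5),
    intervalIntegral.integral_add (((J _ 1).add (J _ 2)).add (J _ 3)) (J _ 4),
    intervalIntegral.integral_add ((J _ 1).add (J _ 2)) (J _ 3),
    intervalIntegral.integral_add (J _ 1) (J _ 2)]
  simp only [intervalIntegral.integral_const_mul, avg]
  ring

lemma contDiff_Rad {γ κ : ℝ} (n : ℕ) {h : ℝ → ℝ} (hh : ContDiff ℝ n h) :
    ContDiff ℝ (n + 1) (Rad γ κ h) := by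
  rw [funext fun x => Rad_eq_avg (γ := γ) (κ := κ) hh.continuous x]
  have A := fun j => contDiff_x_avg n j hh
  have C : ∀ a : ℝ, ContDiff ℝ (n + 1) fun _ : ℝ => a := fun a => contDiff_const
  have X : ∀ m : ℕ, ContDiff ℝ (n + 1) fun x : ℝ => x ^ m := fun m => contDiff_id.pow m
  exact (((C 1).add (((C κ).mul (X 2)).div_const 12))).add ((X 3).mul
    ((((((C _).mul (A 1)).add ((C _).mul (A 2))).add ((C _).mul (A 3))).add
      ((C _).mul (A 4))).add ((C _).mul (A 5))))

/-- Bootstrap: `h = √(Rad h)` and `Rad h` has one more derivative than `h`. -/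
lemma contDiff_of_Rad {γ κ : ℝ} {h : ℝ → ℝ} (hc : Continuous h)
    (hh : ∀ x, 0 < h x ∧ h x ^ 2 = Rad γ κ h x) : ContDiff ℝ (⊤ : ℕ∞) h := by
  rw [contDiff_infty]
  intro n
  induction n with
  | zero => exact contDiff_zero.2 hc
  | succ n ih =>
    have e : h = fun x => √(Rad γ κ h x) := by
      ext x
      rw [← (hh x).2, Real.sqrt_sq (hh x).1.le]
    rw [e]
    push_cast
    refine (contDiff_Rad n ih).sqrt fun x => ?_
    rw [← (hh x).2]
    exact (pow_pos (hh x).1 2).ne'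

/-! ### The similarity profile -/

namespace Prof
variable {γ κ : ℝ} {S : Prof γ κ}

/-- Reflection turns `W1⁽⁴⁾ = W5 = Q/g` into the fourth derivative of `f f' = -β² W1(-y)`. -/
lemma iteratedDeriv_four_comp_neg (hS : ∀ R, S.Good R) {b y : ℝ} (hy : y < 0) {F : ℝ → ℝ}
    (hF : ∀ z, z < 0 → F z = b * S.W1 (-z)) :
    iteratedDeriv 4 F y = b * (S.Q (-y) / S.g (-y)) := by
  have step : ∀ {U V : ℝ → ℝ} {b : ℝ} {F : ℝ → ℝ}, (∀ z, 0 < z → HasDerivAt U (V z) z) →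
      (∀ z, z < 0 → F z = b * U (-z)) → ∀ z, z < 0 → deriv F z = -b * V (-z) := by
    intro U V b F hU hF z hz
    have h1 : HasDerivAt (fun z => b * U (-z)) (-b * V (-z)) z := by
      have := ((hU (-z) (by linarith)).comp z (hasDerivAt_neg z)).const_mul b
      exact this.congr_deriv (by ring)
    refine (h1.congr_of_eventuallyEq ?_).deriv
    filter_upwards [Iio_mem_nhds hz] with w hw using hF w hw
  have s1 := step (fun z _ => S.d_W1 z) hF
  have s2 := step (fun z _ => S.d_W2 z) s1
  have s3 := step (fun z _ => S.d_W3 z) s2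
  have s4 := step (fun z hz => (hS (z + 1)).d_W4 hz (by linarith)) s3 y hy
  simp only [iteratedDeriv_succ, iteratedDeriv_zero]
  rw [s4]; ring

end Prof

end NDE

/-- For every `α ∈ (0, 1/4)`, with `β = (1+α)/5`, there exist an odd `C^∞` function
`f : ℝ → ℝ` and a constant `C₀ > 0` such that `-(f·f')⁽⁴⁾ - β·y·f' + α·f = 0` for all
`y < 0`, and `f(y)·|y|^{-α/β} → C₀` as `y → -∞`. -/
theorem exists_gradient_blowup_profile_NDE14 (α : ℝ) (hα0 : 0 < α) (hα1 : α < 1/4) :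
    ∃ (f : ℝ → ℝ) (C₀ : ℝ),
      ContDiff ℝ (⊤ : ℕ∞) f ∧
      (∀ y : ℝ, f (-y) = -f y) ∧
      0 < C₀ ∧
      (∀ y : ℝ, y < 0 →
        -(iteratedDeriv 4 (fun s => f s * deriv f s) y)
          - ((1 + α)/5) * y * deriv f y + α * f y = 0) ∧
      Tendsto (fun y : ℝ => f y * |y| ^ (-(α / ((1 + α)/5)))) atBot (nhds C₀) := by
  set β : ℝ := (1 + α) / 5 with hβ
  set γ : ℝ := α / β with hγ
  have hβ0 : 0 < β := by rw [hβ]; linarith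
  have hγ0 : 0 < γ := div_pos hα0 hβ0
  have hγ1 : γ < 1 := by rw [hγ, div_lt_one hβ0, hβ]; linarith
  have hα : α = β * γ := by rw [hγ]; field_simp
  obtain ⟨K, S, hK, hA, hS, hev⟩ := NDE.exists_critical hγ0 hγ1
  obtain ⟨l, hl, hlim⟩ := NDE.Prof.g_tendsto hγ0 hγ1 (by linarith) hS hA
  have hall : ∀ x, 0 < S.h x ∧ S.h x ^ 2 = NDE.Rad γ (-K) S.h x := fun x => by
    rcases le_total 0 x with hx | hx
    · exact hS x x hx le_rfl
    · have := hS (-x) (-x) (by linarith) le_rfl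
      rwa [hev, NDE.rad_neg hev] at this
  have hsm := NDE.contDiff_of_Rad S.cont hall
  -- `f` is `β g(-y)` for `y < 0`, extended as an odd function
  have hf : ∀ y : ℝ, -(β * y * S.h y) = β * S.g (-y) := fun y => by
    rw [NDE.Prof.g, hev]; ring
  have hdf : ∀ y : ℝ, y < 0 → HasDerivAt (fun y => -(β * y * S.h y))
      (-β * (S.W1 (-y) / S.g (-y))) y := fun y hy => by
    simp only [hf]
    have := (((hS (-y + 1)).d_g (x := -y) (by linarith) (by linarith)).comp y
      (hasDerivAt_neg y)).const_mul β
    exact this.congr_deriv (by ring)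
  have hgp : ∀ y : ℝ, y < 0 → 0 < S.g (-y) := fun y hy =>
    (hS (-y)).g_pos (by linarith) le_rfl
  refine ⟨fun y => -(β * y * S.h y), β * l, ?_, ?_, mul_pos hβ0 hl, ?_, ?_⟩
  · exact ((contDiff_const.mul contDiff_id).mul hsm).neg
  · intro y
    beta_reduce
    rw [hev]; ring
  · intro y hy
    rw [NDE.Prof.iteratedDeriv_four_comp_neg hS (b := -β ^ 2) hy (fun z hz => by
      rw [(hdf z hz).deriv]
      beta_reduce
      rw [hf]
      have := (hgp z hz).ne'
      field_simp), (hdf y hy).deriv]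
    beta_reduce
    rw [hf, hα, NDE.Prof.Q]
    have hg := (hgp y hy).ne'
    have hsq := (hS (-y)).g_sq (x := -y) (by linarith) le_rfl
    field_simp
    linear_combination β ^ 2 * γ * hsq
  · refine ((hlim.comp tendsto_neg_atBot_atTop).const_mul β).congr' ?_
    filter_upwards [eventually_lt_atBot 0] with y hy
    rw [hf, abs_of_neg hy, Function.comp, mul_assoc]
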